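/- Let F be an algebraically closed field, let q ∈ F be a primitive e-th root of unity for some integer e ≥ 2 (so q ≠ 1), let Q_1 ∈ F, and let n ≥ 1. The Ariki–Koike algebra H_{n,1}(q, Q_1), i.e. the Iwahori–Hecke algebra of type A_{n−1}, is of finite representation type if and only if n < 2e. -/

import Mathlib

/-!
Write `H_n` for the Hecke algebra of `S_n`. Modules over `H_n` are handled as vector spaces `V` with
a family of operators `T : ℕ → Module.End F V` of which only `T 1, …, T (n-1)` matter
(`finiteRepType_iff`), and the problem is to count indecomposable families of operators.

**The case `n ≥ 2e`** (`not_FT`). Inside `H_n` there are two commuting square-zero elements `X`, `Y`: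
the unnormalized symmetrizers of the parabolic subalgebras generated by `T 1, …, T (e-1)` and by
`T (e+1), …, T (2e-1)`. They square to zero because the quantum integer `[e]` vanishes. Say that
`lam` occurs in `M` if there are a vector `v` and a linear form `φ` with `Y v = lam X v`,
`φ Y = lam φ X` and `φ (X v) ≠ 0`. If `lam` occurs in `M` then it occurs in an indecomposable
summand; only finitely many `lam` occur in a given finite dimensional `M`; and every `lam` occurs in
the left ideal of all `b` with `b Y = lam b X`, because the canonical symmetrizing trace of `H_n`
does not vanish on `X Y` (`exists_Lam`). As `F` is infinite, there are infinitely many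
indecomposables.

**The case `n < 2e`** (`FT_of_lt`), by induction on `n`. By Higman's criterion a representation of
`H_n` in which some relative trace from `H_{n-1}` is invertible is a summand of a coinduced one, and
the induction hypothesis leaves finitely many indecomposables of this kind (`FT_step`). By Fitting's
lemma, in every other indecomposable the relative traces of all polynomials in the last Jucys-Murphy
element are nilpotent; such representations are called bad. Evaluating these traces on a joint
eigenvector of the Jucys-Murphy elements shows that the multiset of eigenvalues is stable under
multiplication by `q`, which for `n < 2e` forces `n = e` and each power of `q` to occur exactly once
(`wt_shape`). Every nonzero bad representation of `H_e` then contains a vector of some type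
`1 ≤ c < e`, that is, one on which `T 1, …, T (c-1)` act by `q` and `T (c+1), …, T (e-1)` by `-1`
(`exists_type`). The spaces of such vectors are the images of explicit idempotents, and form a
representation of the zigzag algebra of a line with `e - 1` nodes (`zig_rep`). A bad representation
is determined by its zigzag datum up to isomorphism, and indecomposability is preserved
(`iso_of_ziso`, `zindec_of_indec`), because at most two double cosets contribute to the corner
algebras (`corner`). Finally, an indecomposable zigzag datum either is projective or reduces to
representations of quivers of type `A`; in both cases it is determined by which of its components,
arrows and loops vanish (`Zig.iso`), which leaves finitely many possibilities.
-/

open scoped TensorProduct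

/-- A module is indecomposable if it is nonzero and is not the direct sum of two
nonzero submodules. -/
def IsIndecomposableModule (A : Type*) (N : Type*) [Ring A] [AddCommGroup N]
    [Module A N] : Prop :=
  Nontrivial N ∧ ∀ P Q : Submodule A N, IsCompl P Q → P = ⊥ ∨ Q = ⊥

/-- A ring `A` is of finite representation type if there are only finitely many
isomorphism classes of finitely generated (equivalently, for a finite dimensional
algebra, finite dimensional) indecomposable right `A`-modules; right `A`-modules are
realized as left modules over `Aᵐᵒᵖ`. -/
def FiniteRepType (A : Type) [Ring A] : Prop :=
  ∃ (k : ℕ) (M : Fin k → ModuleCat.{0} Aᵐᵒᵖ),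
    ∀ (N : Type) [AddCommGroup N] [Module Aᵐᵒᵖ N],
      Module.Finite Aᵐᵒᵖ N → IsIndecomposableModule Aᵐᵒᵖ N →
        ∃ i, Nonempty (N ≃ₗ[Aᵐᵒᵖ] M i)

/-- The defining relations of the Ariki-Koike algebra `H_{n,r}(q, Q_1, ..., Q_r)`,
as a relation on the free algebra on generators `T_0, ..., T_{n-1}`. -/
inductive AKRel (F : Type) [Field F] (n r : ℕ) (q : F) (Q : Fin r → F) :
    FreeAlgebra F (Fin n) → FreeAlgebra F (Fin n) → Prop
  | cyclotomic (h : 0 < n) :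
      AKRel F n r q Q
        (((List.finRange r).map (fun j =>
          FreeAlgebra.ι F (⟨0, h⟩ : Fin n)
            - algebraMap F (FreeAlgebra F (Fin n)) (Q j))).prod) 0
  | braid01 (h : 1 < n) :
      AKRel F n r q Q
        (FreeAlgebra.ι F (⟨0, by omega⟩ : Fin n) * FreeAlgebra.ι F (⟨1, h⟩ : Fin n) *
          FreeAlgebra.ι F (⟨0, by omega⟩ : Fin n) * FreeAlgebra.ι F (⟨1, h⟩ : Fin n))
        (FreeAlgebra.ι F (⟨1, h⟩ : Fin n) * FreeAlgebra.ι F (⟨0, by omega⟩ : Fin n) *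
          FreeAlgebra.ι F (⟨1, h⟩ : Fin n) * FreeAlgebra.ι F (⟨0, by omega⟩ : Fin n))
  | quadratic (i : ℕ) (h1 : 1 ≤ i) (h2 : i < n) :
      AKRel F n r q Q
        ((FreeAlgebra.ι F (⟨i, h2⟩ : Fin n) + 1) *
          (FreeAlgebra.ι F (⟨i, h2⟩ : Fin n) - algebraMap F (FreeAlgebra F (Fin n)) q)) 0
  | braid (i : ℕ) (h1 : 1 ≤ i) (h2 : i + 1 < n) :
      AKRel F n r q Q
        (FreeAlgebra.ι F (⟨i, by omega⟩ : Fin n) * FreeAlgebra.ι F (⟨i + 1, h2⟩ : Fin n) *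
          FreeAlgebra.ι F (⟨i, by omega⟩ : Fin n))
        (FreeAlgebra.ι F (⟨i + 1, h2⟩ : Fin n) * FreeAlgebra.ι F (⟨i, by omega⟩ : Fin n) *
          FreeAlgebra.ι F (⟨i + 1, h2⟩ : Fin n))
  | comm (i j : ℕ) (hij : i + 2 ≤ j) (hj : j < n) :
      AKRel F n r q Q
        (FreeAlgebra.ι F (⟨i, by omega⟩ : Fin n) * FreeAlgebra.ι F (⟨j, hj⟩ : Fin n))
        (FreeAlgebra.ι F (⟨j, hj⟩ : Fin n) * FreeAlgebra.ι F (⟨i, by omega⟩ : Fin n))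

/-- The Ariki-Koike algebra `H_{n,r}(q, Q_1, ..., Q_r)`: the quotient of the free
`F`-algebra on `T_0, ..., T_{n-1}` by the two-sided ideal generated by the defining
relations. -/
abbrev ArikiKoike (F : Type) [Field F] (n r : ℕ) (q : F) (Q : Fin r → F) : Type :=
  RingQuot (AKRel F n r q Q)

/-- The extension of the nondecreasing rearrangement `f'_1 ≤ ... ≤ f'_r` (0-indexed)
by `f'_{r+i} = e + f'_i`. -/
noncomputable def extSeq (e r : ℕ) (f' : Fin r → ℕ) (i : ℕ) : ℕ :=
  if hr : 0 < r then e * (i / r) + f' ⟨i % r, Nat.mod_lt i hr⟩ else 0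

/-- `f^{+1}(Q_1, ..., Q_r) = min { f'_{i+1} - f'_i | 1 ≤ i ≤ r }` (0-indexed here). -/
noncomputable def fPlusOne (e r : ℕ) (f' : Fin r → ℕ) : ℕ :=
  sInf {d | ∃ i < r, d = extSeq e r f' (i + 1) - extSeq e r f' i}

/-- `f^{+2}(Q_1, ..., Q_r) = min { f'_{i+2} - f'_i | 1 ≤ i ≤ r }` (0-indexed here). -/
noncomputable def fPlusTwo (e r : ℕ) (f' : Fin r → ℕ) : ℕ :=
  sInf {d | ∃ i < r, d = extSeq e r f' (i + 2) - extSeq e r f' i}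

/-- `g(Q_1, ..., Q_r) = min { g'_i + g'_j | 1 ≤ i ≠ j ≤ r }` where
`g'_i = f'_{i+1} - f'_i` (0-indexed here). -/
noncomputable def gMin (e r : ℕ) (f' : Fin r → ℕ) : ℕ :=
  sInf {d | ∃ i < r, ∃ j < r, i ≠ j ∧
    d = (extSeq e r f' (i + 1) - extSeq e r f' i)
      + (extSeq e r f' (j + 1) - extSeq e r f' j)}

namespace HeckeA

/-! ### Families of operators, indecomposability, Krull-Schmidt -/

/-- The relations of the Iwahori-Hecke algebra of `S_n` for the elements `T 1, …, T (n-1)` of an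
algebra; the other members of the family `T` are arbitrary. -/
structure HeckeRel {F E : Type} [Field F] [Ring E] [Algebra F E] (q : F) (n : ℕ) (T : ℕ → E) :
    Prop where
  quad : ∀ i, 1 ≤ i → i < n → T i * T i = (q - 1) • T i + q • 1
  braid : ∀ i, 1 ≤ i → i + 1 < n → T i * T (i + 1) * T i = T (i + 1) * T i * T (i + 1)
  comm : ∀ i j, 1 ≤ i → i + 2 ≤ j → j < n → T i * T j = T j * T i

theorem HeckeRel.mono {F E : Type} [Field F] [Ring E] [Algebra F E] {q : F} {n m : ℕ} {T : ℕ → E}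
    (h : HeckeRel q n T) (hm : m ≤ n) : HeckeRel q m T :=
  ⟨fun i h1 h2 => h.quad i h1 (by omega), fun i h1 h2 => h.braid i h1 (by omega),
    fun i j h1 h2 h3 => h.comm i j h1 h2 (by omega)⟩

section reps
variable {F : Type} [Field F] {V W U : Type} [AddCommGroup V] [Module F V]
  [AddCommGroup W] [Module F W] [AddCommGroup U] [Module F U]

/-- The subspace `S` is stable under `T 1, …, T (n-1)`. -/
def Inv (n : ℕ) (T : ℕ → Module.End F V) (S : Submodule F V) : Prop :=
  ∀ j, 1 ≤ j → j < n → ∀ v ∈ S, T j v ∈ S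

/-- `V` is indecomposable under the operators `T 1, …, T (n-1)`. -/
def Indec (n : ℕ) (T : ℕ → Module.End F V) : Prop :=
  Nontrivial V ∧ ∀ P Q : Submodule F V, Inv n T P → Inv n T Q → IsCompl P Q → P = ⊥ ∨ Q = ⊥

/-- The map `f` intertwines `T j` and `T' j` for `1 ≤ j < n`. -/
def Tw (n : ℕ) (T : ℕ → Module.End F V) (T' : ℕ → Module.End F W) (f : V →ₗ[F] W) : Prop :=
  ∀ j, 1 ≤ j → j < n → ∀ v, f (T j v) = T' j (f v)

theorem Tw.comp {n : ℕ} {T : ℕ → Module.End F V} {T' : ℕ → Module.End F W}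
    {T'' : ℕ → Module.End F U} {f : V →ₗ[F] W} {g : W →ₗ[F] U}
    (hg : Tw n T' T'' g) (hf : Tw n T T' f) : Tw n T T'' (g ∘ₗ f) := by
  intro j h1 h2 v
  simp [hf j h1 h2, hg j h1 h2]

theorem Tw.id {n : ℕ} {T : ℕ → Module.End F V} : Tw n T T LinearMap.id := fun _ _ _ _ => rfl

theorem Tw.mono {n m : ℕ} {T : ℕ → Module.End F V} {T' : ℕ → Module.End F W} {f : V →ₗ[F] W}
    (hf : Tw n T T' f) (h : m ≤ n) : Tw m T T' f := fun j h1 h2 => hf j h1 (by omega)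

theorem Tw.ker {n : ℕ} {T : ℕ → Module.End F V} {T' : ℕ → Module.End F W} {f : V →ₗ[F] W}
    (hf : Tw n T T' f) : Inv n T (LinearMap.ker f) := by
  intro j h1 h2 v hv
  rw [LinearMap.mem_ker] at *
  rw [hf j h1 h2, hv, map_zero]

theorem Tw.range {n : ℕ} {T : ℕ → Module.End F V} {T' : ℕ → Module.End F W} {f : V →ₗ[F] W}
    (hf : Tw n T T' f) : Inv n T' (LinearMap.range f) := by
  rintro j h1 h2 _ ⟨v, rfl⟩
  exact ⟨T j v, hf j h1 h2 v⟩

theorem Tw.pow {n : ℕ} {T : ℕ → Module.End F V} {f : Module.End F V}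
    (hf : Tw n T T f) (k : ℕ) : Tw n T T (f ^ k) := by
  induction k with
  | zero => exact Tw.id
  | succ k ih => rw [pow_succ]; exact ih.comp hf

theorem Tw.symm {n : ℕ} {T : ℕ → Module.End F V} {T' : ℕ → Module.End F W} {f : V ≃ₗ[F] W}
    (hf : Tw n T T' f.toLinearMap) : Tw n T' T f.symm.toLinearMap := by
  intro j h1 h2 v
  apply f.injective
  have := hf j h1 h2 (f.symm v)
  simp only [LinearEquiv.coe_coe] at *
  rw [this]; simp

theorem Tw.iff_commute {n : ℕ} {T : ℕ → Module.End F V} {f : Module.End F V} :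
    Tw n T T f ↔ ∀ j, 1 ≤ j → j < n → f * T j = T j * f :=
  ⟨fun h j h1 h2 => LinearMap.ext fun v => h j h1 h2 v,
    fun h j h1 h2 v => LinearMap.congr_fun (h j h1 h2) v⟩

theorem Tw.hecke {n : ℕ} {q : F} {T : ℕ → Module.End F V} {T' : ℕ → Module.End F W}
    {f : V →ₗ[F] W} (hf : Tw n T T' f) (hi : Function.Injective f) (h : HeckeRel q n T') :
    HeckeRel q n T := by
  refine ⟨fun i h1 h2 => ?_, fun i h1 h2 => ?_, fun i j h1 h2 h3 => ?_⟩
  · ext v; apply hi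
    have := LinearMap.congr_fun (h.quad i h1 h2) (f v)
    simpa [hf i h1 h2] using this
  · ext v; apply hi
    have := LinearMap.congr_fun (h.braid i h1 h2) (f v)
    simpa [hf i h1 (by omega), hf (i+1) (by omega) h2] using this
  · ext v; apply hi
    have := LinearMap.congr_fun (h.comm i j h1 h2 h3) (f v)
    simpa [hf i h1 (by omega), hf j (by omega) h3] using this

theorem Indec.transport {n : ℕ} {T : ℕ → Module.End F V} {T' : ℕ → Module.End F W}
    {f : V ≃ₗ[F] W} (hf : Tw n T T' f.toLinearMap) (h : Indec n T) : Indec n T' := by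
  obtain ⟨h1, h2⟩ := h
  refine ⟨f.symm.toEquiv.nontrivial, fun P Q hP hQ hPQ => ?_⟩
  have key : ∀ R : Submodule F W, Inv n T' R → Inv n T (R.comap f.toLinearMap) := by
    intro R hR j hj hj' v hv
    rw [Submodule.mem_comap] at *
    rw [hf j hj hj']; exact hR j hj hj' _ hv
  have hz : ∀ R : Submodule F W, R.comap f.toLinearMap = ⊥ → R = ⊥ := by
    intro R hR
    rw [eq_bot_iff] at *
    intro w hw
    have := hR (show f.symm w ∈ _ by simpa using hw)
    simpa using this
  have hc : IsCompl (P.comap f.toLinearMap) (Q.comap f.toLinearMap) := by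
    have := hPQ.map (Submodule.orderIsoMapComap f.symm)
    simpa [Submodule.orderIsoMapComap, Submodule.map_equiv_eq_comap_symm] using this
  exact (h2 _ _ (key P hP) (key Q hQ) hc).imp (hz P) (hz Q)

/-- Fitting's lemma. -/
theorem fitting [FiniteDimensional F V] {n : ℕ} {T : ℕ → Module.End F V} (hI : Indec n T)
    {f : Module.End F V} (hf : Tw n T T f) : IsNilpotent f ∨ IsUnit f := by
  obtain ⟨N, hN⟩ := Filter.eventually_atTop.mp f.eventually_isCompl_ker_pow_range_pow
  have h := hN (N + 1) (by omega)
  rcases hI.2 _ _ (hf.pow (N + 1)).ker (hf.pow (N + 1)).range h with h | h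
  · right
    have : IsUnit (f ^ (N + 1)) := by
      rw [LinearMap.isUnit_iff_ker_eq_bot]; exact h
    exact (isUnit_pow_iff (by omega)).mp this
  · left
    exact ⟨N + 1, LinearMap.range_eq_bot.mp h⟩

theorem Tw.unit_inv {n : ℕ} {T : ℕ → Module.End F V} {u : (Module.End F V)ˣ}
    (hu : Tw n T T u.val) : Tw n T T (u⁻¹).val := by
  rw [Tw.iff_commute] at *
  intro j h1 h2
  have : Commute u.val (T j) := hu j h1 h2
  exact (this.units_inv_left).eq

/-- The endomorphism algebra of an indecomposable representation is local. -/
theorem unit_of_sum [FiniteDimensional F V] {n : ℕ} {T : ℕ → Module.End F V} (hI : Indec n T)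
    {ι : Type} (s : Finset ι) (g : ι → Module.End F V) (hg : ∀ i, Tw n T T (g i))
    (hu : IsUnit (∑ i ∈ s, g i)) : ∃ i ∈ s, IsUnit (g i) := by
  classical
  have hs : ∀ s : Finset ι, Tw n T T (∑ i ∈ s, g i) := by
    intro s
    rw [Tw.iff_commute]
    intro j h1 h2
    rw [Finset.sum_mul, Finset.mul_sum]
    exact Finset.sum_congr rfl fun i _ => Tw.iff_commute.mp (hg i) j h1 h2
  induction s using Finset.induction_on with
  | empty =>
    have := hI.1
    rw [Finset.sum_empty] at hu
    exact absurd hu not_isUnit_zero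
  | insert a s ha ih =>
    rw [Finset.sum_insert ha] at hu
    by_cases hb : IsUnit (∑ i ∈ s, g i)
    · obtain ⟨i, hi, hi'⟩ := ih hb
      exact ⟨i, Finset.mem_insert_of_mem hi, hi'⟩
    · refine ⟨a, Finset.mem_insert_self _ _, ?_⟩
      obtain ⟨u, hu⟩ := hu
      have htw : Tw n T T u.val := by
        rw [hu, ← Finset.sum_insert ha]; exact hs _
      have h1 : u⁻¹.val * g a + u⁻¹.val * (∑ i ∈ s, g i) = 1 := by
        rw [← mul_add, ← hu]; simp
      rcases fitting hI (htw.unit_inv.comp (hs s)) with h | h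
      · have h2 : u⁻¹.val * g a = 1 - u⁻¹.val * (∑ i ∈ s, g i) := by
          rw [← h1]; abel
        have h3 : IsUnit (u⁻¹.val * g a) := by
          rw [h2]; exact IsNilpotent.isUnit_one_sub h
        simpa using h3
      · exact absurd ((Units.isUnit_units_mul _ _).mp h) hb

/-- If `b ∘ a` is invertible with `M` nonzero and `Z` indecomposable, then `b : Z → M` is an
isomorphism. -/
theorem iso_of_unit {n : ℕ} [Nontrivial V] {T : ℕ → Module.End F V} {T' : ℕ → Module.End F W}
    (hI : Indec n T') {a : V →ₗ[F] W} {b : W →ₗ[F] V} (ha : Tw n T T' a) (hb : Tw n T' T b)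
    (hu : IsUnit (b ∘ₗ a : Module.End F V)) : ∃ f : V ≃ₗ[F] W, Tw n T T' f.toLinearMap := by
  obtain ⟨u, hu⟩ := hu
  have hbu : ∀ v, b (a v) = u.val v := fun v => by rw [hu]; rfl
  have hui : ∀ v, u⁻¹.val (u.val v) = v := fun v => by
    rw [← Module.End.mul_apply]; simp
  have hui' : ∀ v, u.val (u⁻¹.val v) = v := fun v => by
    rw [← Module.End.mul_apply]; simp
  have hc : IsCompl (LinearMap.range a) (LinearMap.ker b) := by
    constructor
    · rw [Submodule.disjoint_def]
      rintro _ ⟨v, rfl⟩ h2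
      rw [LinearMap.mem_ker, hbu] at h2
      have := hui v
      rw [h2, map_zero] at this
      rw [← this, map_zero]
    · rw [codisjoint_iff, eq_top_iff]
      intro w _
      rw [Submodule.mem_sup]
      refine ⟨a (u⁻¹.val (b w)), ⟨_, rfl⟩, w - a (u⁻¹.val (b w)), ?_, by abel⟩
      rw [LinearMap.mem_ker, map_sub, hbu, hui', sub_self]
  rcases hI.2 _ _ ha.range hb.ker hc with h | h
  · exfalso
    obtain ⟨v, hv⟩ := exists_ne (0 : V)
    have : a v = 0 := LinearMap.congr_fun (LinearMap.range_eq_bot.mp h) v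
    have h2 := hui v
    rw [← hbu, this, map_zero, map_zero] at h2
    exact hv h2.symm
  · have hinj : Function.Injective b := LinearMap.ker_eq_bot.mp h
    have hsurj : Function.Surjective b := fun v => ⟨a (u⁻¹.val v), by rw [hbu, hui']⟩
    let g : W ≃ₗ[F] V := LinearEquiv.ofBijective b ⟨hinj, hsurj⟩
    exact ⟨g.symm, Tw.symm (f := g) hb⟩

end reps

/-- A vector space with a sequence of operators. -/
structure FRep (F : Type) [Field F] where
  V : Type
  [acg : AddCommGroup V]
  [mod : Module F V]
  T : ℕ → Module.End F V

attribute [instance] FRep.acg FRep.mod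

variable {F : Type} [Field F]

/-- Finite dimensional, satisfying the Hecke relations, indecomposable. -/
structure FRep.Good (q : F) (n : ℕ) (X : FRep F) : Prop where
  fd : FiniteDimensional F X.V
  rel : HeckeRel q n X.T
  ind : Indec n X.T

/-- Isomorphism of representations of the first `n - 1` operators. -/
def FRep.Iso (n : ℕ) (X Y : FRep F) : Prop :=
  ∃ f : X.V ≃ₗ[F] Y.V, Tw n X.T Y.T f.toLinearMap

theorem FRep.Iso.symm {n : ℕ} {X Y : FRep F} (h : X.Iso n Y) : Y.Iso n X := by
  obtain ⟨f, hf⟩ := h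
  exact ⟨f.symm, hf.symm⟩

theorem FRep.Iso.trans {n : ℕ} {X Y Z : FRep F} (h : X.Iso n Y) (h' : Y.Iso n Z) : X.Iso n Z := by
  obtain ⟨f, hf⟩ := h
  obtain ⟨g, hg⟩ := h'
  exact ⟨f.trans g, hg.comp hf⟩

/-- The indecomposable finite dimensional representations with property `P` fall into finitely
many isomorphism classes. -/
def FTP (q : F) (n : ℕ) (P : FRep F → Prop) : Prop :=
  ∃ (κ : Type) (_ : Finite κ) (X : κ → FRep F), ∀ M : FRep F, M.Good q n → P M → ∃ i, M.Iso n (X i)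

/-- Finite representation type of the Hecke algebra of `S_n`, in terms of operators. -/
def FT (q : F) (n : ℕ) : Prop := FTP q n fun _ => True

/-- A finite invariant of isomorphism classes gives a finite list of representatives. -/
theorem FTP.of_invariant {q : F} {n : ℕ} {P : FRep F → Prop} {κ : Type} [Finite κ]
    (inv : FRep F → κ → Prop) (hex : ∀ M : FRep F, M.Good q n → P M → ∃ k, inv M k)
    (h : ∀ M N : FRep F, M.Good q n → P M → N.Good q n → P N → ∀ k, inv M k → inv N k →
      M.Iso n N) : FTP q n P := by
  classical
  refine ⟨{k : κ // ∃ M : FRep F, M.Good q n ∧ P M ∧ inv M k}, inferInstance,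
    fun k => k.2.choose, fun M hM hP => ?_⟩
  obtain ⟨k, hk⟩ := hex M hM hP
  let k' : {k : κ // ∃ M : FRep F, M.Good q n ∧ P M ∧ inv M k} := ⟨k, M, hM, hP, hk⟩
  refine ⟨k', ?_⟩
  have := k'.2.choose_spec
  exact h _ _ hM hP this.1 this.2.1 k hk this.2.2

theorem FTP.of_or {q : F} {n : ℕ} {P P₁ P₂ : FRep F → Prop} (h₁ : FTP q n P₁) (h₂ : FTP q n P₂)
    (h : ∀ M : FRep F, M.Good q n → P M → P₁ M ∨ P₂ M) : FTP q n P := by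
  obtain ⟨κ, _, X, hX⟩ := h₁
  obtain ⟨κ', _, X', hX'⟩ := h₂
  refine ⟨κ ⊕ κ', inferInstance, Sum.elim X X', fun M hM hP => ?_⟩
  rcases h M hM hP with h | h
  · obtain ⟨i, hi⟩ := hX M hM h
    exact ⟨Sum.inl i, hi⟩
  · obtain ⟨i, hi⟩ := hX' M hM h
    exact ⟨Sum.inr i, hi⟩

/-- An indecomposable direct summand of a representation, given by inclusion and projection. -/
structure Piece (n : ℕ) (M : FRep F) where
  Y : FRep F
  inc : Y.V →ₗ[F] M.V
  pr : M.V →ₗ[F] Y.V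
  tw_inc : Tw n Y.T M.T inc
  tw_pr : Tw n M.T Y.T pr
  pr_inc : pr ∘ₗ inc = LinearMap.id
  fd : FiniteDimensional F Y.V
  ind : Indec n Y.T

/-- The idempotent attached to a direct summand. -/
def Piece.e {n : ℕ} {M : FRep F} (D : Piece n M) : M.V →ₗ[F] M.V := D.inc ∘ₗ D.pr

theorem Piece.inc_inj {n : ℕ} {M : FRep F} (D : Piece n M) : Function.Injective D.inc :=
    fun x y h => by
  have := congrArg D.pr h
  simpa [← LinearMap.comp_apply, D.pr_inc] using this

theorem Piece.good {n : ℕ} {q : F} {M : FRep F} (D : Piece n M) (h : HeckeRel q n M.T) :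
    D.Y.Good q n :=
  ⟨D.fd, D.tw_inc.hecke D.inc_inj h, D.ind⟩

theorem exists_compl_sub {V : Type} [AddCommGroup V] [Module F V] {n : ℕ} {T : ℕ → Module.End F V}
    {P Q : Submodule F V} (h : IsCompl P Q) (hP : Inv n T P) (hQ : Inv n T Q) :
    ∃ T' : ℕ → Module.End F P, Tw n T' T P.subtype ∧ Tw n T T' (P.projectionOnto Q h) := by
  refine ⟨fun j => P.projectionOnto Q h ∘ₗ T j ∘ₗ P.subtype, ?_, ?_⟩
  · intro j h1 h2 v
    have := Submodule.projectionOnto_apply_left h ⟨T j v.1, hP j h1 h2 v.1 v.2⟩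
    simp only [LinearMap.comp_apply, Submodule.subtype_apply] at *
    rw [this]
  · intro j h1 h2 v
    obtain ⟨a, ha, b, hb, rfl⟩ := Submodule.mem_sup.mp (h.sup_eq_top ▸ Submodule.mem_top : v ∈ P ⊔ Q)
    have h3 := Submodule.projectionOnto_apply_left h ⟨a, ha⟩
    have h4 := (Submodule.projectionOnto_apply_eq_zero_iff h).mpr hb
    have h5 := (Submodule.projectionOnto_apply_eq_zero_iff h).mpr (hQ j h1 h2 b hb)
    simp only [LinearMap.comp_apply, Submodule.subtype_apply, map_add] at *
    rw [h3, h4, h5]; simp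

theorem proj_add_proj {V : Type} [AddCommGroup V] [Module F V] {P Q : Submodule F V}
    (h : IsCompl P Q) : P.subtype ∘ₗ P.projectionOnto Q h
      + Q.subtype ∘ₗ Q.projectionOnto P h.symm = LinearMap.id := by
  ext v
  obtain ⟨a, ha, b, hb, rfl⟩ := Submodule.mem_sup.mp (h.sup_eq_top ▸ Submodule.mem_top : v ∈ P ⊔ Q)
  have h3 := Submodule.projectionOnto_apply_left h ⟨a, ha⟩
  have h4 := (Submodule.projectionOnto_apply_eq_zero_iff h).mpr hb
  have h5 := Submodule.projectionOnto_apply_left h.symm ⟨b, hb⟩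
  have h6 := (Submodule.projectionOnto_apply_eq_zero_iff h.symm).mpr ha
  simp only [map_add, LinearMap.add_apply, LinearMap.comp_apply, LinearMap.id_apply,
    Submodule.subtype_apply] at *
  rw [h3, h4, h5, h6]; simp

theorem exists_split {n : ℕ} (M : FRep F) (hfd : FiniteDimensional F M.V) (ht : Nontrivial M.V)
    (hI : ¬ Indec n M.T) :
    ∃ (A B : FRep F) (iA : A.V →ₗ[F] M.V) (pA : M.V →ₗ[F] A.V) (iB : B.V →ₗ[F] M.V)
      (pB : M.V →ₗ[F] B.V), FiniteDimensional F A.V ∧ FiniteDimensional F B.V ∧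
      Module.finrank F A.V < Module.finrank F M.V ∧ Module.finrank F B.V < Module.finrank F M.V ∧
      Tw n A.T M.T iA ∧ Tw n M.T A.T pA ∧ Tw n B.T M.T iB ∧ Tw n M.T B.T pB ∧
      pA ∘ₗ iA = LinearMap.id ∧ pB ∘ₗ iB = LinearMap.id ∧ iA ∘ₗ pA + iB ∘ₗ pB = LinearMap.id := by
  have : ∃ P Q : Submodule F M.V, Inv n M.T P ∧ Inv n M.T Q ∧ IsCompl P Q ∧ P ≠ ⊥ ∧ Q ≠ ⊥ := by
    by_contra hcon
    push Not at hcon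
    exact hI ⟨ht, fun P Q hP hQ hPQ => by
      by_cases h : P = ⊥
      · exact Or.inl h
      · exact Or.inr (hcon P Q hP hQ hPQ h)⟩
  obtain ⟨P, Q, hP, hQ, hPQ, hP0, hQ0⟩ := this
  have hsum := Submodule.finrank_add_eq_of_isCompl hPQ
  have : Nontrivial P := Submodule.nontrivial_iff_ne_bot.mpr hP0
  have : Nontrivial Q := Submodule.nontrivial_iff_ne_bot.mpr hQ0
  have hP1 : 0 < Module.finrank F P := Module.finrank_pos
  have hQ1 : 0 < Module.finrank F Q := Module.finrank_pos
  obtain ⟨T1, h1, h2⟩ := exists_compl_sub hPQ hP hQ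
  obtain ⟨T2, h3, h4⟩ := exists_compl_sub hPQ.symm hQ hP
  exact ⟨⟨P, T1⟩, ⟨Q, T2⟩, P.subtype, P.projectionOnto Q hPQ, Q.subtype,
    Q.projectionOnto P hPQ.symm, inferInstanceAs (FiniteDimensional F P),
    inferInstanceAs (FiniteDimensional F Q), by dsimp only; omega, by dsimp only; omega,
    h1, h2, h3, h4, LinearMap.ext fun v => Submodule.projectionOnto_apply_left hPQ v,
    LinearMap.ext fun v => Submodule.projectionOnto_apply_left hPQ.symm v, proj_add_proj hPQ⟩

/-- A piece of a summand is a piece of the whole. -/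
def Piece.lift {n : ℕ} {M A : FRep F} (D : Piece n A) {i : A.V →ₗ[F] M.V} {p : M.V →ₗ[F] A.V}
    (hi : Tw n A.T M.T i) (hp : Tw n M.T A.T p) (h : p ∘ₗ i = LinearMap.id) : Piece n M where
  Y := D.Y
  inc := i ∘ₗ D.inc
  pr := D.pr ∘ₗ p
  tw_inc := hi.comp D.tw_inc
  tw_pr := D.tw_pr.comp hp
  pr_inc := by
    have h1 : ∀ v, p (i v) = v := fun v => LinearMap.congr_fun h v
    have h2 : ∀ v, D.pr (D.inc v) = v := fun v => LinearMap.congr_fun D.pr_inc v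
    ext v
    simp [h1, h2]
  fd := D.fd
  ind := D.ind

/-- Every finite dimensional representation is a finite direct sum of indecomposable ones. -/
theorem exists_decomp (n : ℕ) (M : FRep F) (hM : FiniteDimensional F M.V) :
    ∃ (ι : Type) (_ : Fintype ι) (D : ι → Piece n M),
      ∑ i, (D i).e = LinearMap.id := by
  induction hd : Module.finrank F M.V using Nat.strong_induction_on generalizing M with
  | _ d ih =>
  by_cases hI : Indec n M.T
  · exact ⟨Unit, inferInstance, fun _ => ⟨M, LinearMap.id, LinearMap.id, Tw.id, Tw.id, rfl, hM, hI⟩,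
      by simp [Piece.e]⟩
  by_cases ht : Nontrivial M.V
  swap
  · have := not_nontrivial_iff_subsingleton.mp ht
    exact ⟨Empty, inferInstance, fun i => i.elim, LinearMap.ext fun x => Subsingleton.elim _ _⟩
  obtain ⟨A, B, iA, pA, iB, pB, fA, fB, dA, dB, h1, h2, h3, h4, h5, h6, h7⟩ :=
    exists_split M hM ht hI
  obtain ⟨ι, _, D, hD⟩ := ih _ (hd ▸ dA) A fA rfl
  obtain ⟨ι', _, D', hD'⟩ := ih _ (hd ▸ dB) B fB rfl
  refine ⟨ι ⊕ ι', inferInstance, Sum.elim (fun i => (D i).lift h1 h2 h5)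
    (fun i => (D' i).lift h3 h4 h6), ?_⟩
  rw [Fintype.sum_sum_type]
  simp only [Sum.elim_inl, Sum.elim_inr]
  ext v
  have l1 : ∀ j, ((D j).lift h1 h2 h5).e v = iA ((D j).e (pA v)) := fun j => rfl
  have l2 : ∀ j, ((D' j).lift h3 h4 h6).e v = iB ((D' j).e (pB v)) := fun j => rfl
  have e1 := congrArg iA (LinearMap.congr_fun hD (pA v))
  have e2 := congrArg iB (LinearMap.congr_fun hD' (pB v))
  have e3 := LinearMap.congr_fun h7 v
  simp only [LinearMap.add_apply, LinearMap.sum_apply, LinearMap.comp_apply, map_sum,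
    LinearMap.id_apply, l1, l2] at *
  rw [e1, e2, e3]

end HeckeA

namespace HeckeA

/-! ### Jucys-Murphy elements and the relative trace -/

section jm
variable {F E : Type} [Field F] [Ring E] [Algebra F E]

/-- Jucys-Murphy elements: `jm 1 = 1` and `jm (k+1) = q⁻¹ T_k (jm k) T_k` for `k ≥ 1`
(the value `jm 0 = 1` is a convention). -/
def jm (q : F) (T : ℕ → E) : ℕ → E
  | 0 => 1
  | 1 => 1
  | k + 2 => q⁻¹ • (T (k + 1) * jm q T (k + 1) * T (k + 1))

theorem jm_succ (q : F) (T : ℕ → E) {k : ℕ} (hk : 1 ≤ k) :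
    jm q T (k + 1) = q⁻¹ • (T k * jm q T k * T k) := by
  obtain ⟨k, rfl⟩ : ∃ j, k = j + 1 := ⟨k - 1, by omega⟩
  rfl

theorem HeckeRel.commute {q : F} {n : ℕ} {T : ℕ → E} (h : HeckeRel q n T) {i j : ℕ} (hi : 1 ≤ i)
    (hj : 1 ≤ j) (hin : i < n) (hjn : j < n) (hij : i + 2 ≤ j ∨ j + 2 ≤ i) :
    Commute (T i) (T j) := by
  rcases hij with hij | hij
  · exact h.comm i j hi hij hjn
  · exact (h.comm j i hj hij hin).symm

theorem jm_commute_of (q : F) (T : ℕ → E) (z : E) (k : ℕ) (h : ∀ i, 1 ≤ i → i < k → Commute z (T i)) :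
    Commute z (jm q T k) := by
  induction k with
  | zero => exact Commute.one_right _
  | succ k ih =>
    rcases Nat.eq_zero_or_pos k with rfl | hk
    · exact Commute.one_right _
    rw [jm_succ q T hk]
    have h1 := h k hk (by omega)
    exact (((h1.mul_right (ih fun i hi hik => h i hi (by omega))).mul_right h1)).smul_right _

/-- `jm k` commutes with the `T i` for `i > k`. -/
theorem jm_commute_hi {q : F} {n : ℕ} {T : ℕ → E} (h : HeckeRel q n T) {i k : ℕ} (hi : 1 ≤ i)
    (hki : k < i) (hin : i < n) : Commute (T i) (jm q T k) :=
  jm_commute_of q T _ _ fun j hj hjk => h.commute hi hj hin (by omega) (by omega)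

/-- `jm k` commutes with the `T i` for `i < k - 1`. -/
theorem jm_commute_lo {q : F} {n : ℕ} {T : ℕ → E} (h : HeckeRel q n T) {i k : ℕ} (hi : 1 ≤ i)
    (hki : i + 1 < k) (hkn : k ≤ n) : Commute (T i) (jm q T k) := by
  induction k with
  | zero => omega
  | succ k ih =>
    rw [jm_succ q T (by omega)]
    rcases Nat.lt_or_ge (i + 1) k with h1 | h1
    · have h2 : Commute (T i) (T k) := h.commute hi (by omega) (by omega) (by omega) (by omega)
      exact ((h2.mul_right (ih h1 (by omega))).mul_right h2).smul_right _
    · obtain rfl : k = i + 1 := by omega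
      rw [jm_succ q T hi]
      have hb := h.braid i hi (by omega)
      have hc : T (i + 1) * jm q T i = jm q T i * T (i + 1) :=
        jm_commute_hi h (by omega) (by omega) (by omega)
      refine Commute.smul_right ?_ _
      rw [mul_smul_comm, smul_mul_assoc]
      refine Commute.smul_right ?_ _
      change T i * (T (i + 1) * (T i * jm q T i * T i) * T (i + 1))
        = T (i + 1) * (T i * jm q T i * T i) * T (i + 1) * T i
      calc T i * (T (i + 1) * (T i * jm q T i * T i) * T (i + 1))
          = (T i * T (i + 1) * T i) * (jm q T i * T i * T (i + 1)) := by simp only [mul_assoc]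
        _ = T (i + 1) * T i * (T (i + 1) * jm q T i) * (T i * T (i + 1)) := by
          rw [hb]; simp only [mul_assoc]
        _ = T (i + 1) * T i * jm q T i * (T (i + 1) * T i * T (i + 1)) := by
          rw [hc]; simp only [mul_assoc]
        _ = T (i + 1) * (T i * jm q T i * T i) * T (i + 1) * T i := by
          rw [← hb]; simp only [mul_assoc]

theorem jm_commute_jm {q : F} {n : ℕ} {T : ℕ → E} (h : HeckeRel q n T) {j k : ℕ}
    (hj : j ≤ n) (hk : k ≤ n) : Commute (jm q T j) (jm q T k) := by
  wlog hjk : j ≤ k generalizing j k with H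
  · exact (H hk hj (by omega)).symm
  rcases Nat.eq_or_lt_of_le hjk with rfl | hlt
  · exact Commute.refl _
  · exact (jm_commute_of q T _ _ fun i hi hij => (jm_commute_lo h hi (by omega) hk).symm).symm

theorem T_mul_jm {q : F} (hq : q ≠ 0) {n : ℕ} {T : ℕ → E} (h : HeckeRel q n T) {k : ℕ} (hk : 1 ≤ k)
    (hkn : k < n) : T k * jm q T k = jm q T (k + 1) * T k - (q - 1) • jm q T (k + 1) := by
  have h1 : jm q T (k + 1) * T k = q⁻¹ • (T k * jm q T k * (T k * T k)) := by
    rw [jm_succ q T hk, smul_mul_assoc, mul_assoc]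
  rw [h1, h.quad k hk hkn, mul_add, mul_smul_comm, mul_smul_comm, mul_one, jm_succ q T hk]
  rw [smul_add, smul_smul q⁻¹ q, inv_mul_cancel₀ hq, one_smul, smul_comm (q - 1)]
  abel

theorem jm_mul_T {q : F} (hq : q ≠ 0) {n : ℕ} {T : ℕ → E} (h : HeckeRel q n T) {k : ℕ} (hk : 1 ≤ k)
    (hkn : k < n) : jm q T k * T k = T k * jm q T (k + 1) - (q - 1) • jm q T (k + 1) := by
  have h1 : T k * jm q T (k + 1) = q⁻¹ • ((T k * T k) * (jm q T k * T k)) := by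
    rw [jm_succ q T hk, mul_smul_comm]; simp only [mul_assoc]
  rw [h1, h.quad k hk hkn, add_mul, smul_mul_assoc, smul_mul_assoc, one_mul, jm_succ q T hk]
  rw [smul_add, smul_smul q⁻¹ q, inv_mul_cancel₀ hq, one_smul, smul_comm (q - 1)]
  simp only [mul_assoc]
  abel

end jm

section tr
variable {F : Type} [Field F] {V W U : Type} [AddCommGroup V] [Module F V]
  [AddCommGroup W] [Module F W] [AddCommGroup U] [Module F U]

/-- The relative trace from the Hecke algebra of `S_{n-1}` to that of `S_n`:
`tr n h = ∑_k q^{k-n} T_k ⋯ T_{n-1} h T_{n-1} ⋯ T_k`. -/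
def tr (q : F) (T : ℕ → Module.End F V) (T' : ℕ → Module.End F W) :
    ℕ → (W →ₗ[F] V) → (W →ₗ[F] V)
  | 0, _ => 0
  | n + 1, h => h + tr q T T' n (q⁻¹ • (T n ∘ₗ h ∘ₗ T' n))

variable {q : F} {T : ℕ → Module.End F V} {T' : ℕ → Module.End F W} {T'' : ℕ → Module.End F U}

theorem tr_add (n : ℕ) (h h' : W →ₗ[F] V) : tr q T T' n (h + h') = tr q T T' n h + tr q T T' n h' := by
  induction n generalizing h h' with
  | zero => simp [tr]
  | succ n ih =>
    simp only [tr]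
    rw [LinearMap.add_comp, LinearMap.comp_add, smul_add, ih]
    abel

theorem tr_smul (n : ℕ) (c : F) (h : W →ₗ[F] V) : tr q T T' n (c • h) = c • tr q T T' n h := by
  induction n generalizing h with
  | zero => simp [tr]
  | succ n ih =>
    simp only [tr]
    rw [LinearMap.smul_comp, LinearMap.comp_smul, smul_comm, ih, smul_add]

theorem tr_sum {ι : Type} (s : Finset ι) (n : ℕ) (h : ι → (W →ₗ[F] V)) :
    tr q T T' n (∑ i ∈ s, h i) = ∑ i ∈ s, tr q T T' n (h i) := by
  classical
  induction s using Finset.induction_on with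
  | empty =>
    have := tr_smul (q := q) (T := T) (T' := T') n 0 0
    simpa using this
  | insert a s ha ih => rw [Finset.sum_insert ha, Finset.sum_insert ha, tr_add, ih]

theorem tr_comp_left {n : ℕ} {z : V →ₗ[F] U} (hz : Tw n T T'' z) (h : W →ₗ[F] V) :
    tr q T'' T' n (z ∘ₗ h) = z ∘ₗ tr q T T' n h := by
  induction n generalizing h with
  | zero => simp [tr]
  | succ n ih =>
    rcases Nat.eq_zero_or_pos n with rfl | hn
    · simp [tr]
    simp only [tr]
    have h2 : q⁻¹ • (T'' n ∘ₗ (z ∘ₗ h) ∘ₗ T' n) = z ∘ₗ (q⁻¹ • (T n ∘ₗ h ∘ₗ T' n)) := by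
      ext v
      simp [hz n hn (by omega)]
    rw [h2, ih (hz.mono (by omega)), LinearMap.comp_add]

theorem tr_comp_right {n : ℕ} {z : U →ₗ[F] W} (hz : Tw n T'' T' z) (h : W →ₗ[F] V) :
    tr q T T'' n (h ∘ₗ z) = tr q T T' n h ∘ₗ z := by
  induction n generalizing h with
  | zero => simp [tr]
  | succ n ih =>
    rcases Nat.eq_zero_or_pos n with rfl | hn
    · simp [tr]
    simp only [tr]
    have h2 : q⁻¹ • (T n ∘ₗ (h ∘ₗ z) ∘ₗ T'' n) = (q⁻¹ • (T n ∘ₗ h ∘ₗ T' n)) ∘ₗ z := by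
      ext v
      simp [hz n hn (by omega)]
    rw [h2, ih (hz.mono (by omega)), LinearMap.add_comp]

theorem tw_T {n : ℕ} (hT : HeckeRel q n T) {i j : ℕ} (hi : 1 ≤ i) (hin : i < n) (hj : j + 1 ≤ i) :
    Tw j T T (T i) := by
  rw [Tw.iff_commute]
  intro k h1 h2
  exact (hT.commute hi h1 hin (by omega) (by omega)).eq

/-- The relative trace of a homomorphism for `S_{n-1}` is a homomorphism for `S_n`. -/
theorem tw_tr (hq : q ≠ 0) : ∀ {n : ℕ}, HeckeRel q n T → HeckeRel q n T' → ∀ {h : W →ₗ[F] V},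
    Tw (n - 1) T' T h → Tw n T' T (tr q T T' n h) := by
  intro n
  induction n with
  | zero => intro _ _ h _ j h1 h2; omega
  | succ n ih =>
    intro hT hT' h hh
    rcases Nat.eq_zero_or_pos n with rfl | hn
    · intro j h1 h2; omega
    have hh : Tw n T' T h := hh
    have hTn : Tw (n - 1) T T (T n) := tw_T hT hn (by omega) (by omega)
    have hTn' : Tw (n - 1) T' T' (T' n) := tw_T hT' hn (by omega) (by omega)
    have hh' : Tw (n - 1) T' T (q⁻¹ • (T n ∘ₗ h ∘ₗ T' n)) := by
      intro j h1 h2 v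
      have := (hTn.comp ((hh.mono (by omega : n - 1 ≤ n)).comp hTn')) j h1 h2 v
      simp only [LinearMap.comp_apply, LinearMap.smul_apply, map_smul] at *
      rw [this]
    intro j h1 h2 v
    rcases Nat.lt_or_ge j n with hjn | hjn
    · simp only [tr, LinearMap.add_apply, map_add]
      rw [hh j h1 hjn, ih (hT.mono (by omega)) (hT'.mono (by omega)) hh' j h1 hjn]
    obtain rfl : j = n := by omega
    obtain ⟨m, rfl⟩ : ∃ m, j = m + 1 := ⟨j - 1, by omega⟩
    have part1 : ∀ v, h (T' (m + 1) v) + (q⁻¹ • (T (m + 1) ∘ₗ h ∘ₗ T' (m + 1))) (T' (m + 1) v)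
        = T (m + 1) (h v + (q⁻¹ • (T (m + 1) ∘ₗ h ∘ₗ T' (m + 1))) v) := by
      intro v
      have e1 := LinearMap.congr_fun (hT'.quad (m + 1) h1 h2) v
      have e2 := LinearMap.congr_fun (hT.quad (m + 1) h1 h2) (h (T' (m + 1) v))
      simp only [Module.End.mul_apply, LinearMap.add_apply, LinearMap.smul_apply,
        Module.End.one_apply, LinearMap.comp_apply, map_add, map_smul] at *
      rw [e1, e2]
      simp only [map_add, map_smul, smul_add, smul_smul, inv_mul_cancel₀ hq, one_smul]
      abel
    have part2 : ∀ v, (tr q T T' m (q⁻¹ • (T m ∘ₗ (q⁻¹ • (T (m + 1) ∘ₗ h ∘ₗ T' (m + 1))) ∘ₗ T' m)))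
        (T' (m + 1) v) = T (m + 1) ((tr q T T' m
          (q⁻¹ • (T m ∘ₗ (q⁻¹ • (T (m + 1) ∘ₗ h ∘ₗ T' (m + 1))) ∘ₗ T' m))) v) := by
      rcases Nat.eq_zero_or_pos m with rfl | hm
      · intro v; simp [tr]
      have e0 : (q⁻¹ • (T m ∘ₗ (q⁻¹ • (T (m + 1) ∘ₗ h ∘ₗ T' (m + 1))) ∘ₗ T' m)) ∘ₗ T' (m + 1)
          = T (m + 1) ∘ₗ (q⁻¹ • (T m ∘ₗ (q⁻¹ • (T (m + 1) ∘ₗ h ∘ₗ T' (m + 1))) ∘ₗ T' m)) := by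
        ext v
        have e1 := LinearMap.congr_fun (hT'.braid m hm (by omega)) v
        have e2 := fun w => LinearMap.congr_fun (hT.braid m hm (by omega)) w
        have e3 := fun w => hh m hm (by omega) w
        simp only [Module.End.mul_apply, LinearMap.smul_apply, LinearMap.comp_apply, map_smul] at *
        rw [← e1, e3, e2]
      have e4 : Tw m T T (T (m + 1)) := tw_T hT (by omega) (by omega) (by omega)
      have e5 : Tw m T' T' (T' (m + 1)) := tw_T hT' (by omega) (by omega) (by omega)
      have e6 := tr_comp_left (q := q) (T' := T') e4
        (q⁻¹ • (T m ∘ₗ (q⁻¹ • (T (m + 1) ∘ₗ h ∘ₗ T' (m + 1))) ∘ₗ T' m))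
      have e7 := tr_comp_right (q := q) (T := T) e5
        (q⁻¹ • (T m ∘ₗ (q⁻¹ • (T (m + 1) ∘ₗ h ∘ₗ T' (m + 1))) ∘ₗ T' m))
      rw [e0, e6] at e7
      intro v
      exact (LinearMap.congr_fun e7 v).symm
    have := part1 v
    have h3 := part2 v
    simp only [tr, LinearMap.add_apply, map_add] at *
    rw [h3, ← add_assoc, this, ← add_assoc]

/-- `L_{n+1} = 1 + (1 - q⁻¹) tr (T_n)`. -/
theorem jm_eq_tr (hq : q ≠ 0) {n : ℕ} (hT : HeckeRel q (n + 1) T) :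
    jm q T (n + 1) = 1 + (1 - q⁻¹) • tr q T T n (T n) := by
  induction n with
  | zero => simp [tr, jm]
  | succ n ih =>
    have ih := ih (hT.mono (by omega))
    rw [jm_succ q T (by omega), ih]
    have key : tr q T T n (q⁻¹ • (T n ∘ₗ T (n + 1) ∘ₗ T n))
        = q⁻¹ • (T (n + 1) * tr q T T n (T n) * T (n + 1)) := by
      rcases Nat.eq_zero_or_pos n with rfl | hn
      · simp [tr]
      have hb : T n ∘ₗ T (n + 1) ∘ₗ T n = T (n + 1) ∘ₗ T n ∘ₗ T (n + 1) := by
        have := hT.braid n hn (by omega)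
        rw [mul_assoc, mul_assoc] at this
        exact this
      have h1 : Tw n T T (T (n + 1)) := tw_T hT (by omega) (by omega) (by omega)
      rw [tr_smul, hb, tr_comp_left h1, tr_comp_right h1]
      rfl
    have hquad := hT.quad (n + 1) (by omega) (by omega)
    simp only [tr]
    rw [key, mul_add, add_mul, mul_one, mul_smul_comm, smul_mul_assoc, hquad]
    simp only [smul_add, smul_smul, inv_mul_cancel₀ hq, one_smul]
    have : q⁻¹ * (q - 1) = 1 - q⁻¹ := by field_simp
    rw [this, mul_comm q⁻¹ (1 - q⁻¹)]
    abel

/-- Recursion for `G_n = tr (u - L_n)⁻¹`. -/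
theorem trace_resolvent (hq : q ≠ 0) {n : ℕ} (hT : HeckeRel q (n + 1) T) (u : F)
    {r s : Module.End F V} (hr : r * (u • 1 - jm q T n) = 1) (hr' : (u • 1 - jm q T n) * r = 1)
    (hs : s * (u • 1 - jm q T (n + 1)) = 1) (hs' : (u • 1 - jm q T (n + 1)) * s = 1) :
    tr q T T (n + 1) s = tr q T T n r
      + s * jm q T (n + 1) * ((u - 1) • 1 - (u * (q - 2 + q⁻¹)) • tr q T T n r) * s := by
  set y := jm q T (n + 1) with hy
  set x := jm q T n with hx
  have sy : s * y = u • s - 1 := by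
    have : s * y = u • s - s * (u • 1 - y) := by
      rw [mul_sub, mul_smul_comm, mul_one]; abel
    rw [this, hs]
  rcases Nat.eq_zero_or_pos n with rfl | hn
  · have hy1 : y = 1 := by rw [hy]; rfl
    rw [hy1] at hs hs' sy ⊢
    rw [mul_one] at sy
    simp only [tr]
    have h3 : (u - 1) • s = 1 := by 
      have h4 : u • s = s + 1 := (eq_add_of_sub_eq sy.symm)
      rw [sub_smul, one_smul, h4]; abel
    rw [smul_zero, sub_zero, mul_one, zero_add, add_zero, mul_smul_comm, smul_mul_assoc, mul_one,
      ← mul_smul_comm, h3, mul_one]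
  have hTx : T n * x = y * T n - (q - 1) • y := T_mul_jm hq hT hn (by omega)
  have hxT : x * T n = T n * y - (q - 1) • y := jm_mul_T hq hT hn (by omega)
  have hxy : x * y = y * x := (jm_commute_jm hT (by omega) (by omega)).eq
  have hyT : T n * x * T n = q • y := by
    rw [hy, jm_succ q T hn, smul_smul, mul_inv_cancel₀ hq, one_smul]
  have hquad := hT.quad n hn (by omega)
  -- commutation of resolvents
  have hsx : s * x = x * s := by
    have h1 : x * (u • 1 - y) = (u • 1 - y) * x := by
      rw [mul_sub, sub_mul, hxy, mul_smul_comm, smul_mul_assoc, mul_one, one_mul]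
    calc s * x = s * (x * (u • 1 - y)) * s := by rw [mul_assoc, mul_assoc, hs', mul_one]
      _ = (s * (u • 1 - y)) * x * s := by rw [h1]; simp only [mul_assoc]
      _ = x * s := by rw [hs, one_mul]
  -- `(u - y) T r = T - (q-1) y r`
  have hA : (u • 1 - y) * (T n * r) = T n - (q - 1) • (y * r) := by
    have h1 : (u • 1 - y) * T n = T n * (u • 1 - x) - (q - 1) • y := by
      rw [sub_mul, mul_sub, hTx, mul_smul_comm, smul_mul_assoc, mul_one, one_mul]; abel
    rw [← mul_assoc, h1, sub_mul, mul_assoc, hr', mul_one, smul_mul_assoc]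
  -- `q⁻¹ T s T = r + (1 - q⁻¹) u T r s`
  have hB : q⁻¹ • (T n * s * T n) = r + ((1 - q⁻¹) * u) • (T n * r * s) := by
    have hsr : s * r = r * s := by
      have h1 : s * (u • 1 - x) = (u • 1 - x) * s := by
        rw [mul_sub, sub_mul, hsx, mul_smul_comm, smul_mul_assoc, mul_one, one_mul]
      calc s * r = r * ((u • 1 - x) * s) * r := by rw [← mul_assoc, hr, one_mul]
        _ = r * s * ((u • 1 - x) * r) := by rw [← h1]; simp only [mul_assoc]
        _ = r * s := by rw [hr', mul_one]
    have h2 : s * T n = T n * r + (q - 1) • (s * y * r) := by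
      have h1 : (u • 1 - y) * T n = T n * (u • 1 - x) - (q - 1) • y := by
        rw [sub_mul, mul_sub, hTx, mul_smul_comm, smul_mul_assoc, mul_one, one_mul]; abel
      have h3 : s * ((u • 1 - y) * T n) * r = T n * r := by rw [← mul_assoc, hs, one_mul]
      rw [h1, mul_sub, sub_mul, mul_smul_comm, smul_mul_assoc, ← mul_assoc, mul_assoc (s * T n),
        hr', mul_one] at h3
      rw [← h3]; abel
    rw [mul_assoc, h2, sy, mul_add, ← mul_assoc, hquad, mul_smul_comm, sub_mul, mul_sub,
      one_mul, smul_mul_assoc, hsr, mul_smul_comm, add_mul, smul_mul_assoc, smul_mul_assoc, one_mul,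
      ← mul_assoc]
    have : q⁻¹ * (q - 1) = 1 - q⁻¹ := by field_simp
    simp only [smul_add, smul_sub, smul_smul, inv_mul_cancel₀ hq, one_smul]
    rw [this]
    have h5 : q⁻¹ * ((q - 1) * u) = (1 - q⁻¹) * u := by rw [← mul_assoc, this]
    rw [h5]
    abel
  have twy : ∀ j, 1 ≤ j → j < n → y * T j = T j * y := fun j h1 h2 =>
    (jm_commute_lo hT h1 (by omega) (by omega)).symm.eq
  have twuy : Tw n T T (u • 1 - y) := by
    rw [Tw.iff_commute]
    intro j h1 h2
    rw [sub_mul, mul_sub, twy j h1 h2, mul_smul_comm, smul_mul_assoc, mul_one, one_mul]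
  have tws : Tw n T T s := by
    rw [Tw.iff_commute]
    intro j h1 h2
    have h3 := Tw.iff_commute.mp twuy j h1 h2
    calc s * T j = s * (T j * (u • 1 - y)) * s := by rw [mul_assoc, mul_assoc, hs', mul_one]
      _ = (s * (u • 1 - y)) * T j * s := by rw [← h3]; simp only [mul_assoc]
      _ = T j * s := by rw [hs, one_mul]
  have c1 : tr q T T n (T n * r * s) = tr q T T n (T n * r) * s :=
    tr_comp_right tws (T n * r)
  have c2 : (u • 1 - y) * tr q T T n (T n * r) = tr q T T n (T n) - (q - 1) • (y * tr q T T n r) := by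
    have h1 : tr q T T n ((u • 1 - y) * (T n * r)) = (u • 1 - y) * tr q T T n (T n * r) :=
      tr_comp_left twuy (T n * r)
    have h2 : tr q T T n (y * r) = y * tr q T T n r :=
      tr_comp_left (Tw.iff_commute.mpr twy) r
    rw [← h1, hA, ← h2, ← tr_smul, sub_eq_add_neg, tr_add, ← neg_one_smul F (((q - 1) • (y * r))),
      tr_smul, neg_one_smul, ← sub_eq_add_neg]
  have c3 : (1 - q⁻¹) • tr q T T n (T n) = y - 1 := by
    rw [hy, jm_eq_tr hq hT]; abel
  have c4 : tr q T T n (T n * r) = s * tr q T T n (T n) - (q - 1) • (s * y * tr q T T n r) := by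
    calc tr q T T n (T n * r) = s * ((u • 1 - y) * tr q T T n (T n * r)) := by
          rw [← mul_assoc, hs, one_mul]
      _ = _ := by rw [c2, mul_sub, mul_smul_comm, mul_assoc]
  have c5 : ((1 - q⁻¹) * u) • tr q T T n (T n * r)
      = u • (s * y - s) - (u * (q - 2 + q⁻¹)) • (s * y * tr q T T n r) := by
    rw [c4, smul_sub, smul_smul, mul_comm (1 - q⁻¹), ← smul_smul, ← mul_smul_comm, c3, mul_sub,
      mul_one]
    congr 2
    field_simp
    ring
  have c6 : tr q T T (n + 1) s = s + tr q T T n (q⁻¹ • (T n * s * T n)) := by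
    simp only [tr]; rfl
  rw [c6, hB, tr_add, tr_smul, c1, ← smul_mul_assoc, c5]
  have c7 : s * y * s = u • (s * s) - s := by rw [sy, sub_mul, smul_mul_assoc, one_mul]
  rw [mul_sub, sub_mul, sub_mul, mul_smul_comm, mul_smul_comm, smul_mul_assoc, smul_mul_assoc,
    mul_one, smul_mul_assoc, sub_mul, smul_sub, sub_smul, one_smul]
  rw [c7]
  abel
end tr
end HeckeA

namespace HeckeA
open MulOpposite

/-! ### Cosets: the Hecke algebra is finite dimensional -/

section coset
variable {F E : Type} [Field F] [Ring E] [Algebra F E]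

/-- The subalgebra generated by `T 1, …, T (n-1)`. -/
def Hsub (F : Type) {E : Type} [Field F] [Ring E] [Algebra F E] (T : ℕ → E) (n : ℕ) :
    Subalgebra F E :=
  Algebra.adjoin F {x | ∃ i, 1 ≤ i ∧ i < n ∧ x = T i}

theorem mem_Hsub (T : ℕ → E) {n i : ℕ} (hi : 1 ≤ i) (hin : i < n) : T i ∈ Hsub F T n :=
  Algebra.subset_adjoin ⟨i, hi, hin, rfl⟩

/-- `desc T n k = T_n T_{n-1} ⋯ T_k`, which is `1` when `k > n`. -/
def desc (T : ℕ → E) : ℕ → ℕ → E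
  | 0, _ => 1
  | n + 1, k => if k ≤ n + 1 then T (n + 1) * desc T n k else 1

theorem desc_gt (T : ℕ → E) {n k : ℕ} (h : n < k) : desc T n k = 1 := by
  cases n with
  | zero => rfl
  | succ n => rw [desc, if_neg (by omega)]

theorem desc_succ (T : ℕ → E) {n k : ℕ} (h : k ≤ n + 1) :
    desc T (n + 1) k = T (n + 1) * desc T n k := by
  rw [desc, if_pos h]

theorem desc_right (T : ℕ → E) {n k : ℕ} (hk : 1 ≤ k) (h : k ≤ n) :
    desc T n k = desc T n (k + 1) * T k := by
  induction n with
  | zero => omega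
  | succ n ih =>
    rw [desc_succ T h]
    rcases Nat.eq_or_lt_of_le h with rfl | h'
    · rw [desc_gt T (by omega), desc_gt T (by omega), mul_one, one_mul]
    · rw [desc_succ T (by omega), ih (by omega), mul_assoc]

theorem desc_commute_of (T : ℕ → E) (z : E) {n k : ℕ} (hk : 1 ≤ k)
    (h : ∀ i, k ≤ i → i ≤ n → Commute z (T i)) : Commute z (desc T n k) := by
  induction n with
  | zero => exact Commute.one_right z
  | succ n ih =>
    rw [desc]
    split_ifs with hkn
    · exact (h _ hkn le_rfl).mul_right (ih fun i h1 h2 => h i h1 (by omega))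
    · exact Commute.one_right z

theorem desc_shift {q : F} {N : ℕ} {T : ℕ → E} (hT : HeckeRel q N T) {n k j : ℕ} (hk : 1 ≤ k)
    (hkj : k < j) (hjn : j ≤ n) (hnN : n < N) : desc T n k * T j = T (j - 1) * desc T n k := by
  induction n with
  | zero => omega
  | succ n ih =>
    rw [desc_succ T (by omega)]
    rcases Nat.eq_or_lt_of_le hjn with rfl | h'
    · obtain ⟨m, rfl⟩ : ∃ m, n = m + 1 := ⟨n - 1, by omega⟩
      rw [desc_succ T (by omega)]
      have h1 : T (m + 1 + 1) * desc T m k = desc T m k * T (m + 1 + 1) :=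
        desc_commute_of T _ hk fun i h1 h2 =>
          hT.commute (by omega) (by omega) (by omega) (by omega) (by omega)
      have hb := hT.braid (m + 1) (by omega) (by omega)
      simp only [Nat.add_sub_cancel]
      calc T (m + 1 + 1) * (T (m + 1) * desc T m k) * T (m + 1 + 1)
          = T (m + 1 + 1) * T (m + 1) * (desc T m k * T (m + 1 + 1)) := by simp only [mul_assoc]
        _ = (T (m + 1 + 1) * T (m + 1) * T (m + 1 + 1)) * desc T m k := by
          rw [← h1]; simp only [mul_assoc]
        _ = _ := by rw [← hb]; simp only [mul_assoc]
    · rw [mul_assoc, ih (by omega) (by omega), ← mul_assoc, ← mul_assoc]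
      have : Commute (T (n + 1)) (T (j - 1)) :=
        hT.commute (by omega) (by omega) (by omega) (by omega) (by omega)
      rw [this.eq]

/-- Coset decomposition: `H_{n+1}` is spanned by the `h T_n T_{n-1} ⋯ T_k` with `h ∈ H_n`. -/
theorem coset {q : F} {N : ℕ} {T : ℕ → E} (hT : HeckeRel q N T) {n : ℕ} (hn : n < N) {b : E}
    (hb : b ∈ Hsub F T (n + 1)) :
    b ∈ Submodule.span F {x | ∃ h ∈ Hsub F T n, ∃ k, 1 ≤ k ∧ k ≤ n + 1 ∧ x = h * desc T n k} := by
  set S := Submodule.span F {x | ∃ h ∈ Hsub F T n, ∃ k, 1 ≤ k ∧ k ≤ n + 1 ∧ x = h * desc T n k}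
  have hmem : ∀ h ∈ Hsub F T n, ∀ k, 1 ≤ k → k ≤ n + 1 → h * desc T n k ∈ S :=
    fun h hh k h1 h2 => Submodule.subset_span ⟨h, hh, k, h1, h2, rfl⟩
  have hstep : ∀ j, 1 ≤ j → j < n + 1 → ∀ s ∈ S, s * T j ∈ S := by
    intro j h1 h2 s hs
    induction hs using Submodule.span_induction with
    | zero => rw [zero_mul]; exact S.zero_mem
    | add x y _ _ hx hy => rw [add_mul]; exact S.add_mem hx hy
    | smul c x _ hx => rw [smul_mul_assoc]; exact S.smul_mem _ hx
    | mem x hx =>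
      obtain ⟨h, hh, k, hk1, hk2, rfl⟩ := hx
      rw [mul_assoc]
      rcases Nat.lt_trichotomy j k with hjk | rfl | hjk
      · rcases Nat.eq_or_lt_of_le (show j + 1 ≤ k by omega) with rfl | hjk'
        · rw [← desc_right T h1 (by omega)]
          exact hmem h hh j h1 (by omega)
        · have : Commute (T j) (desc T n k) := desc_commute_of T _ hk1 fun i h3 h4 =>
            hT.commute (by omega) (by omega) (by omega) (by omega) (by omega)
          rw [← this.eq, ← mul_assoc]
          exact hmem _ (mul_mem hh (mem_Hsub T h1 (by omega))) k hk1 hk2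
      · have e := desc_right T h1 (show j ≤ n by omega)
        have : desc T n j * T j = (q - 1) • desc T n j + q • desc T n (j + 1) := by
          conv_lhs => rw [e]
          rw [mul_assoc, hT.quad j h1 (by omega), mul_add, mul_smul_comm, mul_smul_comm, mul_one,
            ← e]
        rw [this, mul_add, mul_smul_comm, mul_smul_comm]
        exact S.add_mem (S.smul_mem _ (hmem h hh j h1 hk2))
          (S.smul_mem _ (hmem h hh (j + 1) (by omega) (by omega)))
      · rw [desc_shift hT hk1 hjk (by omega) hn, ← mul_assoc]
        exact hmem _ (mul_mem hh (mem_Hsub T (by omega) (by omega))) k hk1 hk2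
  have key : ∀ s ∈ S, s * b ∈ S := by
    induction hb using Algebra.adjoin_induction with
    | mem x hx =>
      obtain ⟨i, h1, h2, rfl⟩ := hx
      exact hstep i h1 h2
    | algebraMap r =>
      intro s hs
      rw [← Algebra.commutes, ← Algebra.smul_def]
      exact S.smul_mem _ hs
    | add x y _ _ hx hy => intro s hs; rw [mul_add]; exact S.add_mem (hx s hs) (hy s hs)
    | mul x y _ _ hx hy => intro s hs; rw [← mul_assoc]; exact hy _ (hx s hs)
  have h1 : (1 : E) ∈ S := by
    have := hmem 1 (one_mem _) (n + 1) (by omega) le_rfl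
    rwa [desc_gt T (by omega), one_mul] at this
  simpa using key 1 h1

theorem Hsub_finite {q : F} {N : ℕ} {T : ℕ → E} (hT : HeckeRel q N T) : ∀ {n : ℕ}, n ≤ N →
    (Subalgebra.toSubmodule (Hsub F T n)).FG := by
  intro n
  induction n with
  | zero =>
    intro _
    have : Hsub F T 0 = ⊥ := by
      rw [Hsub, show {x | ∃ i, 1 ≤ i ∧ i < 0 ∧ x = T i} = ∅ by ext; simp, Algebra.adjoin_empty]
    rw [this]
    exact Subalgebra.fg_bot_toSubmodule
  | succ n ih =>
    intro hn
    have h1 := ih (by omega)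
    let S := ⨆ k ∈ Finset.Icc 1 (n + 1),
      (Subalgebra.toSubmodule (Hsub F T n)).map (LinearMap.mulRight F (desc T n k))
    have hS : S.FG := Submodule.fg_biSup _ _ fun k _ => h1.map _
    have hle : Subalgebra.toSubmodule (Hsub F T (n + 1)) ≤ S := by
      intro b hb
      refine Submodule.span_le.mpr ?_ (coset hT (by omega) hb)
      rintro _ ⟨h, hh, k, hk1, hk2, rfl⟩
      refine (le_iSup₂_of_le k (Finset.mem_Icc.mpr ⟨hk1, hk2⟩) le_rfl :
        (Subalgebra.toSubmodule (Hsub F T n)).map (LinearMap.mulRight F (desc T n k)) ≤ S) ?_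
      exact ⟨h, hh, rfl⟩
    have : FiniteDimensional F S := Module.Finite.iff_fg.mpr hS
    exact Module.Finite.iff_fg.mp (Submodule.finiteDimensional_of_le hle)

end coset

/-! ### The Ariki-Koike algebra with one parameter -/

section conv
variable {F : Type} [Field F] (n : ℕ) (q Q₁ : F)

/-- The Iwahori-Hecke algebra, i.e. the Ariki-Koike algebra with `r = 1`. -/
abbrev AK : Type := ArikiKoike F n 1 q (fun _ => Q₁)

/-- The generators of the Hecke algebra. -/
noncomputable def tau (j : ℕ) : AK n q Q₁ :=
  if h : j < n then RingQuot.mkAlgHom F (AKRel F n 1 q (fun _ => Q₁)) (FreeAlgebra.ι F ⟨j, h⟩) else 0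

theorem tau_rel : HeckeRel q n (tau n q Q₁) := by
  refine ⟨fun i h1 h2 => ?_, fun i h1 h2 => ?_, fun i j h1 h2 h3 => ?_⟩
  · have := RingQuot.mkAlgHom_rel F (AKRel.quadratic (F := F) (r := 1) (q := q)
      (Q := fun _ => Q₁) i h1 h2)
    simp only [map_mul, map_add, map_sub, map_one, map_zero, AlgHom.commutes] at this
    simp only [tau, dif_pos h2]
    rw [add_mul, mul_sub, one_mul, ← Algebra.commutes, ← Algebra.smul_def,
      Algebra.algebraMap_eq_smul_one] at this
    rw [← sub_eq_zero, ← this]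
    module
  · have := RingQuot.mkAlgHom_rel F (AKRel.braid (F := F) (r := 1) (q := q)
      (Q := fun _ => Q₁) i h1 h2)
    simp only [tau, dif_pos h2, dif_pos (show i < n by omega)]
    simpa only [map_mul] using this
  · have := RingQuot.mkAlgHom_rel F (AKRel.comm (F := F) (r := 1) (q := q)
      (Q := fun _ => Q₁) i j h2 h3)
    simp only [tau, dif_pos h3, dif_pos (show i < n by omega)]
    simpa only [map_mul] using this

theorem tau_zero (hn : 1 ≤ n) : tau n q Q₁ 0 = algebraMap F _ Q₁ := by
  have := RingQuot.mkAlgHom_rel F (AKRel.cyclotomic (F := F) (r := 1) (q := q)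
      (Q := fun _ => Q₁) (show 0 < n by omega))
  simp only [List.finRange_succ, List.finRange_zero, List.map_cons, List.map_nil, List.prod_cons,
    List.prod_nil, mul_one, map_sub, AlgHom.commutes, map_zero] at this
  simp only [tau, dif_pos (show 0 < n by omega)]
  exact sub_eq_zero.mp this

theorem Hsub_tau (hn : 1 ≤ n) : Hsub F (tau n q Q₁) n = ⊤ := by
  rw [eq_top_iff]
  rintro a -
  obtain ⟨b, rfl⟩ := RingQuot.mkAlgHom_surjective F (AKRel F n 1 q (fun _ => Q₁)) a
  induction b using FreeAlgebra.induction with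
  | grade0 r => rw [AlgHom.commutes]; exact Subalgebra.algebraMap_mem _ _
  | grade1 x =>
    have h1 : RingQuot.mkAlgHom F (AKRel F n 1 q (fun _ => Q₁)) (FreeAlgebra.ι F x)
        = tau n q Q₁ x := by
      simp only [tau, dif_pos x.2]
    rw [h1]
    rcases Nat.eq_zero_or_pos x.1 with h0 | h0
    · rw [h0, tau_zero n q Q₁ hn]; exact Subalgebra.algebraMap_mem _ _
    · exact mem_Hsub _ h0 x.2
  | mul a b ha hb => rw [map_mul]; exact mul_mem ha hb
  | add a b ha hb => rw [map_add]; exact add_mem ha hb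

theorem AK_finite (hn : 1 ≤ n) : Module.Finite F (AK n q Q₁) := by
  have h := Hsub_finite (tau_rel n q Q₁) le_rfl
  rw [Hsub_tau n q Q₁ hn] at h
  exact ⟨by simpa using h⟩

variable {n q Q₁}

theorem exists_lift {E : Type} [Ring E] [Algebra F E] {T : ℕ → E} (hT : HeckeRel q n T) :
    ∃ φ : AK n q Q₁ →ₐ[F] E, ∀ j, 1 ≤ j → j < n → φ (tau n q Q₁ j) = T j := by
  let f : FreeAlgebra F (Fin n) →ₐ[F] E :=
    FreeAlgebra.lift F fun j => if j.1 = 0 then algebraMap F E Q₁ else T j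
  have hf0 : ∀ (h : 0 < n), f (FreeAlgebra.ι F ⟨0, h⟩) = algebraMap F E Q₁ := fun h => by simp [f]
  have hf : ∀ j (h : j < n), 1 ≤ j → f (FreeAlgebra.ι F ⟨j, h⟩) = T j := fun j h h1 => by
    simp [f, show j ≠ 0 by omega]
  have hrel : ∀ ⦃x y⦄, AKRel F n 1 q (fun _ => Q₁) x y → f x = f y := by
    intro x y h
    induction h with
    | cyclotomic h => simp [hf0 h, List.finRange_succ]
    | braid01 h =>
      simp only [map_mul, hf0 (show 0 < n by omega), hf 1 h le_rfl]
      simp only [← Algebra.commutes, mul_assoc]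
    | quadratic i h1 h2 =>
      simp only [map_mul, map_add, map_sub, map_one, map_zero, hf i h2 h1, AlgHom.commutes]
      rw [add_mul, mul_sub, one_mul, ← Algebra.commutes, ← Algebra.smul_def,
        Algebra.algebraMap_eq_smul_one, hT.quad i h1 h2]
      module
    | braid i h1 h2 =>
      simp only [map_mul, hf i (show i < n by omega) h1, hf (i + 1) h2 (by omega)]
      exact hT.braid i h1 h2
    | comm i j h1 h2 =>
      rcases Nat.eq_zero_or_pos i with rfl | hi
      · simp only [map_mul, hf0 (show 0 < n by omega)]
        exact Algebra.commutes _ _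
      · simp only [map_mul, hf i (show i < n by omega) hi, hf j h2 (by omega)]
        exact hT.comm i j hi h1 h2
  refine ⟨RingQuot.liftAlgHom F ⟨f, hrel⟩, fun j h1 h2 => ?_⟩
  simp only [tau, dif_pos h2, RingQuot.liftAlgHom_mkAlgHom_apply]
  exact hf j h2 h1

theorem HeckeRel.op {E : Type} [Ring E] [Algebra F E] {T : ℕ → E} (hT : HeckeRel q n T) :
    HeckeRel q n (fun j => MulOpposite.op (T j)) := by
  refine ⟨fun i h1 h2 => ?_, fun i h1 h2 => ?_, fun i j h1 h2 h3 => ?_⟩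
  · rw [← op_mul, hT.quad i h1 h2]; rfl
  · rw [← op_mul, ← op_mul, ← op_mul, ← op_mul, ← mul_assoc, ← mul_assoc, hT.braid i h1 h2]
  · rw [← op_mul, ← op_mul, hT.comm i j h1 h2 h3]

theorem HeckeRel.map {E E' : Type} [Ring E] [Algebra F E] [Ring E'] [Algebra F E'] {T : ℕ → E}
    (hT : HeckeRel q n T) (φ : E →ₐ[F] E') : HeckeRel q n (fun j => φ (T j)) := by
  refine ⟨fun i h1 h2 => ?_, fun i h1 h2 => ?_, fun i j h1 h2 h3 => ?_⟩
  · rw [← map_mul, hT.quad i h1 h2]; simp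
  · simp only [← map_mul]; rw [hT.braid i h1 h2]
  · simp only [← map_mul]; rw [hT.comm i j h1 h2 h3]

theorem isCompl_iff_elem {R M : Type} [Ring R] [AddCommGroup M] [Module R M] {P Q : Submodule R M} :
    IsCompl P Q ↔ (∀ x ∈ P, x ∈ Q → x = 0) ∧ ∀ v, ∃ a ∈ P, ∃ b ∈ Q, a + b = v := by
  constructor
  · intro h
    refine ⟨fun x => Submodule.disjoint_def.mp h.disjoint x, fun v => ?_⟩
    exact Submodule.mem_sup.mp (h.sup_eq_top ▸ Submodule.mem_top : v ∈ P ⊔ Q)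
  · rintro ⟨h1, h2⟩
    refine ⟨Submodule.disjoint_def.mpr h1, ?_⟩
    rw [codisjoint_iff, eq_top_iff]
    intro v _
    exact Submodule.mem_sup.mpr (h2 v)

section compat
variable {N N' : Type} [AddCommGroup N] [Module F N] [Module (AK n q Q₁)ᵐᵒᵖ N]
  [IsScalarTower F (AK n q Q₁)ᵐᵒᵖ N] [AddCommGroup N'] [Module F N'] [Module (AK n q Q₁)ᵐᵒᵖ N']
  [IsScalarTower F (AK n q Q₁)ᵐᵒᵖ N']

variable (q Q₁) in
/-- The operators `T j` on a right module are given by the action of the generators. -/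
def Compat (n : ℕ) {N : Type} [AddCommGroup N] [Module F N] [Module (AK n q Q₁)ᵐᵒᵖ N]
    (T : ℕ → Module.End F N) : Prop :=
  ∀ j, 1 ≤ j → j < n → ∀ v, T j v = op (tau n q Q₁ j) • v

theorem closed_of (hn : 1 ≤ n) (R : AK n q Q₁ → Prop)
    (h1 : ∀ c : F, R (algebraMap F _ c)) (hadd : ∀ a b, R a → R b → R (a + b))
    (hmul : ∀ a b, R a → R b → R (a * b)) (hg : ∀ j, 1 ≤ j → j < n → R (tau n q Q₁ j))
    (a : AK n q Q₁) : R a := by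
  have ha : a ∈ Hsub F (tau n q Q₁) n := by rw [Hsub_tau n q Q₁ hn]; trivial
  induction ha using Algebra.adjoin_induction with
  | mem x hx => obtain ⟨i, h2, h3, rfl⟩ := hx; exact hg i h2 h3
  | algebraMap r => exact h1 r
  | add x y _ _ hx hy => exact hadd x y hx hy
  | mul x y _ _ hx hy => exact hmul x y hx hy

theorem op_algebraMap_smul (c : F) (v : N) : op (algebraMap F (AK n q Q₁) c) • v = c • v := by
  rw [← MulOpposite.algebraMap_apply, algebraMap_smul]

theorem Compat.sub (hn : 1 ≤ n) {T : ℕ → Module.End F N} (hT : Compat q Q₁ n T)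
    {P : Submodule F N} (hP : Inv n T P) : ∃ P' : Submodule (AK n q Q₁)ᵐᵒᵖ N, ∀ v, v ∈ P' ↔ v ∈ P := by
  refine ⟨{ P with smul_mem' := ?_ }, fun v => Iff.rfl⟩
  intro a v hv
  have := closed_of hn (fun a => ∀ v ∈ P, op a • v ∈ P) ?_ ?_ ?_ ?_ (unop a) v hv
  · exact this
  · intro c v hv; rw [op_algebraMap_smul]; exact P.smul_mem _ hv
  · intro a b ha hb v hv; rw [op_add, add_smul]; exact P.add_mem (ha v hv) (hb v hv)
  · intro a b ha hb v hv; rw [op_mul, mul_smul]; exact hb _ (ha v hv)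
  · intro j h1 h2 v hv; rw [← hT j h1 h2]; exact hP j h1 h2 v hv

theorem Compat.indec_iff (hn : 1 ≤ n) {T : ℕ → Module.End F N} (hT : Compat q Q₁ n T) :
    Indec n T ↔ IsIndecomposableModule (AK n q Q₁)ᵐᵒᵖ N := by
  constructor
  · rintro ⟨h1, h2⟩
    refine ⟨h1, fun P Q hPQ => ?_⟩
    have hinv : ∀ R : Submodule (AK n q Q₁)ᵐᵒᵖ N, Inv n T (R.restrictScalars F) := by
      intro R j h3 h4 v hv
      rw [hT j h3 h4]; exact R.smul_mem _ hv
    have := h2 (P.restrictScalars F) (Q.restrictScalars F) (hinv P) (hinv Q)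
      (isCompl_iff_elem.mpr (show (∀ x ∈ P, x ∈ Q → x = 0) ∧ ∀ v, ∃ a ∈ P, ∃ b ∈ Q, a + b = v from
        isCompl_iff_elem.mp hPQ))
    simpa using this
  · rintro ⟨h1, h2⟩
    refine ⟨h1, fun P Q hP hQ hPQ => ?_⟩
    obtain ⟨P', hP'⟩ := hT.sub hn hP
    obtain ⟨Q', hQ'⟩ := hT.sub hn hQ
    have := h2 P' Q' (by
      rw [isCompl_iff_elem] at *
      simpa only [hP', hQ'] using hPQ)
    simpa only [Submodule.eq_bot_iff, hP', hQ'] using this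

theorem Compat.iso_iff (hn : 1 ≤ n) {T : ℕ → Module.End F N} (hT : Compat q Q₁ n T)
    {T' : ℕ → Module.End F N'} (hT' : Compat q Q₁ n T') :
    (∃ f : N ≃ₗ[F] N', Tw n T T' f.toLinearMap) ↔ Nonempty (N ≃ₗ[(AK n q Q₁)ᵐᵒᵖ] N') := by
  constructor
  · rintro ⟨f, hf⟩
    refine ⟨{ f with map_smul' := ?_ }⟩
    intro a v
    have := closed_of hn (fun a => ∀ v, f (op a • v) = op a • f v) ?_ ?_ ?_ ?_ (unop a) v
    · exact this
    · intro c v; rw [op_algebraMap_smul, op_algebraMap_smul, map_smul]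
    · intro a b ha hb v; rw [op_add, add_smul, add_smul, map_add, ha, hb]
    · intro a b ha hb v; rw [op_mul, mul_smul, mul_smul, hb, ha]
    · intro j h1 h2 v; rw [← hT j h1 h2, ← hT' j h1 h2]; exact hf j h1 h2 v
  · rintro ⟨f⟩
    refine ⟨f.restrictScalars F, ?_⟩
    intro j h1 h2 v
    simp [hT j h1 h2, hT' j h1 h2]

theorem finite_iff (hn : 1 ≤ n) : Module.Finite (AK n q Q₁)ᵐᵒᵖ N ↔ FiniteDimensional F N := by
  have := AK_finite n q Q₁ hn
  have : Module.Finite F (AK n q Q₁)ᵐᵒᵖ := Module.Finite.equiv (MulOpposite.opLinearEquiv F)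
  constructor
  · intro h; exact Module.Finite.trans (AK n q Q₁)ᵐᵒᵖ N
  · intro h; exact Module.Finite.of_restrictScalars_finite F _ N

theorem Compat.rel {T : ℕ → Module.End F N} (hT : Compat q Q₁ n T) : HeckeRel q n T := by
  have h := ((tau_rel n q Q₁).op).map (Algebra.lsmul F F N)
  have e : ∀ j, 1 ≤ j → j < n → T j = (Algebra.lsmul F F N) (op (tau n q Q₁ j)) :=
    fun j h1 h2 => LinearMap.ext fun v => hT j h1 h2 v
  refine ⟨fun i h1 h2 => ?_, fun i h1 h2 => ?_, fun i j h1 h2 h3 => ?_⟩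
  · rw [e i h1 h2]; exact h.quad i h1 h2
  · rw [e i h1 (by omega), e (i + 1) (by omega) h2]; exact h.braid i h1 h2
  · rw [e i h1 (by omega), e j (by omega) h3]; exact h.comm i j h1 h2 h3

end compat

theorem exists_compat_of_module (N : Type) [AddCommGroup N] [Module (AK n q Q₁)ᵐᵒᵖ N] :
    ∃ (_ : Module F N) (_ : IsScalarTower F (AK n q Q₁)ᵐᵒᵖ N) (T : ℕ → Module.End F N),
      Compat q Q₁ n T := by
  let m : Module F N := Module.compHom N (algebraMap F (AK n q Q₁)ᵐᵒᵖ)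
  have st : IsScalarTower F (AK n q Q₁)ᵐᵒᵖ N := IsScalarTower.of_algebraMap_smul fun r x => rfl
  exact ⟨m, st, fun j => Algebra.lsmul F F N (op (tau n q Q₁ j)), fun j _ _ v => rfl⟩

theorem exists_module_of_rel {N : Type} [AddCommGroup N] [Module F N] {T : ℕ → Module.End F N}
    (hT : HeckeRel q n T) : ∃ (_ : Module (AK n q Q₁)ᵐᵒᵖ N) (_ : IsScalarTower F (AK n q Q₁)ᵐᵒᵖ N),
      Compat q Q₁ n T := by
  obtain ⟨φ, hφ⟩ := exists_lift (Q₁ := Q₁) hT.op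
  let ψ : (AK n q Q₁)ᵐᵒᵖ →ₐ[F] Module.End F N := AlgHom.opComm φ
  let m : Module (AK n q Q₁)ᵐᵒᵖ N := Module.compHom N ψ.toRingHom
  have hm : ∀ (a : (AK n q Q₁)ᵐᵒᵖ) (v : N), a • v = ψ a v := fun a v => rfl
  refine ⟨m, IsScalarTower.of_algebraMap_smul fun r x => ?_, fun j h1 h2 v => ?_⟩
  · rw [hm, AlgHom.commutes]; rfl
  · have : ψ (op (tau n q Q₁ j)) = unop (φ (tau n q Q₁ j)) := rfl
    rw [hm, this, hφ j h1 h2]; rfl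

/-- Finite representation type can be tested on families of operators. -/
theorem finiteRepType_iff (hn : 1 ≤ n) : FiniteRepType (AK n q Q₁) ↔ FT q n := by
  constructor
  · rintro ⟨k, M, hM⟩
    choose m st T hT using fun i => exists_compat_of_module (q := q) (Q₁ := Q₁) (n := n) (M i)
    refine ⟨Fin k, inferInstance, fun i => @FRep.mk F _ (M i) _ (m i) (T i), ?_⟩
    rintro ⟨V, TV⟩ ⟨hfd, hrel, hind⟩ -
    obtain ⟨m', st', hc⟩ := exists_module_of_rel (Q₁ := Q₁) hrel
    obtain ⟨i, hi⟩ := hM V ((finite_iff hn).mpr hfd) ((hc.indec_iff hn).mp hind)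
    refine ⟨i, ?_⟩
    let _ := m i
    have := st i
    exact (hc.iso_iff hn (hT i)).mpr hi
  · rintro ⟨κ, _, X, hX⟩
    let κ' := {i : κ // HeckeRel q n (X i).T}
    obtain ⟨k, ⟨eqv⟩⟩ := Finite.exists_equiv_fin κ'
    choose m st hc using fun i : κ' => exists_module_of_rel (Q₁ := Q₁) i.2
    refine ⟨k, fun j => @ModuleCat.of _ _ (X (eqv.symm j).1).V _ (m (eqv.symm j)), ?_⟩
    intro N _ _ hfin hind
    obtain ⟨m', st', T, hT⟩ := exists_compat_of_module (q := q) (Q₁ := Q₁) (n := n) N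
    have hg : FRep.Good q n ⟨N, T⟩ := ⟨(finite_iff hn).mp hfin, hT.rel, (hT.indec_iff hn).mpr hind⟩
    obtain ⟨i, hi⟩ := hX _ hg trivial
    have hrel : HeckeRel q n (X i).T := by
      obtain ⟨f, hf⟩ := hi.symm
      exact hf.hecke f.injective hT.rel
    refine ⟨eqv ⟨i, hrel⟩, ?_⟩
    have key : ∀ j : κ', j = ⟨i, hrel⟩ →
        Nonempty (N ≃ₗ[(AK n q Q₁)ᵐᵒᵖ] (@ModuleCat.of _ _ (X j.1).V _ (m j))) := by
      rintro j rfl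
      let _ := m ⟨i, hrel⟩
      have := st ⟨i, hrel⟩
      exact (hT.iso_iff hn (hc ⟨i, hrel⟩)).mp hi
    exact key _ (Equiv.symm_apply_apply _ _)

end conv
end HeckeA

namespace HeckeA
open MulOpposite

/-! ### Relative projectivity and the induction step -/

section
variable {F : Type} [Field F] {q : F}

/-- Relative projectivity with respect to the Hecke algebra of `S_{n-1}`, in the form of Higman's
criterion. -/
def RelProj (q : F) (n : ℕ) (M : FRep F) : Prop :=
  ∃ h : Module.End F M.V, Tw (n - 1) M.T M.T h ∧ IsUnit (tr q M.T M.T n h : Module.End F M.V)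

theorem HeckeRel.congr {E : Type} [Ring E] [Algebra F E] {n : ℕ} {T T' : ℕ → E}
    (h : HeckeRel q n T) (e : ∀ j, 1 ≤ j → j < n → T' j = T j) : HeckeRel q n T' := by
  refine ⟨fun i h1 h2 => ?_, fun i h1 h2 => ?_, fun i j h1 h2 h3 => ?_⟩
  · rw [e i h1 h2]; exact h.quad i h1 h2
  · rw [e i h1 (by omega), e (i + 1) (by omega) h2]; exact h.braid i h1 h2
  · rw [e i h1 (by omega), e j (by omega) h3]; exact h.comm i j h1 h2 h3

/-- Coinduction from the Hecke algebra of `S_n` to that of `S_{n+1}`, with its universal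
property. -/
theorem exists_coind (n : ℕ) (X : FRep F) (hX : FiniteDimensional F X.V) :
    ∃ C : FRep F, FiniteDimensional F C.V ∧ HeckeRel q (n + 1) C.T ∧ ∃ ev : C.V →ₗ[F] X.V,
      Tw n C.T X.T ev ∧ ∀ M : FRep F, HeckeRel q (n + 1) M.T → ∀ π : M.V →ₗ[F] X.V,
        Tw n M.T X.T π → ∃ a : M.V →ₗ[F] C.V, Tw (n + 1) M.T C.T a ∧ ev ∘ₗ a = π := by
  let A := AK (n + 1) q (1 : F)
  let τ : ℕ → A := tau (n + 1) q (1 : F)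
  have hfin : Module.Finite F A := AK_finite (n + 1) q 1 (by omega)
  have hτ : HeckeRel q (n + 1) τ := tau_rel (n + 1) q 1
  let C : Submodule F (A →ₗ[F] X.V) :=
    { carrier := {ψ | ∀ i, 1 ≤ i → i < n → ∀ b, ψ (τ i * b) = X.T i (ψ b)}
      zero_mem' := by intro i _ _ b; simp
      add_mem' := by intro x y hx hy i h1 h2 b; simp [hx i h1 h2, hy i h1 h2]
      smul_mem' := by intro c x hx i h1 h2 b; simp [hx i h1 h2] }
  let R : A → (A →ₗ[F] X.V) →ₗ[F] (A →ₗ[F] X.V) := fun a =>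
    LinearMap.lcomp F X.V (LinearMap.mulRight F a)
  have hR : ∀ a ψ b, R a ψ b = ψ (b * a) := fun a ψ b => rfl
  have hRC : ∀ a, ∀ ψ ∈ C, R a ψ ∈ C := by
    intro a ψ hψ i h1 h2 b
    rw [hR, hR, mul_assoc]; exact hψ i h1 h2 _
  let TC : ℕ → Module.End F C := fun j => (R (τ j)).restrict (hRC (τ j))
  have hTC : ∀ j (ψ : C) b, (TC j ψ).1 b = ψ.1 (b * τ j) := fun j ψ b => rfl
  refine ⟨⟨C, TC⟩, inferInstanceAs (FiniteDimensional F C), ?_, ?_⟩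
  · refine ⟨fun i h1 h2 => ?_, fun i h1 h2 => ?_, fun i j h1 h2 h3 => ?_⟩
    · ext ψ b
      change (TC i (TC i ψ)).1 b = (((q - 1) • TC i ψ) + q • ψ : C).1 b
      rw [hTC, hTC, mul_assoc, hτ.quad i h1 h2]
      simp [mul_add, hTC]
    · ext ψ b
      change (TC i (TC (i + 1) (TC i ψ))).1 b = (TC (i + 1) (TC i (TC (i + 1) ψ))).1 b
      simp only [hTC, mul_assoc]
      rw [← mul_assoc (τ i), ← mul_assoc (τ (i + 1)), hτ.braid i h1 h2]
    · ext ψ b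
      change (TC i (TC j ψ)).1 b = (TC j (TC i ψ)).1 b
      simp only [hTC, mul_assoc]
      rw [hτ.comm i j h1 h2 h3]
  · let ev : C →ₗ[F] X.V := LinearMap.applyₗ (1 : A) ∘ₗ C.subtype
    have hev : ∀ ψ : C, ev ψ = ψ.1 1 := fun ψ => rfl
    refine ⟨ev, ?_, ?_⟩
    · intro j h1 h2 ψ
      change ev (TC j ψ) = X.T j (ev ψ)
      have := ψ.2 j h1 h2 1
      rw [hev, hev, hTC, one_mul, ← this, mul_one]
    · intro M hM π hπ
      obtain ⟨φ, hφ⟩ := exists_lift (Q₁ := (1 : F)) hM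
      let a0 : M.V →ₗ[F] (A →ₗ[F] X.V) := (LinearMap.llcomp F A M.V X.V π) ∘ₗ φ.toLinearMap.flip
      have ha0 : ∀ m b, a0 m b = π (φ b m) := fun m b => rfl
      have hmem : ∀ m, a0 m ∈ C := by
        intro m i h1 h2 b
        rw [ha0, ha0, map_mul, hφ i h1 (by omega)]
        exact hπ i h1 h2 _
      let a : M.V →ₗ[F] C := a0.codRestrict C hmem
      have ha : ∀ m b, (a m).1 b = π (φ b m) := fun m b => rfl
      refine ⟨a, ?_, ?_⟩
      · intro j h1 h2 m
        change a (M.T j m) = TC j (a m)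
        ext b
        rw [hTC, ha, ha, map_mul, hφ j h1 h2]; rfl
      · ext m
        change ev (a m) = π m
        rw [hev, ha, map_one]; rfl

/-- If `H_n` has finite representation type then there are finitely many relatively
`H_n`-projective indecomposable representations of `H_{n+1}`. -/
theorem FT_step (hq : q ≠ 0) {n : ℕ} (h : FT q n) : FTP q (n + 1) (RelProj q (n + 1)) := by
  obtain ⟨κ, _, X, hX⟩ := h
  let κ' := {k : κ // FiniteDimensional F (X k).V}
  choose C hCfd hCrel ev hev huniv using fun k : κ' => exists_coind (q := q) n (X k.1) k.2
  choose ι hι D hD using fun k : κ' => exists_decomp (n + 1) (C k) (hCfd k)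
  refine ⟨Σ k : κ', ι k, inferInstance, fun p => (D p.1 p.2).Y, ?_⟩
  rintro M ⟨hfd, hrel, hind⟩ ⟨h, hh, hu⟩
  simp only [Nat.add_sub_cancel] at hh
  obtain ⟨ι₀, _, D₀, hD₀⟩ := exists_decomp n M hfd
  have hnt := hind.1
  have htwe : ∀ i, Tw n M.T M.T (D₀ i).e := fun i => (D₀ i).tw_inc.comp (D₀ i).tw_pr
  have hsum : (tr q M.T M.T (n + 1) h : Module.End F M.V)
      = ∑ i, tr q M.T M.T (n + 1) (h ∘ₗ (D₀ i).e) := by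
    rw [← tr_sum]
    congr 1
    have : (h : Module.End F M.V) = h * ∑ i, (D₀ i).e := by rw [hD₀]; rfl
    conv_lhs => rw [this, Finset.mul_sum]
    rfl
  rw [hsum] at hu
  obtain ⟨i, -, hi⟩ := unit_of_sum hind _ _ (fun i => tw_tr hq hrel hrel (hh.comp (htwe i))) hu
  obtain ⟨k, g, hg⟩ := hX _ ((D₀ i).good (hrel.mono (by omega))) trivial
  have := (D₀ i).fd
  let k' : κ' := ⟨k, Module.Finite.equiv g⟩
  have hgs := hg.symm
  let π : M.V →ₗ[F] (X k).V := g.toLinearMap ∘ₗ (D₀ i).pr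
  have hπ : Tw n M.T (X k).T π := hg.comp (D₀ i).tw_pr
  let inc : (X k).V →ₗ[F] M.V := (D₀ i).inc ∘ₗ g.symm.toLinearMap
  have hinc : Tw n (X k).T M.T inc := (D₀ i).tw_inc.comp hgs
  have hip : inc ∘ₗ π = (D₀ i).e := by
    ext v; simp [inc, π, Piece.e]
  obtain ⟨a, ha, hea⟩ := huniv k' M hrel π hπ
  let b : (C k').V →ₗ[F] M.V := tr q M.T (C k').T (n + 1) (h ∘ₗ inc ∘ₗ ev k')
  have hb : Tw (n + 1) (C k').T M.T b :=
    tw_tr hq hrel (hCrel k') (hh.comp (hinc.comp (hev k')))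
  have hba : b ∘ₗ a = tr q M.T M.T (n + 1) (h ∘ₗ (D₀ i).e) := by
    rw [← tr_comp_right ha, LinearMap.comp_assoc, LinearMap.comp_assoc, hea, hip]
  rw [← hba] at hi
  have hsum2 : (b ∘ₗ a : Module.End F M.V)
      = ∑ l, (b ∘ₗ (D k' l).inc) ∘ₗ ((D k' l).pr ∘ₗ a) := by
    ext v
    have h1 := congrArg b (LinearMap.congr_fun (hD k') (a v))
    simp only [LinearMap.sum_apply, map_sum, LinearMap.id_apply] at h1
    rw [LinearMap.comp_apply, ← h1, LinearMap.sum_apply]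
    rfl
  rw [hsum2] at hi
  obtain ⟨l, -, hl⟩ := unit_of_sum hind _ _
    (fun l => (hb.comp (D k' l).tw_inc).comp ((D k' l).tw_pr.comp ha)) hi
  obtain ⟨f, hf⟩ := iso_of_unit (D k' l).ind ((D k' l).tw_pr.comp ha) (hb.comp (D k' l).tw_inc) hl
  exact ⟨⟨k', l⟩, f, hf⟩

/-- Base case: the Hecke algebra of `S_1` is the ground field. -/
theorem FT_one : FT q 1 := by
  refine ⟨Unit, inferInstance, fun _ => ⟨F, fun _ => 0⟩, ?_⟩
  rintro M ⟨hfd, hrel, hind⟩ -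
  refine ⟨(), ?_⟩
  have hinv : ∀ P : Submodule F M.V, Inv 1 M.T P := fun P j h1 h2 => by omega
  have := hind.1
  obtain ⟨v, hv⟩ := exists_ne (0 : M.V)
  obtain ⟨Q, hQ⟩ := Submodule.exists_isCompl (F ∙ v)
  rcases hind.2 _ _ (hinv _) (hinv Q) hQ with h | h
  · rw [Submodule.span_singleton_eq_bot] at h
    exact absurd h hv
  · rw [h] at hQ
    have htop := hQ.sup_eq_top
    rw [sup_bot_eq] at htop
    let f : F ≃ₗ[F] M.V := (LinearEquiv.toSpanNonzeroSingleton F M.V v hv).trans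
      (LinearEquiv.ofTop _ htop)
    exact ⟨f.symm, fun j h1 h2 => by omega⟩

end
end HeckeA

namespace HeckeA

/-! ### Quantum integers and symmetrizers -/

section sym
variable {F E : Type} [Field F] [Ring E] [Algebra F E]

/-- The quantum integer `[k] = 1 + q + ⋯ + q^(k-1)`. -/
def qn (q : F) (k : ℕ) : F := ∑ i ∈ Finset.range k, q ^ i

theorem qn_zero (q : F) : qn q 0 = 0 := by simp [qn]
theorem qn_one (q : F) : qn q 1 = 1 := by simp [qn]
theorem qn_succ (q : F) (k : ℕ) : qn q (k + 1) = qn q k + q ^ k := by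
  simp [qn, Finset.sum_range_succ]
theorem qn_succ' (q : F) (k : ℕ) : qn q (k + 1) = 1 + q * qn q k := by
  rw [qn, Finset.sum_range_succ', qn, Finset.mul_sum, add_comm]
  simp [pow_succ']
theorem qn_mul (q : F) (k : ℕ) : (q - 1) * qn q k = q ^ k - 1 := by
  induction k with
  | zero => simp [qn_zero]
  | succ k ih => rw [qn_succ, mul_add, ih]; ring

theorem qn_e {q : F} {e : ℕ} (he : 2 ≤ e) (hq : IsPrimitiveRoot q e) : qn q e = 0 :=
  hq.geom_sum_eq_zero (by omega)

theorem qn_ne {q : F} {e k : ℕ} (hq : IsPrimitiveRoot q e) (hk : 1 ≤ k) (hke : k < e) :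
    qn q k ≠ 0 := by
  intro h
  have h1 := qn_mul q k
  rw [h, mul_zero] at h1
  exact hq.pow_ne_one_of_pos_of_lt (by omega) hke (by linear_combination -h1)

/-- The symmetrizer: the idempotent of the subalgebra generated by `T 1, …, T (k-1)` on which
these act by `q`. -/
noncomputable def sym (q : F) (T : ℕ → E) : ℕ → E
  | 0 => 1
  | 1 => 1
  | k + 2 => (qn q (k + 2))⁻¹ •
      (sym q T (k + 1) + qn q (k + 1) • (sym q T (k + 1) * T (k + 1) * sym q T (k + 1)))

/-- The multiple `[k+1] sym (k+1)` of the symmetrizer, which is defined even when `[k+1] = 0`. -/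
noncomputable def num (q : F) (T : ℕ → E) (k : ℕ) : E :=
  sym q T k + qn q k • (sym q T k * T k * sym q T k)

theorem sym_succ (q : F) (T : ℕ → E) {k : ℕ} (hk : 1 ≤ k) :
    sym q T (k + 1) = (qn q (k + 1))⁻¹ • num q T k := by
  obtain ⟨k, rfl⟩ : ∃ j, k = j + 1 := ⟨k - 1, by omega⟩
  rfl

theorem sym_commute (q : F) (T : ℕ → E) (z : E) (k : ℕ)
    (h : ∀ i, 1 ≤ i → i < k → Commute z (T i)) : Commute z (sym q T k) := by
  induction k with
  | zero => exact Commute.one_right _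
  | succ k ih =>
    rcases Nat.eq_zero_or_pos k with rfl | hk
    · exact Commute.one_right _
    rw [sym_succ q T hk, num]
    have h1 := ih fun i h1 h2 => h i h1 (by omega)
    exact ((h1.add_right ((h1.mul_right (h k hk (by omega))).mul_right h1 |>.smul_right _)).smul_right _)

theorem num_commute (q : F) (T : ℕ → E) (z : E) {k : ℕ} (hk : 1 ≤ k)
    (h : ∀ i, 1 ≤ i → i ≤ k → Commute z (T i)) : Commute z (num q T k) := by
  have h1 := sym_commute q T z k fun i h1 h2 => h i h1 (by omega)
  exact h1.add_right ((h1.mul_right (h k hk le_rfl)).mul_right h1 |>.smul_right _)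

theorem sym_mem (q : F) (T : ℕ → E) (S : Subalgebra F E) (k : ℕ)
    (h : ∀ i, 1 ≤ i → i < k → T i ∈ S) : sym q T k ∈ S := by
  induction k with
  | zero => exact one_mem _
  | succ k ih =>
    rcases Nat.eq_zero_or_pos k with rfl | hk
    · exact one_mem _
    rw [sym_succ q T hk, num]
    have h1 := ih fun i h1 h2 => h i h1 (by omega)
    exact S.smul_mem (add_mem h1 (S.smul_mem (mul_mem (mul_mem h1 (h k hk (by omega))) h1) _)) _

theorem num_mem (q : F) (T : ℕ → E) (S : Subalgebra F E) {k : ℕ} (hk : 1 ≤ k)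
    (h : ∀ i, 1 ≤ i → i ≤ k → T i ∈ S) : num q T k ∈ S := by
  have h1 := sym_mem q T S k fun i h1 h2 => h i h1 (by omega)
  exact add_mem h1 (S.smul_mem (mul_mem (mul_mem h1 (h k hk le_rfl)) h1) _)

theorem sym_map {E' : Type} [Ring E'] [Algebra F E'] (q : F) (T : ℕ → E) (φ : E →ₐ[F] E') (k : ℕ) :
    φ (sym q T k) = sym q (fun i => φ (T i)) k := by
  induction k with
  | zero => simp [sym]
  | succ k ih =>
    rcases Nat.eq_zero_or_pos k with rfl | hk
    · simp [sym]
    rw [sym_succ q T hk, sym_succ q _ hk, num, num]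
    simp [ih]

theorem num_map {E' : Type} [Ring E'] [Algebra F E'] (q : F) (T : ℕ → E) (φ : E →ₐ[F] E') (k : ℕ) :
    φ (num q T k) = num q (fun i => φ (T i)) k := by
  rw [num, num]; simp [sym_map]

theorem sym_op (q : F) (T : ℕ → E) (k : ℕ) :
    sym q (fun i => MulOpposite.op (T i)) k = MulOpposite.op (sym q T k) := by
  induction k with
  | zero => simp [sym]
  | succ k ih =>
    rcases Nat.eq_zero_or_pos k with rfl | hk
    · simp [sym]
    rw [sym_succ q T hk, sym_succ q _ hk, num, num, ih]
    simp [mul_assoc]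

theorem num_op (q : F) (T : ℕ → E) (k : ℕ) :
    num q (fun i => MulOpposite.op (T i)) k = MulOpposite.op (num q T k) := by
  rw [num, num, sym_op]; simp [mul_assoc]

/-- The inductive step of `T_mul_num`: the case of the last generator. -/
theorem T_mul_num_aux {q : F} {n : ℕ} {T : ℕ → E} (hT : HeckeRel q n T) {k : ℕ} (hk : 1 ≤ k)
    (hkn : k + 1 < n) (h0 : qn q (k + 1) ≠ 0)
    (hs : T k * sym q T (k + 1) = q • sym q T (k + 1))
    (hP : sym q T k * sym q T (k + 1) = sym q T (k + 1)) :
    T (k + 1) * num q T (k + 1) = q • num q T (k + 1) := by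
  set P := sym q T k with hPdef
  set S := sym q T (k + 1) with hSdef
  set s := T k
  set t := T (k + 1)
  have hPt : t * P = P * t := (sym_commute q T t k fun i h1 h2 =>
    hT.commute (by omega) h1 hkn (by omega) (by omega)).eq
  have hS : qn q (k + 1) • S = P + qn q k • (P * s * P) := by
    rw [hSdef, sym_succ q T hk, num, smul_smul, mul_inv_cancel₀ h0, one_smul]
  have hq2 : t * t = (q - 1) • t + q • 1 := hT.quad _ (by omega) hkn
  have hbr : s * t * s = t * s * t := hT.braid k hk hkn
  have e1 : qn q (k + 1) • (S * t * S) = t * S + qn q k • (P * s * t * S) := by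
    calc qn q (k + 1) • (S * t * S) = (qn q (k + 1) • S) * (t * S) := by
          rw [smul_mul_assoc, mul_assoc]
      _ = P * t * S + qn q k • (P * s * (P * t) * S) := by
          rw [hS, add_mul, smul_mul_assoc]; simp only [mul_assoc]
      _ = t * (P * S) + qn q k • (P * s * t * (P * S)) := by
          rw [← hPt]; simp only [mul_assoc]
      _ = _ := by rw [hP]
  have e2 : t * (P * s * P) * t * S = q • (P * s * t * S) := by
    calc t * (P * s * P) * t * S = (t * P) * s * (P * t) * S := by simp only [mul_assoc]
      _ = P * (t * s * t) * (P * S) := by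
          rw [hPt]; simp only [mul_assoc]; rw [← mul_assoc P t S, ← hPt, mul_assoc]
      _ = P * s * t * (s * S) := by rw [hP, ← hbr]; simp only [mul_assoc]
      _ = _ := by rw [hs, mul_smul_comm]
  have e3 : qn q (k + 1) • (t * S * t * S) = (q - 1) • (t * S) + q • S
      + (qn q k * q) • (P * s * t * S) := by
    calc qn q (k + 1) • (t * S * t * S) = t * (qn q (k + 1) • S) * t * S := by
          rw [mul_smul_comm, smul_mul_assoc, smul_mul_assoc]
      _ = (t * P) * t * S + qn q k • (t * (P * s * P) * t * S) := by
          rw [hS, mul_add, add_mul, add_mul, mul_smul_comm, smul_mul_assoc, smul_mul_assoc]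
      _ = (t * t) * (P * S) + qn q k • (q • (P * s * t * S)) := by
          rw [e2, mul_assoc t P t, ← hPt]; simp only [mul_assoc]
      _ = _ := by rw [hP, hq2, add_mul, smul_mul_assoc, smul_mul_assoc, one_mul, smul_smul]
  calc t * num q T (k + 1) = t * S + qn q (k + 1) • (t * S * t * S) := by
        rw [num, mul_add, mul_smul_comm]; simp only [← hSdef, mul_assoc]; rfl
    _ = q • S + q • (t * S + qn q k • (P * s * t * S)) := by rw [e3]; module
    _ = _ := by rw [← e1, ← smul_add]; rfl

/-- The symmetrizers: eigenvector property and idempotency. -/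
theorem sym_props {q : F} {n : ℕ} {T : ℕ → E} (hT : HeckeRel q n T) {k : ℕ} (hk : 1 ≤ k)
    (hkn : k ≤ n) (h0 : ∀ j, 1 ≤ j → j ≤ k → qn q j ≠ 0) :
    (∀ i, 1 ≤ i → i < k → T i * sym q T k = q • sym q T k) ∧
      sym q T k * sym q T k = sym q T k ∧
      (k < n → ∀ i, 1 ≤ i → i ≤ k → T i * num q T k = q • num q T k) := by
  induction k, hk using Nat.le_induction with
  | base =>
    refine ⟨fun i h1 h2 => by omega, by simp [sym], fun h i h1 h2 => ?_⟩
    obtain rfl : i = 1 := by omega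
    simp only [num, sym, qn_one, one_smul, one_mul, mul_one, mul_add]
    rw [hT.quad 1 le_rfl h]; module
  | succ k hk ih =>
    obtain ⟨i1, i2, i3⟩ := ih (by omega) fun j h1 h2 => h0 j h1 (by omega)
    have h00 := h0 (k + 1) (by omega) le_rfl
    have a1 : ∀ i, 1 ≤ i → i < k + 1 → T i * sym q T (k + 1) = q • sym q T (k + 1) := by
      intro i h1 h2
      rw [sym_succ q T hk, mul_smul_comm, i3 (by omega) i h1 (by omega), smul_comm]
    have a2 : sym q T k * sym q T (k + 1) = sym q T (k + 1) := by
      rw [sym_succ q T hk, num, mul_smul_comm, mul_add, i2, mul_smul_comm, ← mul_assoc, ← mul_assoc,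
        i2]
    have a3 : sym q T (k + 1) * sym q T (k + 1) = sym q T (k + 1) := by
      conv_lhs => arg 1; rw [sym_succ q T hk, num]
      rw [smul_mul_assoc, add_mul, a2, smul_mul_assoc, mul_assoc, a2, mul_assoc,
        a1 k hk (by omega), mul_smul_comm, a2, smul_smul]
      rw [show sym q T (k + 1) + (qn q k * q) • sym q T (k + 1) = qn q (k + 1) • sym q T (k + 1) by
        rw [qn_succ']; module, smul_smul, inv_mul_cancel₀ h00, one_smul]
    refine ⟨a1, a3, fun h i h1 h2 => ?_⟩
    rcases Nat.lt_or_ge i (k + 1) with hi | hi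
    · rw [num, mul_add, a1 i h1 hi, mul_smul_comm, ← mul_assoc, ← mul_assoc, a1 i h1 hi]
      simp only [smul_mul_assoc]; module
    · obtain rfl : i = k + 1 := by omega
      exact T_mul_num_aux hT hk h h00 (a1 k hk (by omega)) a2

theorem sym_props_op {q : F} {n : ℕ} {T : ℕ → E} (hT : HeckeRel q n T) {k : ℕ} (hk : 1 ≤ k)
    (hkn : k ≤ n) (h0 : ∀ j, 1 ≤ j → j ≤ k → qn q j ≠ 0) :
    (∀ i, 1 ≤ i → i < k → sym q T k * T i = q • sym q T k) ∧
      (k < n → ∀ i, 1 ≤ i → i ≤ k → num q T k * T i = q • num q T k) := by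
  obtain ⟨h1, -, h3⟩ := sym_props hT.op hk hkn h0
  refine ⟨fun i hi hi' => ?_, fun h i hi hi' => ?_⟩
  · have := h1 i hi hi'
    rw [sym_op] at this
    exact congrArg MulOpposite.unop this
  · have := h3 h i hi hi'
    rw [num_op] at this
    exact congrArg MulOpposite.unop this

theorem num_sq {q : F} {n : ℕ} {T : ℕ → E} (hT : HeckeRel q n T) {k : ℕ} (hk : 1 ≤ k)
    (hkn : k < n) (h0 : ∀ j, 1 ≤ j → j ≤ k → qn q j ≠ 0) :
    num q T k * num q T k = qn q (k + 1) • num q T k := by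
  obtain ⟨h1, h2, h3⟩ := sym_props hT hk hkn.le h0
  have h4 : sym q T k * num q T k = num q T k := by
    rw [num, mul_add, h2, mul_smul_comm, ← mul_assoc, ← mul_assoc, h2]
  conv_lhs => arg 1; rw [num]
  rw [add_mul, smul_mul_assoc, mul_assoc, mul_assoc, h4, h3 hkn k hk le_rfl, mul_smul_comm, h4,
    qn_succ']
  module

end sym
end HeckeA

namespace HeckeA

/-! ### The canonical trace -/

section trace
variable {F : Type} [Field F]

/-- The simple transposition of `i` and `i + 1`. -/
def sw (i : ℕ) : Equiv.Perm ℕ := Equiv.swap i (i + 1)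

/-- Action of the generator `T_i` on functions on permutations. -/
def opM (q : F) (i : ℕ) : Module.End F (Equiv.Perm ℕ → F) where
  toFun g p := if p i < p (i + 1) then q * g (p * sw i) else g (p * sw i) + (q - 1) * g p
  map_add' g h := by ext p; simp only [Pi.add_apply]; split_ifs <;> ring
  map_smul' c g := by
    ext p; simp only [Pi.smul_apply, smul_eq_mul, RingHom.id_apply]; split_ifs <;> ring

/-- The mirror image of `opM`, which commutes with it. -/
def opR (q : F) (j : ℕ) : Module.End F (Equiv.Perm ℕ → F) where
  toFun g p := if p⁻¹ j < p⁻¹ (j + 1) then q * g (sw j * p) else g (sw j * p) + (q - 1) * g p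
  map_add' g h := by ext p; simp only [Pi.add_apply]; split_ifs <;> ring
  map_smul' c g := by
    ext p; simp only [Pi.smul_apply, smul_eq_mul, RingHom.id_apply]; split_ifs <;> ring

theorem opM_apply (q : F) (i : ℕ) (g : Equiv.Perm ℕ → F) (p : Equiv.Perm ℕ) :
    opM q i g p = if p i < p (i + 1) then q * g (p * sw i) else g (p * sw i) + (q - 1) * g p := rfl

theorem opR_apply (q : F) (i : ℕ) (g : Equiv.Perm ℕ → F) (p : Equiv.Perm ℕ) :
    opR q i g p =
      if p⁻¹ i < p⁻¹ (i + 1) then q * g (sw i * p) else g (sw i * p) + (q - 1) * g p := rfl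

theorem sw_sq (i : ℕ) : sw i * sw i = 1 := Equiv.swap_mul_self _ _

theorem sw_sq' (p : Equiv.Perm ℕ) (i : ℕ) : p * sw i * sw i = p := by rw [mul_assoc, sw_sq, mul_one]

theorem sw_left (i : ℕ) : sw i i = i + 1 := Equiv.swap_apply_left _ _
theorem sw_right (i : ℕ) : sw i (i + 1) = i := Equiv.swap_apply_right _ _
theorem sw_of_ne {i j : ℕ} (h : j ≠ i) (h' : j ≠ i + 1) : sw i j = j :=
  Equiv.swap_apply_of_ne_of_ne h h'

theorem opM_rel (q : F) (n : ℕ) : HeckeRel q n (opM q) := by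
  have hne : ∀ (p : Equiv.Perm ℕ) {a b : ℕ}, a ≠ b → p a ≠ p b := fun p a b h h' =>
    h (p.injective h')
  refine ⟨fun i _ _ => ?_, fun i _ _ => ?_, fun i j _ h _ => ?_⟩
  · ext g p
    have h1 := hne p (show i ≠ i + 1 by omega)
    simp only [Module.End.mul_apply, LinearMap.add_apply, LinearMap.smul_apply, Pi.add_apply,
      Pi.smul_apply, opM_apply, Equiv.Perm.mul_apply, sw_left, sw_right, sw_sq',
      Module.End.one_apply, smul_eq_mul]
    rcases lt_or_gt_of_ne h1 with h2 | h2
    · simp [h2, h2.not_gt]; ring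
    · simp [h2, h2.not_gt]; ring
  · ext g p
    have h1 := hne p (show i ≠ i + 1 by omega)
    have h2 := hne p (show i + 1 ≠ i + 1 + 1 by omega)
    have h3 := hne p (show i ≠ i + 1 + 1 by omega)
    have a1 : sw i (i + 1 + 1) = i + 1 + 1 := sw_of_ne (by omega) (by omega)
    have a2 : sw (i + 1) i = i := sw_of_ne (by omega) (by omega)
    have hb : p * sw (i + 1) * sw i * sw (i + 1) = p * sw i * sw (i + 1) * sw i := by
      rw [mul_assoc, mul_assoc, mul_assoc, mul_assoc]
      congr 1
      ext x
      simp only [Equiv.Perm.mul_apply]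
      by_cases x1 : x = i
      · subst x1; simp only [sw_left, a1, a2]
      by_cases x2 : x = i + 1
      · subst x2; simp only [sw_left, sw_right, a1, a2]
      by_cases x3 : x = i + 1 + 1
      · subst x3; simp only [sw_right, a1, a2]
      · rw [sw_of_ne (i := i + 1) x2 x3, sw_of_ne x1 x2, sw_of_ne x2 x3, sw_of_ne x1 x2]
    simp only [Module.End.mul_apply, opM_apply, Equiv.Perm.mul_apply, sw_left, sw_right, sw_sq',
      a1, a2, hb]
    rcases lt_or_gt_of_ne h1 with h1 | h1 <;> rcases lt_or_gt_of_ne h2 with h2 | h2 <;>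
      rcases lt_or_gt_of_ne h3 with h3 | h3 <;>
      first
        | omega
        | (simp only [h1, h2, h3, h1.not_gt, h2.not_gt, h3.not_gt, if_true, if_false]; done)
        | (simp only [h1, h2, h3, h1.not_gt, h2.not_gt, h3.not_gt, if_true, if_false]; ring)
  · ext g p
    have a1 : sw j i = i := sw_of_ne (by omega) (by omega)
    have a2 : sw j (i + 1) = i + 1 := sw_of_ne (by omega) (by omega)
    have a3 : sw i j = j := sw_of_ne (by omega) (by omega)
    have a4 : sw i (j + 1) = j + 1 := sw_of_ne (by omega) (by omega)
    have hb : p * sw i * sw j = p * sw j * sw i := by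
      rw [mul_assoc, mul_assoc]
      congr 1
      exact (Equiv.Perm.disjoint_swap_swap (by simp; omega)).commute.eq
    simp only [Module.End.mul_apply, opM_apply, Equiv.Perm.mul_apply, a1, a2, a3, a4, hb]
    split_ifs <;> ring

/-- A simple transposition preserves the order of a pair other than `{i, i + 1}`. -/
theorem sw_lt {i a b : ℕ} (h : ¬ ((a = i ∧ b = i + 1) ∨ (a = i + 1 ∧ b = i))) :
    sw i a < sw i b ↔ a < b := by
  unfold sw
  simp only [Equiv.swap_apply_def]
  split_ifs <;> omega

theorem opM_opR (q : F) (i j : ℕ) : Commute (opM q i) (opR q j) := by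
  ext g p
  simp only [Module.End.mul_apply]
  by_cases hc : (p i = j ∧ p (i + 1) = j + 1) ∨ (p i = j + 1 ∧ p (i + 1) = j)
  · have hs : p * sw i = sw j * p := by
      have h1 : p * sw i = Equiv.swap (p i) (p (i + 1)) * p := Equiv.mul_swap_eq_swap_mul _ _ _
      rw [h1]
      rcases hc with ⟨h2, h3⟩ | ⟨h2, h3⟩
      · rw [h2, h3]; rfl
      · rw [h2, h3, Equiv.swap_comm]; rfl
    have key : ∀ p : Equiv.Perm ℕ, p * sw i = sw j * p →
        ((p i = j ∧ p (i + 1) = j + 1) ∨ (p i = j + 1 ∧ p (i + 1) = j)) →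
        ∀ g : Equiv.Perm ℕ → F, opM q i g p = opR q j g p := by
      intro p hs hc g
      rw [opM_apply, opR_apply, hs]
      rcases hc with ⟨h2, h3⟩ | ⟨h2, h3⟩
      · have h4 : p⁻¹ j = i := by rw [← h2]; simp
        have h5 : p⁻¹ (j + 1) = i + 1 := by rw [← h3]; simp
        simp [h2, h3, h4, h5]
      · have h4 : p⁻¹ (j + 1) = i := by rw [← h2]; simp
        have h5 : p⁻¹ j = i + 1 := by rw [← h3]; simp
        simp [h2, h3, h4, h5]
    have hs' : (p * sw i) * sw i = sw j * (p * sw i) := by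
      rw [hs, mul_assoc, hs]
    have e1 := key _ hs hc
    have e2 := key (p * sw i) hs' (by
      simp only [Equiv.Perm.mul_apply, sw_left, sw_right]; tauto)
    have e3 : opM q i (opR q j g) p = opM q i (opM q i g) p := by
      rw [opM_apply, opM_apply, e1 g, e2 g]
    rw [e3, e1]
  · have hi1 : (sw j * p) i < (sw j * p) (i + 1) ↔ p i < p (i + 1) := by
      simp only [Equiv.Perm.mul_apply]
      exact sw_lt (by omega)
    have hj1 : (p * sw i)⁻¹ j < (p * sw i)⁻¹ (j + 1) ↔ p⁻¹ j < p⁻¹ (j + 1) := by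
      have : (sw i)⁻¹ = sw i := inv_eq_of_mul_eq_one_left (sw_sq i)
      rw [mul_inv_rev, this]
      simp only [Equiv.Perm.mul_apply]
      refine sw_lt fun h => hc ?_
      simp only [Equiv.Perm.inv_eq_iff_eq] at h
      rcases h with ⟨h2, h3⟩ | ⟨h2, h3⟩
      · exact Or.inl ⟨h2.symm, h3.symm⟩
      · exact Or.inr ⟨h3.symm, h2.symm⟩
    rw [opM_apply, opR_apply, opR_apply, opR_apply, opM_apply, opM_apply]
    simp only [hi1, hj1, mul_assoc]
    split_ifs <;> ring

open Classical in
/-- The indicator function of the identity permutation. -/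
noncomputable def e1 : Equiv.Perm ℕ → F := fun p => if p = 1 then 1 else 0

theorem sw_inv (i : ℕ) : (sw i)⁻¹ = sw i := inv_eq_of_mul_eq_one_left (sw_sq i)

theorem op_e1 (q : F) (i : ℕ) : opM q i e1 = opR q i e1 := by
  ext p
  rw [opM_apply, opR_apply]
  have h1 : p * sw i = 1 ↔ p = sw i := by rw [mul_eq_one_iff_eq_inv, sw_inv]
  have h2 : sw i * p = 1 ↔ p = sw i := by rw [mul_eq_one_iff_inv_eq, sw_inv, eq_comm]
  by_cases h4 : p = sw i
  · subst h4
    have h5 : sw i ≠ 1 := fun h => by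
      have := sw_left i
      rw [h] at this
      simp at this
    simp [sw_inv, sw_left, sw_right, sw_sq, e1]
  · have a1 : (e1 (p * sw i) : F) = 0 := if_neg (mt h1.mp h4)
    have a2 : (e1 (sw i * p) : F) = 0 := if_neg (mt h2.mp h4)
    rw [a1, a2]
    by_cases h3 : p = 1
    · subst h3; simp
    · have a3 : (e1 p : F) = 0 := if_neg h3
      simp [a3]

theorem op_one (q : F) (i : ℕ) (g : Equiv.Perm ℕ → F) : opM q i g 1 = opR q i g 1 := by
  rw [opM_apply, opR_apply]; simp

/-- The canonical symmetrizing trace of the Hecke algebra of `S_n`. The second property says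
that it vanishes on `T_k h` when `h` lies in the maximal parabolic subalgebra omitting `k`. -/
theorem exists_trace (n : ℕ) (hn : 1 ≤ n) (q Q₁ : F) : ∃ τ : AK n q Q₁ →ₗ[F] F,
    τ 1 = 1 ∧ (∀ a b, τ (a * b) = τ (b * a)) ∧ ∀ k, 1 ≤ k → k < n →
      ∀ h ∈ Algebra.adjoin F {x | ∃ i, 1 ≤ i ∧ i < n ∧ i ≠ k ∧ x = tau n q Q₁ i},
        τ (tau n q Q₁ k * h) = 0 := by
  obtain ⟨φ, hφ⟩ := exists_lift (Q₁ := Q₁) (opM_rel q n)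
  let τ : AK n q Q₁ →ₗ[F] F :=
    LinearMap.proj (1 : Equiv.Perm ℕ) ∘ₗ LinearMap.applyₗ (e1 : Equiv.Perm ℕ → F) ∘ₗ φ.toLinearMap
  have hτ : ∀ a, τ a = φ a e1 1 := fun a => rfl
  refine ⟨τ, by simp [hτ, e1], ?_, ?_⟩
  · let S : Subalgebra F (AK n q Q₁) :=
      { carrier := {a | ∀ b, τ (a * b) = τ (b * a)}
        mul_mem' := by
          intro x y hx hy b
          rw [mul_assoc, hx, mul_assoc, hy, mul_assoc]
        add_mem' := by
          intro x y hx hy b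
          rw [add_mul, mul_add, map_add, map_add, hx, hy]
        algebraMap_mem' := by
          intro r b
          rw [Algebra.commutes] }
    have hS : S = ⊤ := by
      rw [eq_top_iff, ← Hsub_tau n q Q₁ hn]
      refine Algebra.adjoin_le ?_
      rintro _ ⟨i, h1, h2, rfl⟩ b
      rw [hτ, hτ, map_mul, map_mul, hφ i h1 h2, Module.End.mul_apply, Module.End.mul_apply, op_one,
        op_e1]
      have hc : Commute (opR q i) (φ b) := by
        have hb : b ∈ Hsub F (tau n q Q₁) n := by rw [Hsub_tau n q Q₁ hn]; trivial
        induction hb using Algebra.adjoin_induction with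
        | mem x hx =>
          obtain ⟨j, j1, j2, rfl⟩ := hx
          rw [hφ j j1 j2]
          exact (opM_opR q j i).symm
        | algebraMap r => rw [AlgHom.commutes]; exact (Algebra.commutes r _).symm
        | add x y _ _ hx hy => rw [map_add]; exact hx.add_right hy
        | mul x y _ _ hx hy => rw [map_mul]; exact hx.mul_right hy
      rw [← Module.End.mul_apply, ← Module.End.mul_apply, hc.eq]
    intro a b
    have : a ∈ S := by rw [hS]; trivial
    exact this b
  · intro k hk1 hkn h hh
    let B : Submodule F (Equiv.Perm ℕ → F) :=
      { carrier := {g | ∀ p : Equiv.Perm ℕ, g p ≠ 0 → ∀ i, i ≤ k ↔ p i ≤ k}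
        zero_mem' := by intro p hp; simp at hp
        add_mem' := by
          intro x y hx hy p hp
          by_cases h0 : x p = 0
          · exact hy p fun h1 => hp (by simp [h0, h1])
          · exact hx p h0
        smul_mem' := by
          intro c x hx p hp
          exact hx p fun h1 => hp (by simp [h1]) }
    have hB : ∀ g ∈ B, φ h g ∈ B := by
      induction hh using Algebra.adjoin_induction with
      | mem x hx =>
        obtain ⟨i, h1, h2, h3, rfl⟩ := hx
        intro g hg p hp
        rw [hφ i h1 h2, opM_apply] at hp
        by_cases h0 : g p = 0
        · have h4 : g (p * sw i) ≠ 0 := fun h4 => hp (by simp [h0, h4])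
          intro j
          have h5 := hg _ h4 (sw i j)
          rw [← Equiv.Perm.mul_apply, sw_sq'] at h5
          rw [← h5]
          unfold sw
          rw [Equiv.swap_apply_def]
          split_ifs <;> omega
        · exact hg p h0
      | algebraMap r =>
        intro g hg
        rw [AlgHom.commutes]
        exact B.smul_mem r hg
      | add x y _ _ hx hy => intro g hg; rw [map_add]; exact B.add_mem (hx g hg) (hy g hg)
      | mul x y _ _ hx hy => intro g hg; rw [map_mul]; exact hx _ (hy g hg)
    have he : e1 ∈ B := by
      intro p hp i
      have : p = 1 := by by_contra h0; exact hp (by simp [e1, h0])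
      subst this; simp
    rw [hτ, map_mul, hφ k hk1 hkn, Module.End.mul_apply, opM_apply]
    have h6 : φ h e1 (1 * sw k) = 0 := by
      by_contra h7
      have := hB _ he _ h7 k
      rw [one_mul, sw_left] at this
      omega
    rw [h6]; simp

end trace
end HeckeA

namespace HeckeA

/-! ### Infinite representation type for `n ≥ 2e` -/

section inf
variable {F : Type} [Field F]

theorem sym_tw {V W : Type} [AddCommGroup V] [Module F V] [AddCommGroup W] [Module F W] {q : F}
    {T : ℕ → Module.End F V} {T' : ℕ → Module.End F W} {f : V →ₗ[F] W} {k : ℕ}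
    (hf : Tw k T T' f) : ∀ v, f (sym q T k v) = sym q T' k (f v) := by
  induction k with
  | zero => intro v; rfl
  | succ k ih =>
    rcases Nat.eq_zero_or_pos k with rfl | hk
    · intro v; rfl
    have h1 := ih (hf.mono (by omega))
    intro v
    rw [sym_succ q T hk, sym_succ q T' hk, num, num]
    simp only [LinearMap.smul_apply, LinearMap.add_apply, Module.End.mul_apply, map_smul, map_add,
      h1, hf k hk (by omega)]

theorem num_tw {V W : Type} [AddCommGroup V] [Module F V] [AddCommGroup W] [Module F W] {q : F}
    {T : ℕ → Module.End F V} {T' : ℕ → Module.End F W} {f : V →ₗ[F] W} {k : ℕ} (hk : 1 ≤ k)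
    (hf : Tw (k + 1) T T' f) (v : V) : f (num q T k v) = num q T' k (f v) := by
  have h1 := sym_tw (q := q) (hf.mono (Nat.le_succ k))
  rw [num, num]
  simp only [LinearMap.smul_apply, LinearMap.add_apply, Module.End.mul_apply, map_smul, map_add,
    h1, hf k hk (by omega)]

/-- The parameter `lam` occurs in `M`: writing `X`, `Y` for the two commuting square-zero
elements attached to `T 1, …, T (e-1)` and to `T (e+1), …, T (2e-1)`, there are a vector `v` and a
linear form `φ` with `Y v = lam X v`, `φ Y = lam φ X` and `φ (X v) ≠ 0`. -/
def Lam (q : F) (e : ℕ) (M : FRep F) (lam : F) : Prop :=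
  ∃ (v : M.V) (φ : M.V →ₗ[F] F),
    num q (fun i => M.T (i + e)) (e - 1) v = lam • num q M.T (e - 1) v ∧
    (∀ w, φ (num q (fun i => M.T (i + e)) (e - 1) w) = lam * φ (num q M.T (e - 1) w)) ∧
    φ (num q M.T (e - 1) v) ≠ 0

theorem Lam.finite {q : F} {e : ℕ} (M : FRep F) (hM : FiniteDimensional F M.V) :
    {lam | Lam q e M lam}.Finite := by
  choose! v φ h1 h2 h3 using fun lam (h : Lam q e M lam) => h
  have hind : LinearIndependent F
      (fun l : {lam | Lam q e M lam} => num q M.T (e - 1) (v l.1)) := by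
    rw [linearIndependent_iff']
    intro s g hg i hi
    have h4 := congrArg (φ i.1) hg
    rw [map_sum, map_zero, Finset.sum_eq_single i] at h4
    · rw [map_smul, smul_eq_mul] at h4
      exact (mul_eq_zero.mp h4).resolve_right (h3 i.1 i.2)
    · intro j _ hji
      have h5 := h2 i.1 i.2 (v j.1)
      rw [h1 j.1 j.2, map_smul, smul_eq_mul] at h5
      have h6 : j.1 - i.1 ≠ 0 := fun h => hji (Subtype.ext (sub_eq_zero.mp h))
      have h7 : (j.1 - i.1) * φ i.1 (num q M.T (e - 1) (v j.1)) = 0 := by rw [sub_mul, h5, sub_self]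
      rw [map_smul, (mul_eq_zero.mp h7).resolve_left h6, smul_zero]
    · exact fun h => absurd hi h
  have := hind.finite
  exact Set.toFinite _

theorem tw_shift {V W : Type} [AddCommGroup V] [Module F V] [AddCommGroup W] [Module F W] {n e : ℕ}
    {T : ℕ → Module.End F V} {T' : ℕ → Module.End F W} {f : V →ₗ[F] W} (hf : Tw n T T' f)
    (hn : 2 * e ≤ n) : Tw (e - 1 + 1) (fun i => T (i + e)) (fun i => T' (i + e)) f :=
  fun j h1 h2 => hf (j + e) (by omega) (by omega)

theorem Lam.piece {q : F} {n e : ℕ} (he : 2 ≤ e) (hn : 2 * e ≤ n) {M : FRep F} {lam : F}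
    (h : Lam q e M lam) {ι : Type} [Fintype ι] (D : ι → Piece n M)
    (hD : ∑ i, (D i).e = LinearMap.id) : ∃ i, Lam q e (D i).Y lam := by
  obtain ⟨v, φ, h1, h2, h3⟩ := h
  have hv : v = ∑ i, (D i).inc ((D i).pr v) := by
    have := LinearMap.congr_fun hD v
    simp only [LinearMap.sum_apply, LinearMap.id_apply] at this
    exact this.symm
  have h4 : ∃ i, φ (num q M.T (e - 1) ((D i).inc ((D i).pr v))) ≠ 0 := by
    by_contra hcon
    push Not at hcon
    apply h3
    conv_lhs => rw [hv]
    rw [map_sum, map_sum]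
    exact Finset.sum_eq_zero fun i _ => hcon i
  obtain ⟨i, hi⟩ := h4
  have a1 := fun w => num_tw (q := q) (k := e - 1) (by omega)
    ((D i).tw_inc.mono (show e - 1 + 1 ≤ n by omega)) w
  have a2 := fun w => num_tw (q := q) (k := e - 1) (by omega)
    ((D i).tw_pr.mono (show e - 1 + 1 ≤ n by omega)) w
  have a3 := fun w => num_tw (q := q) (k := e - 1) (by omega) (tw_shift (D i).tw_inc hn) w
  have a4 := fun w => num_tw (q := q) (k := e - 1) (by omega) (tw_shift (D i).tw_pr hn) w
  refine ⟨i, (D i).pr v, φ ∘ₗ (D i).inc, ?_, fun w => ?_, ?_⟩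
  · rw [← a4, ← a2, h1, map_smul]
  · rw [LinearMap.comp_apply, LinearMap.comp_apply, a3, a1, h2]
  · rw [LinearMap.comp_apply, a1]; exact hi

theorem Lam.iso {q : F} {n e : ℕ} (he : 2 ≤ e) (hn : 2 * e ≤ n) {M N : FRep F} {lam : F}
    (h : Lam q e M lam) (hi : M.Iso n N) : Lam q e N lam := by
  obtain ⟨f, hf⟩ := hi
  obtain ⟨v, φ, h1, h2, h3⟩ := h
  have a1 := fun w => num_tw (q := q) (k := e - 1) (by omega) (hf.mono (show e - 1 + 1 ≤ n by omega)) w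
  have a2 := fun w => num_tw (q := q) (k := e - 1) (by omega) (tw_shift hf hn) w
  have b1 := fun w => num_tw (q := q) (k := e - 1) (by omega)
    (hf.symm.mono (show e - 1 + 1 ≤ n by omega)) w
  have b2 := fun w => num_tw (q := q) (k := e - 1) (by omega) (tw_shift hf.symm hn) w
  have hfs : f.symm.toLinearMap (f.toLinearMap v) = v := by simp
  refine ⟨f.toLinearMap v, φ ∘ₗ f.symm.toLinearMap, ?_, fun w => ?_, ?_⟩
  · rw [← a2, ← a1, h1, map_smul]
  · rw [LinearMap.comp_apply, LinearMap.comp_apply, b1, b2, h2]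
  · rw [LinearMap.comp_apply, b1, hfs]; exact h3

/-- The trace of `sym k * z` is a nonzero multiple of the trace of `z`, for `z` in the parabolic
subalgebra of the other generators. -/
theorem trace_sym {n : ℕ} {q Q₁ : F} {τ : AK n q Q₁ →ₗ[F] F} (hτ : ∀ a b, τ (a * b) = τ (b * a))
    (hk0 : ∀ k, 1 ≤ k → k < n →
      ∀ h ∈ Algebra.adjoin F {x | ∃ i, 1 ≤ i ∧ i < n ∧ i ≠ k ∧ x = tau n q Q₁ i},
        τ (tau n q Q₁ k * h) = 0) (s m : ℕ) (hm : s + m < n) (h0 : ∀ j, 1 ≤ j → j ≤ m → qn q j ≠ 0)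
    (z : AK n q Q₁)
    (hz : z ∈ Algebra.adjoin F
      {x | ∃ i, 1 ≤ i ∧ i < n ∧ (i ≤ s ∨ s + m < i) ∧ x = tau n q Q₁ i}) (hz0 : τ z ≠ 0) :
    ∀ k, 1 ≤ k → k ≤ m → τ (sym q (fun i => tau n q Q₁ (i + s)) k * z) ≠ 0 ∧
      τ (num q (fun i => tau n q Q₁ (i + s)) k * z) ≠ 0 := by
  have hnum : ∀ k, 1 ≤ k → k ≤ m → τ (num q (fun i => tau n q Q₁ (i + s)) k * z)
      = τ (sym q (fun i => tau n q Q₁ (i + s)) k * z) := by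
    intro k h1 h2
    have hmem := hk0 (k + s) (by omega) (by omega) (sym q (fun i => tau n q Q₁ (i + s)) k *
      z * sym q (fun i => tau n q Q₁ (i + s)) k)
    have hsm := sym_mem q (fun i => tau n q Q₁ (i + s))
      (Algebra.adjoin F {x | ∃ i, 1 ≤ i ∧ i < n ∧ i ≠ k + s ∧ x = tau n q Q₁ i}) k
      fun i i1 i2 => Algebra.subset_adjoin ⟨i + s, by omega, by omega, by omega, rfl⟩
    have hzm : z ∈ Algebra.adjoin F {x | ∃ i, 1 ≤ i ∧ i < n ∧ i ≠ k + s ∧ x = tau n q Q₁ i} := by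
      refine Algebra.adjoin_mono ?_ hz
      rintro x ⟨i, i1, i2, i3, rfl⟩
      exact ⟨i, i1, i2, by omega, rfl⟩
    have := hmem (mul_mem (mul_mem hsm hzm) hsm)
    rw [← mul_assoc, hτ, ← mul_assoc, ← mul_assoc] at this
    rw [num, add_mul, map_add, smul_mul_assoc, map_smul, this, smul_zero, add_zero]
  intro k hk hkm
  suffices h : τ (sym q (fun i => tau n q Q₁ (i + s)) k * z) ≠ 0 from ⟨h, by rwa [hnum k hk hkm]⟩
  induction k, hk using Nat.le_induction with
  | base => simpa [sym] using hz0
  | succ k hk ih =>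
    rw [sym_succ q _ hk, smul_mul_assoc, map_smul, hnum k hk (by omega)]
    exact smul_ne_zero (inv_ne_zero (h0 _ (by omega) hkm)) (ih (by omega))

theorem HeckeRel.shift {E : Type} [Ring E] [Algebra F E] {q : F} {n m s : ℕ} {T : ℕ → E}
    (hT : HeckeRel q n T) (hm : m + s ≤ n) : HeckeRel q m (fun i => T (i + s)) := by
  refine ⟨fun i h1 h2 => hT.quad _ (by omega) (by omega), fun i h1 h2 => ?_,
    fun i j h1 h2 h3 => hT.comm _ _ (by omega) (by omega) (by omega)⟩
  have := hT.braid (i + s) (by omega) (by omega)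
  have e : i + 1 + s = i + s + 1 := by omega
  simp only [e]; exact this

/-- The Hecke algebra with its canonical trace, and the elements `X`, `Y` attached to
`T 1, …, T (e-1)` and to `T (e+1), …, T (2e-1)`. -/
theorem exists_sym_alg {n e : ℕ} (he : 2 ≤ e) (hn : 2 * e ≤ n) {q : F} (hq : IsPrimitiveRoot q e) :
    ∃ (A : Type) (_ : Ring A) (_ : Algebra F A) (t : ℕ → A) (τ : A →ₗ[F] F), Module.Finite F A ∧
      HeckeRel q n t ∧ (∀ a b, τ (a * b) = τ (b * a)) ∧
      τ (num q t (e - 1) * num q (fun i => t (i + e)) (e - 1)) ≠ 0 := by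
  obtain ⟨τ, t1, t2, t3⟩ := exists_trace n (by omega) q (1 : F)
  have h0 : ∀ j, 1 ≤ j → j ≤ e - 1 → qn q j ≠ 0 := fun j h1 h2 => qn_ne hq h1 (by omega)
  refine ⟨AK n q (1 : F), inferInstance, inferInstance, tau n q 1, τ, AK_finite n q 1 (by omega),
    tau_rel n q 1, t2, ?_⟩
  have hYm : num q (fun i => tau n q (1 : F) (i + e)) (e - 1) ∈ Algebra.adjoin F
      {x | ∃ i, 1 ≤ i ∧ i < n ∧ (i ≤ 0 ∨ 0 + (e - 1) < i) ∧ x = tau n q (1 : F) i} :=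
    num_mem q _ _ (by omega) fun i i1 i2 =>
      Algebra.subset_adjoin ⟨i + e, by omega, by omega, by omega, rfl⟩
  have hτY : τ (num q (fun i => tau n q (1 : F) (i + e)) (e - 1)) ≠ 0 := by
    have := (trace_sym t2 t3 e (e - 1) (by omega) h0 1 (one_mem _) (by simp [t1]) (e - 1) (by omega)
      le_rfl).2
    rwa [mul_one] at this
  exact (trace_sym t2 t3 0 (e - 1) (by omega) h0 _ hYm hτY (e - 1) (by omega) le_rfl).2

/-- A representation in which `lam` occurs: the left ideal `{b | b Y = lam b X}`. -/
theorem exists_Lam {n e : ℕ} (he : 2 ≤ e) (hn : 2 * e ≤ n) {q : F} (hq : IsPrimitiveRoot q e)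
    (lam : F) : ∃ M : FRep F, FiniteDimensional F M.V ∧ HeckeRel q n M.T ∧ Lam q e M lam := by
  obtain ⟨A, _, _, t, τ, hfin, hrel, t2, hτ⟩ := exists_sym_alg he hn hq
  have h0 : ∀ j, 1 ≤ j → j ≤ e - 1 → qn q j ≠ 0 := fun j h1 h2 => qn_ne hq h1 (by omega)
  set X : A := num q t (e - 1) with hX
  set Y : A := num q (fun i => t (i + e)) (e - 1) with hY
  have hee : e - 1 + 1 = e := by omega
  have hXX : X * X = 0 := by
    rw [hX, num_sq hrel (by omega) (by omega) h0, hee, qn_e he hq, zero_smul]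
  have hYY : Y * Y = 0 := by
    rw [hY, num_sq (hrel.shift (m := e) (by omega)) (by omega) (by omega) h0, hee, qn_e he hq,
      zero_smul]
  have hXY : X * Y = Y * X := by
    refine (num_commute q _ _ (by omega) fun i i1 i2 => ?_).eq
    exact (num_commute q _ _ (by omega) fun j j1 j2 =>
      hrel.commute (by omega) (by omega) (by omega) (by omega) (by omega)).symm
  let N : Submodule F A :=
    { carrier := {b | b * Y = lam • (b * X)}
      zero_mem' := by simp
      add_mem' := by
        intro a b ha hb
        simp only [Set.mem_ofPred_eq] at *
        rw [add_mul, add_mul, ha, hb, smul_add]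
      smul_mem' := by
        intro c a ha
        simp only [Set.mem_ofPred_eq] at *
        rw [smul_mul_assoc, smul_mul_assoc, ha, smul_comm] }
  have hNmul : ∀ a, ∀ b ∈ N, a * b ∈ N := by
    intro a b hb
    change a * b * Y = lam • (a * b * X)
    rw [mul_assoc, show b * Y = lam • (b * X) from hb, mul_smul_comm, mul_assoc]
  let T : ℕ → Module.End F N := fun i => (LinearMap.mulLeft F (t i)).restrict (hNmul (t i))
  have hTw : Tw n T (fun i => Algebra.lmul F A (t i)) N.subtype := by
    intro j _ _ v; rfl
  have hrel' : HeckeRel q n (fun i => (Algebra.lmul F A) (t i)) := hrel.map _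
  refine ⟨⟨N, T⟩, inferInstanceAs (FiniteDimensional F N), hTw.hecke N.injective_subtype hrel', ?_⟩
  have aX : ∀ b : N, (num q T (e - 1) b).1 = X * b.1 := by
    intro b
    have := num_tw (q := q) (k := e - 1) (by omega) (hTw.mono (by omega)) b
    rw [← num_map] at this
    exact this
  have aY : ∀ b : N, (num q (fun i => T (i + e)) (e - 1) b).1 = Y * b.1 := by
    intro b
    have := num_tw (q := q) (k := e - 1) (by omega) (tw_shift hTw hn) b
    rw [← num_map q (fun i => t (i + e))] at this
    exact this
  have hv : Y + lam • X ∈ N := by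
    change (Y + lam • X) * Y = lam • ((Y + lam • X) * X)
    rw [add_mul, add_mul, hYY, smul_mul_assoc, smul_mul_assoc, hXX, hXY]; simp
  refine ⟨(⟨Y + lam • X, hv⟩ : N), τ ∘ₗ N.subtype, ?_, ?_, ?_⟩
  · apply Subtype.ext
    change (num q (fun i => T (i + e)) (e - 1) (⟨Y + lam • X, hv⟩ : N)).1
      = lam • (num q T (e - 1) (⟨Y + lam • X, hv⟩ : N)).1
    rw [aX, aY]
    simp only [mul_add, hYY, mul_smul_comm, hXX, hXY]; simp
  · intro w
    change τ (num q (fun i => T (i + e)) (e - 1) w).1 = lam * τ (num q T (e - 1) w).1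
    rw [aX, aY, t2, t2 X, show w.1 * Y = lam • (w.1 * X) from w.2, map_smul, smul_eq_mul]
  · change τ (num q T (e - 1) (⟨Y + lam • X, hv⟩ : N)).1 ≠ 0
    rw [aX]
    simp only [mul_add, mul_smul_comm, hXX]
    simpa using hτ

theorem not_FT [Infinite F] {n e : ℕ} (he : 2 ≤ e) (hn : 2 * e ≤ n) {q : F}
    (hq : IsPrimitiveRoot q e) : ¬ FT q n := by
  rintro ⟨κ, _, X, hX⟩
  have hfin : (⋃ i : {i : κ // FiniteDimensional F (X i).V},
      {lam | Lam q e (X i.1) lam}).Finite :=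
    Set.finite_iUnion fun i => Lam.finite _ i.2
  refine Set.infinite_univ (α := F) (hfin.subset fun lam _ => ?_)
  obtain ⟨M, h1, h2, h3⟩ := exists_Lam he hn hq lam
  obtain ⟨ι, _, D, hD⟩ := exists_decomp n M h1
  obtain ⟨i, hi⟩ := h3.piece he hn D hD
  obtain ⟨k, hk⟩ := hX (D i).Y ((D i).good h2) trivial
  have hfd : FiniteDimensional F (X k).V := by
    obtain ⟨f, -⟩ := hk
    have := (D i).fd
    exact Module.Finite.equiv f
  exact Set.mem_iUnion.mpr ⟨⟨k, hfd⟩, hi.iso he hn hk⟩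

end inf
end HeckeA

namespace HeckeA
open Polynomial

/-! ### Weights of representations that are not relatively projective -/

section bad
variable {F : Type} [Field F] {V W : Type} [AddCommGroup V] [Module F V] [AddCommGroup W]
  [Module F W] {q : F} {n : ℕ} {T : ℕ → Module.End F V} {T' : ℕ → Module.End F W}

/-- All relative traces of polynomials in the last Jucys-Murphy element are nilpotent. -/
def Bad (q : F) (n : ℕ) (T : ℕ → Module.End F V) : Prop :=
  ∀ p : F[X], IsNilpotent (tr q T T n (aeval (jm q T n) p) : Module.End F V)

theorem tw_aeval_jm (hT : HeckeRel q n T) (p : F[X]) : Tw (n - 1) T T (aeval (jm q T n) p) := by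
  rw [Tw.iff_commute]
  intro j h1 h2
  have h : Commute (T j) (jm q T n) := jm_commute_lo hT h1 (by omega) le_rfl
  have : Commute (T j) (aeval (jm q T n) p) := by
    induction p using Polynomial.induction_on' with
    | add p r hp hr => rw [map_add]; exact hp.add_right hr
    | monomial k c =>
      rw [aeval_monomial]
      exact (show Commute _ _ from (Algebra.commutes c (T j)).symm).mul_right (h.pow_right k)
  exact this.eq.symm

theorem relProj_of_not_bad (hq : q ≠ 0) (M : FRep F) (hM : M.Good q n) (h : ¬ Bad q n M.T) :
    RelProj q n M := by
  obtain ⟨hfd, hrel, hind⟩ := hM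
  unfold Bad at h
  push Not at h
  obtain ⟨p, hp⟩ := h
  have h1 := tw_aeval_jm hrel p
  exact ⟨_, h1, (fitting hind (tw_tr hq hrel hrel h1)).resolve_left hp⟩

theorem jm_tw {f : V →ₗ[F] W} {k : ℕ} (hf : Tw k T T' f) :
    ∀ v, f (jm q T k v) = jm q T' k (f v) := by
  induction k with
  | zero => intro v; rfl
  | succ k ih =>
    rcases Nat.eq_zero_or_pos k with rfl | hk
    · intro v; rfl
    have h1 := ih (hf.mono (by omega))
    intro v
    rw [jm_succ q T hk, jm_succ q T' hk]
    simp only [LinearMap.smul_apply, Module.End.mul_apply, map_smul, h1, hf k hk (by omega)]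

theorem pow_tw {f : V →ₗ[F] W} {a : Module.End F V} {b : Module.End F W}
    (h : ∀ v, f (a v) = b (f v)) (k : ℕ) : ∀ v, f ((a ^ k) v) = (b ^ k) (f v) := by
  induction k with
  | zero => intro v; rfl
  | succ k ih => intro v; rw [pow_succ, pow_succ]; simp only [Module.End.mul_apply, ih, h]

theorem aeval_tw {f : V →ₗ[F] W} {a : Module.End F V} {b : Module.End F W}
    (h : ∀ v, f (a v) = b (f v)) (p : F[X]) (v : V) : f (aeval a p v) = aeval b p (f v) := by
  induction p using Polynomial.induction_on' with
  | add p r hp hr => simp only [map_add, LinearMap.add_apply, hp, hr]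
  | monomial k c =>
    simp only [aeval_monomial, Module.End.mul_apply, Module.algebraMap_end_apply, map_smul,
      pow_tw h]

theorem bad_aux {f : V →ₗ[F] W} (hf : Tw n T T' f) (p : F[X]) :
    f ∘ₗ tr q T T n (aeval (jm q T n) p) = tr q T' T' n (aeval (jm q T' n) p) ∘ₗ f := by
  rw [← tr_comp_left hf, ← tr_comp_right hf]
  congr 1
  ext v
  exact aeval_tw (jm_tw hf) p v

theorem Bad.sub {f : V →ₗ[F] W} (hf : Tw n T T' f) (hi : Function.Injective f)
    (h : Bad q n T') : Bad q n T := by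
  intro p
  obtain ⟨k, hk⟩ := h p
  refine ⟨k, LinearMap.ext fun v => hi ?_⟩
  have h2 := pow_tw (fun v => LinearMap.congr_fun (bad_aux (q := q) hf p) v) k v
  rw [hk] at h2
  simpa using h2

theorem Bad.quot {f : V →ₗ[F] W} (hf : Tw n T T' f) (hs : Function.Surjective f)
    (h : Bad q n T) : Bad q n T' := by
  intro p
  obtain ⟨k, hk⟩ := h p
  refine ⟨k, LinearMap.ext fun w => ?_⟩
  obtain ⟨v, rfl⟩ := hs w
  have h2 := pow_tw (fun v => LinearMap.congr_fun (bad_aux (q := q) hf p) v) k v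
  rw [hk] at h2
  simpa using h2.symm

/-- `m` is a common eigenvector of the Jucys-Murphy elements with eigenvalues `a 1, …, a n`. -/
def IsWt (q : F) (n : ℕ) (T : ℕ → Module.End F V) (a : ℕ → F) (m : V) : Prop :=
  m ≠ 0 ∧ ∀ k, 1 ≤ k → k ≤ n → jm q T k m = a k • m

theorem exists_wt [IsAlgClosed F] [FiniteDimensional F V] [Nontrivial V] (hT : HeckeRel q n T) :
    ∃ a m, IsWt q n T a m := by
  suffices h : ∀ j ≤ n, ∃ a m, IsWt q j T a m from h n le_rfl
  intro j
  induction j with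
  | zero =>
    intro _
    obtain ⟨m, hm⟩ := exists_ne (0 : V)
    exact ⟨0, m, hm, fun k h1 h2 => by omega⟩
  | succ j ih =>
    intro hj
    obtain ⟨a, m, hm, ha⟩ := ih (by omega)
    let S : Submodule F V := ⨅ k ∈ Finset.Icc 1 j, LinearMap.ker (jm q T k - a k • 1)
    have hS : ∀ v, v ∈ S ↔ ∀ k, 1 ≤ k → k ≤ j → jm q T k v = a k • v := by
      intro v
      simp only [S, Submodule.mem_iInf, LinearMap.mem_ker, LinearMap.sub_apply, sub_eq_zero,
        Finset.mem_Icc, and_imp, LinearMap.smul_apply, Module.End.one_apply]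
    have hst : ∀ v ∈ S, jm q T (j + 1) v ∈ S := by
      intro v hv
      rw [hS] at *
      intro k h1 h2
      rw [← Module.End.mul_apply, (jm_commute_jm hT (by omega) hj).eq, Module.End.mul_apply,
        hv k h1 h2, map_smul]
    have : Nontrivial S := ⟨⟨⟨m, (hS m).mpr ha⟩, 0, fun h => hm (congrArg Subtype.val h)⟩⟩
    obtain ⟨b, hb⟩ := Module.End.exists_eigenvalue ((jm q T (j + 1)).restrict hst)
    obtain ⟨v, hv⟩ := hb.exists_hasEigenvector
    refine ⟨fun k => if k = j + 1 then b else a k, v.1, fun h => hv.2 (Subtype.ext h),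
      fun k h1 h2 => ?_⟩
    by_cases hk : k = j + 1
    · subst hk
      have := congrArg Subtype.val hv.apply_eq_smul
      simpa using this
    · simp only [if_neg hk]
      exact (hS v.1).mp v.2 k h1 (by omega)

theorem exists_inv_poly [FiniteDimensional F V] (L : Module.End F V) (u : F)
    (hu : u ∉ spectrum F L) : ∃ p : F[X], aeval L p * (u • 1 - L) = 1 ∧
      (u • 1 - L) * aeval L p = 1 := by
  have hP : (minpoly F L).eval u ≠ 0 := fun h =>
    hu (Module.End.HasEigenvalue.mem_spectrum (Module.End.hasEigenvalue_of_isRoot h))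
  have h1 := congrArg (aeval L) (X_sub_C_mul_divByMonic_eq_sub_modByMonic (minpoly F L) u)
  rw [modByMonic_X_sub_C_eq_C_eval, map_mul, map_sub, map_sub, minpoly.aeval, aeval_C, aeval_C,
    aeval_X, zero_sub] at h1
  set S := minpoly F L /ₘ (X - C u)
  have hc : aeval L S * L = L * aeval L S := by
    have : aeval L (S * X) = aeval L (X * S) := by rw [mul_comm]
    simpa using this
  have h2 : (u • 1 - L) * aeval L S = (minpoly F L).eval u • 1 := by
    rw [← Algebra.algebraMap_eq_smul_one, ← Algebra.algebraMap_eq_smul_one,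
      ← neg_sub, neg_mul, h1, neg_neg]
  refine ⟨C ((minpoly F L).eval u)⁻¹ * S, ?_, ?_⟩
  · rw [map_mul, aeval_C, mul_assoc, mul_sub, hc, mul_smul_comm, mul_one]
    have h3 : u • aeval L S - L * aeval L S = (minpoly F L).eval u • 1 := by
      rw [← h2, sub_mul, smul_mul_assoc, one_mul]
    rw [h3, ← Algebra.algebraMap_eq_smul_one, ← map_mul, inv_mul_cancel₀ hP, map_one]
  · rw [map_mul, aeval_C, ← mul_assoc, ← Algebra.commutes, mul_assoc, h2,
      ← Algebra.algebraMap_eq_smul_one, ← map_mul, inv_mul_cancel₀ hP, map_one]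

/-- The relative traces of the resolvents of the Jucys-Murphy elements, on a weight vector. -/
theorem trace_wt (hq : q ≠ 0) (hT : HeckeRel q n T) {a : ℕ → F} {m : V} (hm : IsWt q n T a m)
    {u : F} {r : ℕ → Module.End F V} (hr : ∀ k ≤ n, r k * (u • 1 - jm q T k) = 1)
    (hr' : ∀ k ≤ n, (u • 1 - jm q T k) * r k = 1) (k : ℕ) (hk : k ≤ n) :
    ∃ g : F, tr q T T k (r k) m = g • m ∧
      ((u - 1) - u * (q - 2 + q⁻¹) * g) * ∏ j ∈ Finset.range k, (u - a (j + 1)) ^ 2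
        = (u - 1) * ∏ j ∈ Finset.range k, (u - q * a (j + 1)) * (u - q⁻¹ * a (j + 1)) := by
  induction k with
  | zero => exact ⟨0, by simp [tr], by simp⟩
  | succ k ih =>
    obtain ⟨g, h1, h2⟩ := ih (by omega)
    have hL := hm.2 (k + 1) (by omega) hk
    set b := a (k + 1)
    have hs1 : (u - b) • r (k + 1) m = m := by
      have := LinearMap.congr_fun (hr (k + 1) hk) m
      simp only [Module.End.mul_apply, LinearMap.sub_apply, LinearMap.smul_apply,
        Module.End.one_apply, hL, map_sub, map_smul] at this
      rw [sub_smul]; exact this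
    have hub : u - b ≠ 0 := fun h => hm.1 (by rw [← hs1, h, zero_smul])
    have hs : r (k + 1) m = (u - b)⁻¹ • m := by
      rw [← hs1, smul_smul, inv_mul_cancel₀ hub, one_smul, hs1]
    have hlift := trace_resolvent hq (hT.mono hk) u
      (hr k (by omega)) (hr' k (by omega)) (hr (k + 1) hk) (hr' (k + 1) hk)
    refine ⟨g + b * ((u - 1) - u * (q - 2 + q⁻¹) * g) / (u - b) ^ 2, ?_, ?_⟩
    · rw [hlift]
      simp only [LinearMap.add_apply, Module.End.mul_apply, hs, map_smul, LinearMap.sub_apply,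
        LinearMap.smul_apply, Module.End.one_apply, h1, hL, smul_smul, ← sub_smul,
        ← add_smul]
      congr 1
      field_simp
    · rw [Finset.prod_range_succ, Finset.prod_range_succ, ← mul_assoc (u - 1), ← h2]
      change _ * (_ * (u - b) ^ 2) = _ * ((u - q * b) * (u - q⁻¹ * b))
      field_simp
      ring

theorem wt_poly [IsAlgClosed F] [FiniteDimensional F V] (hq : q ≠ 0) (hT : HeckeRel q n T)
    (hB : Bad q n T) {a : ℕ → F} {m : V} (hm : IsWt q n T a m) :
    ∏ j ∈ Finset.range n, (X - C (a (j + 1))) ^ 2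
      = ∏ j ∈ Finset.range n, (X - C (q * a (j + 1))) * (X - C (q⁻¹ * a (j + 1))) := by
  have hfin : ({1} ∪ ⋃ k ∈ Finset.range (n + 1), spectrum F (jm q T k)).Finite := by
    refine (Set.finite_singleton 1).union ?_
    exact Set.Finite.biUnion (Finset.finite_toSet _) fun k _ => Module.End.finite_spectrum _
  refine Polynomial.eq_of_infinite_eval_eq _ _ (hfin.infinite_compl.mono fun u hu => ?_)
  have hu1 : u - 1 ≠ 0 := fun h => hu (Or.inl (by simpa [sub_eq_zero] using h))
  have hsp : ∀ k ≤ n, u ∉ spectrum F (jm q T k) := fun k hk h =>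
    hu (Or.inr (Set.mem_biUnion (by simpa using Nat.lt_succ_of_le hk) h))
  have hpk : ∀ k, ∃ p : F[X], k ≤ n → aeval (jm q T k) p * (u • 1 - jm q T k) = 1 ∧
      (u • 1 - jm q T k) * aeval (jm q T k) p = 1 := by
    intro k
    by_cases hk : k ≤ n
    · obtain ⟨p, hp⟩ := exists_inv_poly _ u (hsp k hk)
      exact ⟨p, fun _ => hp⟩
    · exact ⟨0, fun h => absurd h hk⟩
  choose p hp using hpk
  obtain ⟨g, h1, h2⟩ := trace_wt hq hT hm (u := u) (r := fun k => aeval (jm q T k) (p k))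
    (fun k hk => (hp k hk).1) (fun k hk => (hp k hk).2) n le_rfl
  obtain ⟨N, hN⟩ := hB (p n)
  have hg : g = 0 := by
    have h3 : ∀ N, (tr q T T n (aeval (jm q T n) (p n)) ^ N) m = g ^ N • m := by
      intro N
      induction N with
      | zero => simp
      | succ N ih =>
        rw [pow_succ, Module.End.mul_apply]
        rw [h1, map_smul, ih, smul_smul, pow_succ']
    have h4 := h3 N
    rw [hN, LinearMap.zero_apply] at h4
    exact eq_zero_of_pow_eq_zero ((smul_eq_zero.mp h4.symm).resolve_right hm.1)
  rw [hg, mul_zero, sub_zero] at h2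
  have h5 := mul_left_cancel₀ hu1 h2
  change eval u _ = eval u _
  rw [eval_prod, eval_prod]
  simpa using h5

end bad
end HeckeA

namespace HeckeA
open Polynomial

section weights
variable {F : Type} [Field F] {V : Type} [AddCommGroup V] [Module F V] {q : F} {n : ℕ}
  {T : ℕ → Module.End F V}

theorem T_inj (hq : q ≠ 0) (hT : HeckeRel q n T) {i : ℕ} (h1 : 1 ≤ i) (h2 : i < n) {v : V}
    (h : T i v = 0) : v = 0 := by
  have := LinearMap.congr_fun (hT.quad i h1 h2) v
  simp only [Module.End.mul_apply, h, map_zero, LinearMap.add_apply, LinearMap.smul_apply,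
    Module.End.one_apply, smul_zero, zero_add] at this
  exact (smul_eq_zero.mp this.symm).resolve_left hq

theorem jm_inj (hq : q ≠ 0) (hT : HeckeRel q n T) (k : ℕ) (hk : k ≤ n) {v : V}
    (h : jm q T k v = 0) : v = 0 := by
  induction k generalizing v with
  | zero => exact h
  | succ k ih =>
    rcases Nat.eq_zero_or_pos k with rfl | hk0
    · exact h
    rw [jm_succ q T hk0] at h
    simp only [LinearMap.smul_apply, Module.End.mul_apply] at h
    have h1 := (smul_eq_zero.mp h).resolve_left (inv_ne_zero hq)
    exact T_inj hq hT hk0 hk (ih (by omega) (T_inj hq hT hk0 hk h1))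

theorem IsWt.ne_zero (hq : q ≠ 0) (hT : HeckeRel q n T) {a : ℕ → F} {m : V} (hm : IsWt q n T a m)
    {k : ℕ} (h1 : 1 ≤ k) (h2 : k ≤ n) : a k ≠ 0 := fun h =>
  hm.1 (jm_inj hq hT k h2 (by rw [hm.2 k h1 h2, h, zero_smul]))

theorem IsWt.one {a : ℕ → F} {m : V} (hm : IsWt q n T a m) (hn : 1 ≤ n) : a 1 = 1 := by
  have h : m = a 1 • m := hm.2 1 le_rfl hn
  have : (1 - a 1) • m = 0 := by rw [sub_smul, one_smul, ← h, sub_self]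
  exact (sub_eq_zero.mp ((smul_eq_zero.mp this).resolve_right hm.1)).symm

/-- The multiset of the eigenvalues `a 1, …, a n`. -/
def wtM {F : Type} (n : ℕ) (a : ℕ → F) : Multiset F := (Finset.range n).val.map fun j => a (j + 1)

open Classical in
theorem count_rel [IsAlgClosed F] [FiniteDimensional F V] (hq : q ≠ 0) (hT : HeckeRel q n T)
    (hB : Bad q n T) {a : ℕ → F} {m : V} (hm : IsWt q n T a m) (x : F) :
    (wtM n a).count x + (wtM n a).count (q ^ 2 * x) = 2 * (wtM n a).count (q * x) := by
  have h := wt_poly hq hT hB hm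
  rw [Finset.prod_pow, Finset.prod_mul_distrib] at h
  have hr : ∀ f : ℕ → F, (∏ j ∈ Finset.range n, (X - C (f j))).roots
      = (Finset.range n).val.map f := by
    intro f
    have := roots_multiset_prod_X_sub_C ((Finset.range n).val.map f)
    rw [Multiset.map_map] at this
    exact this
  have hne : ∀ f : ℕ → F, (∏ j ∈ Finset.range n, (X - C (f j))) ≠ 0 := fun f =>
    Finset.prod_ne_zero_iff.mpr fun j _ => X_sub_C_ne_zero _
  have h2 := congrArg (fun p : F[X] => p.roots.count (q * x)) h
  simp only [roots_pow, roots_mul (mul_ne_zero (hne _) (hne _)), hr, Multiset.count_nsmul,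
    Multiset.count_add] at h2
  have e1 : (Finset.range n).val.map (fun j => q * a (j + 1)) = (wtM n a).map (q * ·) := by
    simp [wtM, Multiset.map_map]
  have e2 : (Finset.range n).val.map (fun j => q⁻¹ * a (j + 1)) = (wtM n a).map (q⁻¹ * ·) := by
    simp [wtM, Multiset.map_map]
  rw [e1, e2, Multiset.count_map_eq_count' _ _ (mul_right_injective₀ hq)] at h2
  have e3 : q * x = q⁻¹ * (q ^ 2 * x) := by field_simp
  nth_rw 2 [e3] at h2
  rw [Multiset.count_map_eq_count' _ _ (mul_right_injective₀ (inv_ne_zero hq))] at h2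
  exact h2.symm

open Classical in
theorem count_const [IsAlgClosed F] [FiniteDimensional F V] {e : ℕ} (he : 2 ≤ e)
    (hq : IsPrimitiveRoot q e) (hT : HeckeRel q n T)
    (hB : Bad q n T) {a : ℕ → F} {m : V} (hm : IsWt q n T a m) (x : F) (i : ℕ) :
    (wtM n a).count (q ^ i * x) = (wtM n a).count x := by
  have hq0 : q ≠ 0 := hq.ne_zero (by omega)
  have key : ∀ y : F, (wtM n a).count (q * y) = (wtM n a).count y := by
    intro y
    have h1 : ∀ i : ℕ, ((wtM n a).count (q ^ i * y) : ℤ) + ((wtM n a).count (q ^ (i + 2) * y) : ℤ)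
        = 2 * (wtM n a).count (q ^ (i + 1) * y) := by
      intro i
      have := count_rel hq0 hT hB hm (q ^ i * y)
      rw [← mul_assoc, ← mul_assoc, ← pow_add, ← pow_succ', add_comm 2] at this
      exact_mod_cast this
    have h2 : ∀ i : ℕ, ((wtM n a).count (q ^ i * y) : ℤ) = (wtM n a).count y +
        i * (((wtM n a).count (q * y) : ℤ) - (wtM n a).count y) ∧
        ((wtM n a).count (q ^ (i + 1) * y) : ℤ) = (wtM n a).count y +
        (i + 1) * (((wtM n a).count (q * y) : ℤ) - (wtM n a).count y) := by
      intro i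
      induction i with
      | zero => simp
      | succ i ih =>
        refine ⟨by rw [ih.2]; push_cast; ring, ?_⟩
        have := h1 i
        rw [ih.1, ih.2] at this
        push_cast
        rw [show i + 1 + 1 = i + 2 by ring]
        linarith
    have h3 := (h2 e).1
    rw [hq.pow_eq_one, one_mul] at h3
    have h4 : (e : ℤ) * (((wtM n a).count (q * y) : ℤ) - (wtM n a).count y) = 0 := by linarith
    have h5 := (mul_eq_zero.mp h4).resolve_left (by exact_mod_cast (by omega : e ≠ 0))
    exact_mod_cast sub_eq_zero.mp h5
  induction i with
  | zero => simp
  | succ i ih => rw [pow_succ', mul_assoc, key, ih]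

open Classical in
theorem sum_count_le {F : Type} (M : Multiset F) (S : Finset F) : ∑ x ∈ S, M.count x ≤ M.card := by
  rw [← Multiset.sum_count_eq_card (s := S ∪ M.toFinset) (m := M) (by
    intro x hx; simp [hx])]
  exact Finset.sum_le_sum_of_subset Finset.subset_union_left

open Classical in
theorem mem_wtM {F : Type} {n : ℕ} {a : ℕ → F} {x : F} : x ∈ wtM n a ↔ ∃ k, 1 ≤ k ∧ k ≤ n ∧ a k = x := by
  simp only [wtM, Multiset.mem_map, Finset.mem_val, Finset.mem_range]
  constructor
  · rintro ⟨j, h1, h2⟩; exact ⟨j + 1, by omega, by omega, h2⟩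
  · rintro ⟨k, h1, h2, h3⟩; exact ⟨k - 1, by omega, by rw [Nat.sub_add_cancel h1]; exact h3⟩

/-- The weights of a representation with nilpotent relative traces: they run over the `e`-th
roots of unity, without repetition. -/
theorem wt_shape [IsAlgClosed F] [FiniteDimensional F V] {e : ℕ} (he : 2 ≤ e)
    (hq : IsPrimitiveRoot q e) (hT : HeckeRel q n T) (hn : 1 ≤ n) (hne : n < 2 * e)
    (hB : Bad q n T) {a : ℕ → F} {m : V} (hm : IsWt q n T a m) :
    n = e ∧ (∀ j k, 1 ≤ j → j ≤ n → 1 ≤ k → k ≤ n → a j = a k → j = k) ∧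
      (∀ k, 1 ≤ k → k ≤ n → ∃ i < e, a k = q ^ i) ∧
      (∀ i : ℕ, ∃ k, 1 ≤ k ∧ k ≤ n ∧ a k = q ^ i) := by
  classical
  have hq0 : q ≠ 0 := hq.ne_zero (by omega)
  have hcard : (wtM n a).card = n := by simp [wtM]
  set c := fun x => (wtM n a).count x with hc
  have hconst : ∀ x i, c (q ^ i * x) = c x := fun x i => count_const he hq hT hB hm x i
  have hinj : ∀ y : F, y ≠ 0 → Set.InjOn (fun i => q ^ i * y) (Finset.range e : Set ℕ) := by
    intro y hy i hi j hj hij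
    simp only [Finset.coe_range, Set.mem_Iio] at hi hj
    exact hq.pow_inj hi hj (mul_right_cancel₀ hy hij)
  have hsum : ∀ y : F, y ≠ 0 → ∑ x ∈ (Finset.range e).image (fun i => q ^ i * y), c x = e * c y := by
    intro y hy
    rw [Finset.sum_image (hinj y hy)]
    simp [hconst]
  have h1pos : 1 ≤ c 1 := by
    rw [hc]
    exact Multiset.one_le_count_iff_mem.mpr (mem_wtM.mpr ⟨1, le_rfl, hn, hm.one hn⟩)
  have hO : ∀ y ∈ wtM n a, ∃ i < e, y = q ^ i := by
    intro y hy
    by_contra hcon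
    push Not at hcon
    have hy0 : y ≠ 0 := by
      obtain ⟨k, h1, h2, rfl⟩ := mem_wtM.mp hy
      exact hm.ne_zero hq0 hT h1 h2
    have hdis : Disjoint ((Finset.range e).image (fun i => q ^ i * (1 : F)))
        ((Finset.range e).image (fun i => q ^ i * y)) := by
      rw [Finset.disjoint_left]
      intro x hx hx'
      simp only [Finset.mem_image, Finset.mem_range] at hx hx'
      obtain ⟨i, hi, rfl⟩ := hx
      obtain ⟨j, hj, hij⟩ := hx'
      refine hcon ((i + (e - j)) % e) (Nat.mod_lt _ (by omega)) ?_
      rw [← pow_eq_pow_mod _ hq.pow_eq_one, pow_add, ← mul_one (q ^ i), ← hij,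
        mul_right_comm, ← pow_add, Nat.add_sub_cancel' hj.le, hq.pow_eq_one, one_mul]
    have h2 := sum_count_le (wtM n a) (((Finset.range e).image (fun i => q ^ i * (1 : F))) ∪
        ((Finset.range e).image (fun i => q ^ i * y)))
    rw [Finset.sum_union hdis, hcard] at h2
    have h3 := hsum 1 one_ne_zero
    have h4 := hsum y hy0
    have h5 : 1 ≤ c y := Multiset.one_le_count_iff_mem.mpr hy
    have : e * 1 ≤ e * c 1 := Nat.mul_le_mul_left _ h1pos
    have : e * 1 ≤ e * c y := Nat.mul_le_mul_left _ h5
    simp only [hc] at *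
    omega
  have hS : ∑ x ∈ (Finset.range e).image (fun i => q ^ i * (1 : F)), c x = n := by
    rw [← hcard]
    refine Multiset.sum_count_eq_card fun y hy => ?_
    obtain ⟨i, hi, rfl⟩ := hO y hy
    simp only [Finset.mem_image, Finset.mem_range]
    exact ⟨i, hi, mul_one _⟩
  rw [hsum 1 one_ne_zero] at hS
  have hc1 : c 1 = 1 := by
    have : c 1 < 2 := by
      by_contra h
      have : e * 2 ≤ e * c 1 := Nat.mul_le_mul_left _ (by omega)
      omega
    omega
  refine ⟨by rw [← hS, hc1, mul_one], ?_, ?_, ?_⟩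
  · have hnd : (wtM n a).Nodup := by
      rw [Multiset.nodup_iff_count_le_one]
      intro y
      by_cases hy : y ∈ wtM n a
      · obtain ⟨i, hi, rfl⟩ := hO y hy
        have := hconst 1 i
        rw [mul_one, hc1] at this
        exact this.le
      · rw [Multiset.count_eq_zero.mpr hy]; omega
    intro j k h1 h2 h3 h4 hjk
    have := Multiset.inj_on_of_nodup_map hnd (j - 1) (by simp; omega) (k - 1) (by simp; omega)
      (by rw [Nat.sub_add_cancel h1, Nat.sub_add_cancel h3]; exact hjk)
    omega
  · intro k h1 h2
    exact hO _ (mem_wtM.mpr ⟨k, h1, h2, rfl⟩)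
  · intro i
    have := hconst 1 i
    rw [mul_one, hc1] at this
    exact mem_wtM.mp (Multiset.one_le_count_iff_mem.mp this.ge)

/-- Exchanging two consecutive eigenvalues of a weight. -/
theorem IsWt.swap (hq : q ≠ 0) (hT : HeckeRel q n T) {a : ℕ → F} {m : V} (hm : IsWt q n T a m)
    {k : ℕ} (h1 : 1 ≤ k) (h2 : k < n) (hab : a k ≠ a (k + 1)) :
    (∃ m', IsWt q n T (a ∘ Equiv.swap k (k + 1)) m') ∨
      (a (k + 1) = q * a k ∧ T k m = q • m) ∨ (a k = q * a (k + 1) ∧ T k m = - m) := by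
  have hd : a k - a (k + 1) ≠ 0 := sub_ne_zero.mpr hab
  have hLk := hm.2 k h1 (by omega)
  have hLk1 := hm.2 (k + 1) (by omega) h2
  have e1 : jm q T (k + 1) (T k m) = a k • T k m + ((q - 1) * a (k + 1)) • m := by
    have := LinearMap.congr_fun (T_mul_jm hq hT h1 h2) m
    simp only [Module.End.mul_apply, LinearMap.sub_apply, LinearMap.smul_apply, hLk, hLk1,
      map_smul] at this
    rw [this, smul_smul]; abel
  have e2 : jm q T k (T k m) = a (k + 1) • T k m - ((q - 1) * a (k + 1)) • m := by
    have := LinearMap.congr_fun (jm_mul_T hq hT h1 h2) m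
    simp only [Module.End.mul_apply, LinearMap.sub_apply, LinearMap.smul_apply, hLk1,
      map_smul] at this
    rw [this, smul_smul]
  set s := (q - 1) * a (k + 1) / (a k - a (k + 1)) with hs
  have hs' : s * a k = s * a (k + 1) + (q - 1) * a (k + 1) := by
    rw [hs]; field_simp; ring
  by_cases h0 : T k m + s • m = 0
  · right
    have h3 : T k m = (-s) • m := by rw [neg_smul]; exact eq_neg_of_add_eq_zero_left h0
    have h4 := LinearMap.congr_fun (hT.quad k h1 h2) m
    simp only [Module.End.mul_apply, h3, map_smul, LinearMap.add_apply, LinearMap.smul_apply,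
      Module.End.one_apply, smul_smul, ← add_smul] at h4
    have h5 : (s - 1) * (s + q) = 0 := by
      have : (-s * -s - ((q - 1) * -s + q)) • m = 0 := by rw [sub_smul, h4, sub_self]
      have := (smul_eq_zero.mp this).resolve_right hm.1
      linear_combination this
    rcases mul_eq_zero.mp h5 with h6 | h6
    · right
      have h7 : s = 1 := sub_eq_zero.mp h6
      rw [h7] at hs' h3
      exact ⟨by linear_combination hs', by rw [h3, neg_smul, one_smul]⟩
    · left
      have h7 : s = -q := eq_neg_of_add_eq_zero_left h6
      rw [h7] at hs' h3
      refine ⟨mul_left_cancel₀ (neg_ne_zero.mpr (one_ne_zero (α := F))) ?_,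
        by rw [h3, neg_neg]⟩
      linear_combination -hs'
  · left
    refine ⟨_, h0, fun j hj1 hj2 => ?_⟩
    rw [map_add, map_smul]
    by_cases hjk : j = k
    · subst hjk
      simp only [Function.comp, Equiv.swap_apply_left]
      rw [e2, hLk, smul_smul, hs']
      module
    by_cases hjk1 : j = k + 1
    · subst hjk1
      simp only [Function.comp, Equiv.swap_apply_right]
      rw [e1, hLk1, smul_smul, smul_add, smul_smul, mul_comm (a k) s, hs']
      module
    have hc : Commute (T k) (jm q T j) := by
      rcases lt_or_ge j k with h | h
      · exact jm_commute_hi hT h1 h h2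
      · exact jm_commute_lo hT h1 (by omega) hj2
    simp only [Function.comp, Equiv.swap_apply_of_ne_of_ne hjk hjk1]
    rw [← Module.End.mul_apply, ← hc.eq, Module.End.mul_apply, hm.2 j hj1 hj2, map_smul]
    module

end weights
end HeckeA

namespace HeckeA

section types
variable {F : Type} [Field F] {V : Type} [AddCommGroup V] [Module F V] {q : F} {n : ℕ}
  {T : ℕ → Module.End F V}

/-- Moving an eigenvalue of a weight to an earlier position, past eigenvalues which are neither
`q` nor `q⁻¹` times it. -/
theorem IsWt.move (hq : q ≠ 0) (hT : HeckeRel q n T) {l d : ℕ} (hl : 1 ≤ l) {a : ℕ → F} {m : V}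
    (hd : l + d ≤ n)
    (hm : IsWt q n T a m) (hne : ∀ j, l ≤ j → j < l + d → a j ≠ a (l + d) ∧
      a (l + d) ≠ q * a j ∧ a j ≠ q * a (l + d)) :
    ∃ a' m', IsWt q n T a' m' ∧ a' l = a (l + d) ∧ ∀ j < l, a' j = a j := by
  induction d generalizing a m with
  | zero => exact ⟨a, m, hm, rfl, fun _ _ => rfl⟩
  | succ d ih =>
    obtain ⟨h1, h2, h3⟩ := hne (l + d) (by omega) (by omega)
    rcases hm.swap hq hT (k := l + d) (by omega) (by omega) h1 with ⟨m', hm'⟩ | h | h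
    · have e1 : (a ∘ Equiv.swap (l + d) (l + d + 1)) (l + d) = a (l + d + 1) := by simp
      have e2 : ∀ j, j < l + d → (a ∘ Equiv.swap (l + d) (l + d + 1)) j = a j := by
        intro j hj
        simp only [Function.comp]
        rw [Equiv.swap_apply_of_ne_of_ne (by omega) (by omega)]
      obtain ⟨a'', m'', h4, h5, h6⟩ := ih (by omega) hm' (by
        intro j hj1 hj2
        rw [e1, e2 j hj2]
        exact hne j hj1 (by omega))
      exact ⟨a'', m'', h4, by rw [h5, e1]; rfl, fun j hj => by rw [h6 j hj, e2 j (by omega)]⟩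
    · exact absurd h.1 h2
    · exact absurd h.1 h3

/-- `v` spans a copy of the character `T_i ↦ q` for `i < c`, `T_i ↦ -1` for `i > c`, of the
parabolic subalgebra of type `S_c × S_{n-c}`. -/
def Ty (q : F) (n : ℕ) (T : ℕ → Module.End F V) (c : ℕ) (v : V) : Prop :=
  (∀ i, 1 ≤ i → i < c → T i v = q • v) ∧ ∀ i, c < i → i < n → T i v = - v

theorem sym_fix {k : ℕ} {v : V} (hk : 1 ≤ k)
    (h0 : ∀ j, 1 ≤ j → j ≤ k → qn q j ≠ 0) (h : ∀ i, 1 ≤ i → i < k → T i v = q • v) :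
    sym q T k v = v := by
  induction k, hk using Nat.le_induction with
  | base => simp [sym]
  | succ k hk ih =>
    have ih := ih (fun j h1 h2 => h0 j h1 (by omega)) (fun i h1 h2 => h i h1 (by omega))
    rw [sym_succ q T hk, num]
    simp only [LinearMap.smul_apply, LinearMap.add_apply, Module.End.mul_apply, ih,
      h k hk (by omega), map_smul, smul_smul]
    have : v + (qn q k * q) • v = qn q (k + 1) • v := by rw [qn_succ']; module
    rw [this, smul_smul, inv_mul_cancel₀ (h0 _ (by omega) le_rfl), one_smul]

/-- The operators `-q⁻¹ T_{s+i}` satisfy the relations with parameter `q⁻¹`. -/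
theorem HeckeRel.neg_shift {E : Type} [Ring E] [Algebra F E] {T : ℕ → E} (hq : q ≠ 0)
    (hT : HeckeRel q n T) (m s : ℕ) (h : m + s ≤ n) :
    HeckeRel q⁻¹ m (fun i => (-q⁻¹) • T (i + s)) := by
  have hT := hT.shift h
  refine ⟨fun i h1 h2 => ?_, fun i h1 h2 => ?_, fun i j h1 h2 h3 => ?_⟩
  · simp only [smul_mul_smul_comm]
    have := hT.quad i h1 h2
    rw [this]
    have h1 : (-q⁻¹ * -q⁻¹) * q = q⁻¹ := by field_simp
    have h2 : (-q⁻¹ * -q⁻¹) * (q - 1) = (q⁻¹ - 1) * (-q⁻¹) := by field_simp; ring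
    rw [smul_add, smul_smul, smul_smul, smul_smul, h1, h2]
  · simp only [smul_mul_smul_comm]
    have := hT.braid i h1 h2
    rw [this]
  · simp only [smul_mul_smul_comm]
    have := hT.comm i j h1 h2 h3
    rw [this]

variable {e : ℕ}

theorem zpow_inj_of_lt (he : 2 ≤ e) (hq : IsPrimitiveRoot q e) {x y : ℤ} (h : q ^ x = q ^ y)
    (h1 : x - y < e) (h2 : y - x < e) : x = y := by
  have hq0 : q ≠ 0 := hq.ne_zero (by omega)
  have h3 : q ^ (x - y) = 1 := by rw [zpow_sub₀ hq0, h, div_self (zpow_ne_zero _ hq0)]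
  rw [hq.zpow_eq_one_iff_dvd] at h3
  have := Int.eq_zero_of_abs_lt_dvd h3 (abs_lt.mpr ⟨by omega, by omega⟩)
  omega

variable [IsAlgClosed F] [FiniteDimensional F V]

/-- In a weight, every eigenvalue after the first one is `q` or `q⁻¹` times an earlier one. -/
theorem wt_neighbour (he : 2 ≤ e) (hq : IsPrimitiveRoot q e) (hT : HeckeRel q e T)
    (hB : Bad q e T) {a : ℕ → F} {m : V} (hm : IsWt q e T a m) {k : ℕ} (hk : 2 ≤ k) (hke : k ≤ e) :
    ∃ j, 1 ≤ j ∧ j < k ∧ (a k = q * a j ∨ a j = q * a k) := by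
  by_contra hcon
  push Not at hcon
  have hq0 : q ≠ 0 := hq.ne_zero (by omega)
  have hs := wt_shape he hq hT (by omega) (by omega) hB hm
  obtain ⟨a', m', h1, h2, -⟩ := hm.move hq0 hT (l := 1) (d := k - 1) le_rfl (by omega) (by
    intro j h1 h2
    rw [Nat.add_sub_cancel' (by omega)] at *
    refine ⟨fun h => ?_, hcon j h1 h2⟩
    have := hs.2.1 j k h1 (by omega) (by omega) hke h
    omega)
  rw [h1.one (by omega), Nat.add_sub_cancel' (by omega), ← hm.one (by omega)] at h2
  have := hs.2.1 1 k le_rfl (by omega) (by omega) hke h2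
  omega

/-- A nonzero representation with nilpotent relative traces contains a vector of one of the types
`Ty c` with `1 ≤ c < e`. -/
theorem exists_type [Nontrivial V] (he : 2 ≤ e) (hq : IsPrimitiveRoot q e) (hT : HeckeRel q e T)
    (hB : Bad q e T) : ∃ c v, 1 ≤ c ∧ c < e ∧ v ≠ 0 ∧ Ty q e T c v := by
  classical
  have hq0 : q ≠ 0 := hq.ne_zero (by omega)
  have hq1 : q ≠ 1 := hq.ne_one (by omega)
  have hinj := fun {x y : ℤ} => zpow_inj_of_lt (x := x) (y := y) he hq
  obtain ⟨a₀, m₀, hm₀⟩ := exists_wt hT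
  let P : ℕ → Prop := fun c => ∃ a m, IsWt q e T a m ∧ ∀ k : ℕ, 1 ≤ k → k ≤ c →
    a k = q ^ ((k : ℤ) - 1)
  have hP1 : P 1 := ⟨a₀, m₀, hm₀, fun k h1 h2 => by
    obtain rfl : k = 1 := by omega
    rw [hm₀.one (by omega)]; simp⟩
  set c := Nat.findGreatest P (e - 1) with hc
  have hPc : P c := Nat.findGreatest_spec (by omega) hP1
  have hc1 : 1 ≤ c := Nat.le_findGreatest (by omega) hP1
  have hce : c ≤ e - 1 := Nat.findGreatest_le _
  have hmax : c < e - 1 → ¬ P (c + 1) := fun h =>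
    Nat.findGreatest_is_greatest (n := e - 1) (by rw [← hc]; omega) (by omega)
  obtain ⟨a, m, hm, ha⟩ := hPc
  have hs := wt_shape he hq hT (by omega) (by omega) hB hm
  -- the eigenvalues after position `c` descend from `q⁻¹`
  have hdown : ∀ t : ℕ, 1 ≤ t → t ≤ e - 1 - c → a (c + t) = q ^ (-(t : ℤ)) := by
    intro t
    induction t using Nat.strong_induction_on with
    | _ t ih =>
      intro h1 h2
      have hval : ∀ j, 1 ≤ j → j < c + t → ∃ z : ℤ, a j = q ^ z ∧ -(t : ℤ) < z ∧ z < c := by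
        intro j hj1 hj2
        rcases le_or_gt j c with h | h
        · exact ⟨_, ha j hj1 h, by omega, by omega⟩
        · obtain ⟨s, rfl⟩ := Nat.exists_eq_add_of_lt h
          have := ih (s + 1) (by omega) (by omega) (by omega)
          exact ⟨_, this, by push_cast; omega, by omega⟩
      have hsurj : ∀ z : ℤ, -(t : ℤ) < z → z < c → ∃ j, 1 ≤ j ∧ j < c + t ∧ a j = q ^ z := by
        intro z hz1 hz2
        rcases le_or_gt 0 z with h | h
        · refine ⟨z.toNat + 1, by omega, by omega, ?_⟩
          rw [ha _ (by omega) (by omega)]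
          congr 1; omega
        · refine ⟨c + (-z).toNat, by omega, by omega, ?_⟩
          rw [ih (-z).toNat (by omega) (by omega) (by omega)]
          congr 1; omega
      have hnew : ∀ z : ℤ, a (c + t) = q ^ z → ¬ (-(t : ℤ) < z ∧ z < c) := by
        rintro z hz ⟨hz1, hz2⟩
        obtain ⟨j, hj1, hj2, hj⟩ := hsurj z hz1 hz2
        have := hs.2.1 j (c + t) hj1 (by omega) (by omega) (by omega) (by rw [hj, hz])
        omega
      obtain ⟨j, hj1, hj2, hj⟩ := wt_neighbour he hq hT hB hm (k := c + t) (by omega) (by omega)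
      obtain ⟨z, hz, hz1, hz2⟩ := hval j hj1 hj2
      have hor : a (c + t) = q ^ (c : ℤ) ∨ a (c + t) = q ^ (-(t : ℤ)) := by
        rcases hj with hj | hj
        · have h3 : a (c + t) = q ^ (z + 1) := by rw [hj, hz, zpow_add_one₀ hq0, mul_comm]
          have := hnew _ h3
          left; rw [h3]; congr 1; omega
        · have h3 : a (c + t) = q ^ (z - 1) := by
            rw [zpow_sub_one₀ hq0, ← hz, hj]; field_simp
          have := hnew _ h3
          right; rw [h3]; congr 1; omega
      refine hor.resolve_left fun hcc => hmax (by omega) ?_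
      obtain ⟨a', m', g1, g2, g3⟩ := hm.move hq0 hT (l := c + 1) (d := t - 1) (by omega)
        (by omega) (by
          intro i hi1 hi2
          rw [show c + 1 + (t - 1) = c + t by omega] at *
          obtain ⟨s, rfl⟩ : ∃ s, i = c + s := ⟨i - c, by omega⟩
          rw [hcc, ih s (by omega) (by omega) (by omega)]
          refine ⟨fun h => ?_, fun h => ?_, fun h => ?_⟩
          · have := hinj h (by omega) (by omega); omega
          · rw [mul_comm, ← zpow_add_one₀ hq0] at h
            have := hinj h (by omega) (by omega); omega
          · rw [mul_comm, ← zpow_add_one₀ hq0] at h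
            have := hinj h (by omega) (by omega); omega)
      refine ⟨a', m', g1, fun k hk1 hk2 => ?_⟩
      rcases Nat.lt_or_ge k (c + 1) with h | h
      · rw [g3 k h, ha k hk1 (by omega)]
      · obtain rfl : k = c + 1 := by omega
        rw [g2, show c + 1 + (t - 1) = c + t by omega, hcc]; congr 1; push_cast; omega
  have hTq : ∀ i, 1 ≤ i → i < c → T i m = q • m := by
    intro i h1 h2
    have e1 := ha i h1 h2.le
    have e2 := ha (i + 1) (by omega) h2
    rcases hm.swap hq0 hT h1 (by omega) (by
      rw [e1, e2]; intro h; have := hinj h (by omega) (by omega); omega) with ⟨m', h⟩ | h | h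
    · exfalso
      have hi : (a ∘ Equiv.swap i (i + 1)) i = q ^ (i : ℤ) := by simp [e2]
      have hj : ∀ j, 1 ≤ j → j < i → (a ∘ Equiv.swap i (i + 1)) j = q ^ ((j : ℤ) - 1) := by
        intro j hj1 hj2
        simp only [Function.comp]
        rw [Equiv.swap_apply_of_ne_of_ne (by omega) (by omega), ha j hj1 (by omega)]
      rcases Nat.lt_or_ge i 2 with hi2 | hi2
      · obtain rfl : i = 1 := by omega
        rw [h.one (by omega)] at hi
        exact hq1 (by simpa using hi.symm)
      · obtain ⟨j, hj1, hj2, hj3⟩ := wt_neighbour he hq hT hB h hi2 (by omega)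
        rw [hi, hj j hj1 hj2, mul_comm q, mul_comm q, ← zpow_add_one₀ hq0,
          ← zpow_add_one₀ hq0] at hj3
        rcases hj3 with hj3 | hj3 <;>
        · have := hinj hj3 (by omega) (by omega); omega
    · exact h.2
    · have h3 := h.1
      rw [e1, e2, mul_comm, ← zpow_add_one₀ hq0] at h3
      have := hinj h3 (by push_cast; omega) (by push_cast; omega); push_cast at this; omega
  rcases Nat.lt_or_ge c (e - 1) with hlt | hge
  swap
  · exact ⟨c, m, hc1, by omega, hm.1, hTq, fun i h1 h2 => by omega⟩
  have hTn : ∀ i, c < i → i < e - 1 → T i m = - m := by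
    intro i h1 h2
    obtain ⟨s, rfl⟩ : ∃ s, i = c + s := ⟨i - c, by omega⟩
    have e1 := hdown s (by omega) (by omega)
    have e2 := hdown (s + 1) (by omega) (by omega)
    rw [← add_assoc] at e2
    rcases hm.swap hq0 hT (k := c + s) (by omega) (by omega) (by
      rw [e1, e2]; intro h; have := hinj h (by push_cast; omega) (by push_cast; omega); omega)
      with ⟨m', h⟩ | h | h
    · exfalso
      have hi : (a ∘ Equiv.swap (c + s) (c + s + 1)) (c + s) = q ^ (-(s : ℤ) - 1) := by
        simp [e2]; congr 1; ring
      have hval : ∀ j, 1 ≤ j → j < c + s → ∃ z : ℤ,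
          (a ∘ Equiv.swap (c + s) (c + s + 1)) j = q ^ z ∧ -(s : ℤ) < z ∧ z < c := by
        intro j hj1 hj2
        simp only [Function.comp]
        rw [Equiv.swap_apply_of_ne_of_ne (by omega) (by omega)]
        rcases le_or_gt j c with h | h
        · exact ⟨_, ha j hj1 h, by omega, by omega⟩
        · obtain ⟨r, rfl⟩ := Nat.exists_eq_add_of_lt h
          exact ⟨_, hdown (r + 1) (by omega) (by omega), by push_cast; omega, by omega⟩
      obtain ⟨j, hj1, hj2, hj3⟩ := wt_neighbour he hq hT hB h (k := c + s) (by omega) (by omega)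
      obtain ⟨z, hz, hz1, hz2⟩ := hval j hj1 hj2
      rw [hi, hz, mul_comm q, mul_comm q, ← zpow_add_one₀ hq0, ← zpow_add_one₀ hq0] at hj3
      rcases hj3 with hj3 | hj3 <;>
      · have := hinj hj3 (by omega) (by omega); omega
    · have h3 := h.1
      rw [e1, e2, mul_comm, ← zpow_add_one₀ hq0] at h3
      have := hinj h3 (by push_cast; omega) (by push_cast; omega); push_cast at this; omega
    · exact h.2
  -- the remaining eigenvalue
  have hlast : a e = q ^ (c : ℤ) := by
    obtain ⟨k, h1, h2, h3⟩ := hs.2.2.2 c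
    rcases le_or_gt k c with h | h
    · rw [ha k h1 h, ← zpow_natCast] at h3
      have := hinj h3 (by omega) (by omega); omega
    rcases Nat.lt_or_ge k e with h' | h'
    · obtain ⟨s, rfl⟩ := Nat.exists_eq_add_of_lt h
      have h4 := hdown (s + 1) (by omega) (by omega)
      rw [← add_assoc] at h4
      rw [h4, ← zpow_natCast] at h3
      have := hinj h3 (by push_cast; omega) (by push_cast; omega); push_cast at this; omega
    · obtain rfl : k = e := by omega
      rw [h3, zpow_natCast]
  have hprev : a (e - 1) = q * a e := by
    have h3 := hdown (e - 1 - c) (by omega) le_rfl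
    rw [Nat.add_sub_cancel' (by omega)] at h3
    rw [h3, hlast, mul_comm, ← zpow_add_one₀ hq0, show -((e - 1 - c : ℕ) : ℤ) = (c + 1 : ℤ) - e by
      omega, zpow_sub₀ hq0, zpow_natCast q e, hq.pow_eq_one, div_one]
  clear hc hmax hP1
  clear_value c
  clear P
  obtain ⟨d, rfl⟩ : ∃ d, e = d + 1 + c := ⟨e - c - 1, by omega⟩
  have hd : 1 ≤ d := by omega
  set R : ℕ → Module.End F V := fun i => (-q⁻¹) • T (i + c) with hR
  have hRr : HeckeRel q⁻¹ (d + 1) R := hT.neg_shift hq0 (d + 1) c le_rfl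
  have hqn : ∀ j, 1 ≤ j → j ≤ d + 1 → qn q⁻¹ j ≠ 0 := fun j h1 h2 =>
    qn_ne hq.inv h1 (by omega)
  set m' := T (d + c) m + m with hm'
  have hL := hm.2 (d + 1 + c) (by omega) le_rfl
  set b := a (d + 1 + c) with hb
  have hb0 : b ≠ 0 := hm.ne_zero hq0 hT (by omega) le_rfl
  rw [show d + 1 + c - 1 = d + c by omega] at hprev
  -- `m'` has the eigenvalue `q * b` for the last Jucys-Murphy element, while `m` has `b`
  have hLm' : jm q T (d + 1 + c) m' = (q * b) • m' := by
    have h4 := LinearMap.congr_fun (T_mul_jm hq0 hT (k := d + c) (by omega) (by omega)) m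
    rw [show d + c + 1 = d + 1 + c by omega] at h4
    simp only [Module.End.mul_apply, LinearMap.sub_apply, LinearMap.smul_apply, hL,
      hm.2 (d + c) (by omega) (by omega), hprev, map_smul] at h4
    have h5 : jm q T (d + 1 + c) (T (d + c) m) = (q * b) • T (d + c) m + ((q - 1) * b) • m := by
      rw [h4, smul_smul]; abel
    rw [hm', map_add, h5, hL]; module
  have hfix : sym q⁻¹ R d m = m := sym_fix hd (fun j h1 h2 => hqn j h1 (by omega)) (by
    intro i h1 h2
    simp only [hR, LinearMap.smul_apply]
    rw [hTn (i + c) (by omega) (by omega)]; simp)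
  have hcom : Commute (jm q T (d + 1 + c)) (sym q⁻¹ R d) := sym_commute _ _ _ _ (by
    intro i h1 h2
    exact ((jm_commute_lo hT (by omega) (by omega) le_rfl).symm).smul_right _)
  have hw : jm q T (d + 1 + c) (sym q⁻¹ R d m') = (q * b) • sym q⁻¹ R d m' := by
    rw [← Module.End.mul_apply, hcom.eq, Module.End.mul_apply, hLm', map_smul]
  have hval : qn q⁻¹ (d + 1) • sym q⁻¹ R (d + 1) m =
      qn q⁻¹ (d + 1) • m - (q⁻¹ * qn q⁻¹ d) • sym q⁻¹ R d m' := by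
    rw [sym_succ _ _ hd, LinearMap.smul_apply, smul_smul,
      mul_inv_cancel₀ (hqn _ (by omega) le_rfl), one_smul, num]
    have hRd : R d m = q⁻¹ • (m - m') := by
      simp only [hR, LinearMap.smul_apply, hm']; module
    simp only [LinearMap.add_apply, LinearMap.smul_apply, Module.End.mul_apply, hfix, hRd,
      map_smul, map_sub]
    rw [qn_succ']
    module
  refine ⟨c, sym q⁻¹ R (d + 1) m, hc1, by omega, fun h0 => ?_, fun i h1 h2 => ?_,
    fun i h1 h2 => ?_⟩
  · rw [h0, smul_zero] at hval
    have h4 := congrArg (fun v => jm q T (d + 1 + c) v) hval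
    rw [map_zero, map_sub, map_smul, map_smul, hw, hL] at h4
    have h5 : (qn q⁻¹ (d + 1) * ((q - 1) * b)) • m = 0 := by
      have : (qn q⁻¹ (d + 1) * ((q - 1) * b)) • m
          = (q * b) • (qn q⁻¹ (d + 1) • m - (q⁻¹ * qn q⁻¹ d) • sym q⁻¹ R d m')
            - (qn q⁻¹ (d + 1) • b • m - (q⁻¹ * qn q⁻¹ d) • (q * b) • sym q⁻¹ R d m') := by
        module
      rw [this, ← hval, ← h4]; simp
    exact hm.1 ((smul_eq_zero.mp h5).resolve_left
      (mul_ne_zero (hqn _ (by omega) le_rfl) (mul_ne_zero (sub_ne_zero.mpr hq1) hb0)))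
  · have h4 : Commute (T i) (sym q⁻¹ R (d + 1)) := sym_commute _ _ _ _ (by
      intro j h3 h4
      exact (hT.commute h1 (by omega) (by omega) (by omega) (by omega)).smul_right _)
    rw [← Module.End.mul_apply, h4.eq, Module.End.mul_apply, hTq i h1 h2, map_smul]
  · have h4 := (sym_props hRr (k := d + 1) (by omega) le_rfl hqn).1 (i - c) (by omega) (by omega)
    have h5 := LinearMap.congr_fun h4 m
    simp only [hR, Module.End.mul_apply, LinearMap.smul_apply,
      Nat.sub_add_cancel h1.le] at h5
    have h6 := congrArg (fun v => (-q) • v) h5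
    simp only [smul_smul] at h6
    rw [show -q * -q⁻¹ = 1 by field_simp, show -q * q⁻¹ = -1 by field_simp, one_smul, neg_smul,
      one_smul] at h6
    exact h6

end types
end HeckeA

namespace HeckeA

/-! ### Representations of quivers of type A -/

section typeA
variable {F V : Type} [Field F] [AddCommGroup V] [Module F V]

/-- The subspace has dimension at most one. -/
def Thin (S : Submodule F V) : Prop := ∀ x ∈ S, ∀ y ∈ S, x ≠ 0 → ∃ l : F, y = l • x

/-- `U` is the internal direct sum of `S` and `H`, and `S` has dimension at most one. -/
structure Spl (U S H : Submodule F V) : Prop where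
  s_le : S ≤ U
  h_le : H ≤ U
  sum : ∀ u ∈ U, ∃ s ∈ S, ∃ h ∈ H, u = s + h
  disj : ∀ x ∈ S, x ∈ H → x = 0
  thin : Thin S

/-- The decomposition of `U` into `S` and `H` induces one of `G`. -/
def SplCompat (S H G : Submodule F V) : Prop := ∀ u ∈ G, ∃ s ∈ S, s ∈ G ∧ ∃ h ∈ H, h ∈ G ∧ u = s + h

theorem Spl.bot (U : Submodule F V) : Spl U ⊥ U :=
  ⟨bot_le, le_rfl, fun u hu => ⟨0, Submodule.zero_mem _, u, hu, (zero_add u).symm⟩,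
    fun x hx _ => by simpa using hx, fun x hx y _ h => absurd (by simpa using hx) h⟩

theorem spl_of_functional {U : Submodule F V} {v : V} {θ : V →ₗ[F] F} (hv : v ∈ U) (hθ : θ v = 1) :
    Spl U (Submodule.span F {v}) (U ⊓ LinearMap.ker θ) := by
  refine ⟨by simpa using hv, inf_le_left, fun u hu => ?_, fun x hx hx' => ?_, ?_⟩
  · refine ⟨θ u • v, Submodule.smul_mem _ _ (Submodule.mem_span_singleton_self v), u - θ u • v,
      ⟨sub_mem hu (U.smul_mem _ hv), ?_⟩, by abel⟩
    change θ (u - θ u • v) = 0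
    rw [map_sub, map_smul, hθ]; simp
  · obtain ⟨l, rfl⟩ := Submodule.mem_span_singleton.mp hx
    have : θ (l • v) = 0 := hx'.2
    rw [map_smul, hθ, smul_eq_mul, mul_one] at this
    rw [this, zero_smul]
  · intro x hx y hy hne
    obtain ⟨l, rfl⟩ := Submodule.mem_span_singleton.mp hx
    obtain ⟨m, rfl⟩ := Submodule.mem_span_singleton.mp hy
    have hl : l ≠ 0 := fun h => hne (by rw [h, zero_smul])
    exact ⟨m * l⁻¹, by rw [smul_smul, mul_assoc, inv_mul_cancel₀ hl, mul_one]⟩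

theorem compat_of_functional {U G : Submodule F V} {v : V} {θ : V →ₗ[F] F} (hG : G ≤ U)
    (hθ : θ v = 1) (h : v ∈ G ∨ G ≤ LinearMap.ker θ) :
    SplCompat (Submodule.span F {v}) (U ⊓ LinearMap.ker θ) G := by
  intro u hu
  rcases h with h | h
  · refine ⟨θ u • v, Submodule.smul_mem _ _ (Submodule.mem_span_singleton_self v),
      G.smul_mem _ h, u - θ u • v, ⟨hG (sub_mem hu (G.smul_mem _ h)), ?_⟩,
      sub_mem hu (G.smul_mem _ h), by abel⟩
    change θ (u - θ u • v) = 0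
    rw [map_sub, map_smul, hθ]; simp
  · exact ⟨0, zero_mem _, zero_mem _, u, ⟨hG hu, h hu⟩, hu, (zero_add u).symm⟩

theorem exists_functional {v : V} {G : Submodule F V} (h : v ∉ G) :
    ∃ θ : V →ₗ[F] F, θ v = 1 ∧ G ≤ LinearMap.ker θ := by
  obtain ⟨f, hf, hG⟩ := Submodule.exists_le_ker_of_notMem h
  refine ⟨(f v)⁻¹ • f, by simp [hf], fun x hx => ?_⟩
  have := hG hx
  rw [LinearMap.mem_ker] at *
  simp [this]

/-- A line in a given nonzero subspace `K` can be split off compatibly with a flag `G`. -/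
theorem split_in {G : ℕ → Submodule F V} {m : ℕ} (hmono : Monotone G) (h0 : G 0 = ⊥)
    {K : Submodule F V} (hK : K ≤ G m) (hne : K ≠ ⊥) :
    ∃ v ∈ K, ∃ θ : V →ₗ[F] F, θ v = 1 ∧ ∀ j, v ∈ G j ∨ G j ≤ LinearMap.ker θ := by
  classical
  have hex : ∃ j, G j ⊓ K ≠ ⊥ := ⟨m, by rwa [inf_eq_right.mpr hK]⟩
  set j := Nat.find hex with hj
  have h1 : G j ⊓ K ≠ ⊥ := Nat.find_spec hex
  have hj0 : j ≠ 0 := by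
    intro h; rw [h, h0] at h1; simp at h1
  obtain ⟨v, hv, hv0⟩ := Submodule.exists_mem_ne_zero_of_ne_bot h1
  have h2 : G (j - 1) ⊓ K = ⊥ := by
    by_contra h
    exact Nat.find_min hex (m := j - 1) (by omega) h
  have h3 : v ∉ G (j - 1) := fun h => hv0 (by
    have : v ∈ G (j - 1) ⊓ K := ⟨h, hv.2⟩
    rw [h2] at this; simpa using this)
  obtain ⟨θ, hθ, hG⟩ := exists_functional h3
  refine ⟨v, hv.2, θ, hθ, fun i => ?_⟩
  rcases Nat.lt_or_ge i j with h | h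
  · exact Or.inr ((hmono (by omega)).trans hG)
  · exact Or.inl (hmono h hv.1)

/-- A line can be split off from `G m`, away from a given proper subspace `R`, compatibly with
a flag `G`. -/
theorem split_off {G : ℕ → Submodule F V} {m : ℕ} (hmono : Monotone G) (h0 : G 0 = ⊥)
    {R : Submodule F V} (hR : ¬ G m ≤ R) :
    ∃ v, ∃ θ : V →ₗ[F] F, θ v = 1 ∧ v ∈ G m ∧ R ≤ LinearMap.ker θ ∧
      ∀ j, v ∈ G j ∨ G j ≤ LinearMap.ker θ := by
  classical
  have hex : ∃ j, ¬ G j ≤ R := ⟨m, hR⟩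
  set j := Nat.find hex with hj
  have h1 : ¬ G j ≤ R := Nat.find_spec hex
  have hjm : j ≤ m := Nat.find_min' hex hR
  have hj0 : j ≠ 0 := by
    intro h; rw [h, h0] at h1; simp at h1
  obtain ⟨v, hv, hv0⟩ := SetLike.not_le_iff_exists.mp h1
  obtain ⟨θ, hθ, hG⟩ := exists_functional hv0
  refine ⟨v, θ, hθ, hmono hjm hv, hG, fun i => ?_⟩
  rcases Nat.lt_or_ge i j with h | h
  · exact Or.inr ((not_not.mp (Nat.find_min hex h)).trans hG)
  · exact Or.inl (hmono h hv)

/-- A nonzero representation `U 0 - U 1 - ⋯ - U N` of a quiver of type `A`, where the arrow `a i`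
goes to the right if `o i` holds and to the left otherwise, has a nonzero direct summand `S` with
all components of dimension at most one. The summand may be chosen compatible with a
given flag `G` in `U 0`; this is what makes the induction from the right end work. -/
theorem typeA (N : ℕ) : ∀ (U : ℕ → Submodule F V) (o : ℕ → Prop) (a : ℕ → Module.End F V)
    (_ : ∀ i < N, o i → ∀ u ∈ U i, a i u ∈ U (i + 1))
    (_ : ∀ i < N, ¬ o i → ∀ u ∈ U (i + 1), a i u ∈ U i)
    (G : ℕ → Submodule F V) (m : ℕ) (_ : Monotone G) (_ : G 0 = ⊥) (_ : G m = U 0)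
    (_ : ∀ j, G j ≤ U 0) (_ : ∃ i ≤ N, U i ≠ ⊥),
    ∃ S H : ℕ → Submodule F V, (∀ i ≤ N, Spl (U i) (S i) (H i)) ∧ (∃ i ≤ N, S i ≠ ⊥) ∧
      (∀ i < N, o i → (∀ u ∈ S i, a i u ∈ S (i + 1)) ∧ ∀ u ∈ H i, a i u ∈ H (i + 1)) ∧
      (∀ i < N, ¬ o i → (∀ u ∈ S (i + 1), a i u ∈ S i) ∧ ∀ u ∈ H (i + 1), a i u ∈ H i) ∧
      ∀ j, SplCompat (S 0) (H 0) (G j) := by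
  classical
  induction N with
  | zero =>
    intro U o a _ _ G m hmono h0 hm hle hne
    obtain ⟨i, hi, hne⟩ := hne
    obtain rfl : i = 0 := by omega
    obtain ⟨v, hv, θ, hθ, hc⟩ := split_in hmono h0 hm.ge hne
    refine ⟨fun _ => Submodule.span F {v}, fun _ => U 0 ⊓ LinearMap.ker θ, ?_, ?_, ?_, ?_, ?_⟩
    · intro i hi
      obtain rfl : i = 0 := by omega
      exact spl_of_functional hv hθ
    · refine ⟨0, le_rfl, fun h => ?_⟩
      rw [Submodule.span_singleton_eq_bot] at h
      rw [h, map_zero] at hθ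
      exact zero_ne_one hθ
    · intro i hi; omega
    · intro i hi; omega
    · exact fun j => compat_of_functional (hle j) hθ (hc j)
  | succ N ih =>
    intro U o a ho ho' G m hmono h0 hm hle hne
    -- passing from a decomposition of the nodes `1, …, N + 1` to one of all nodes
    have glue : ∀ (S H : ℕ → Submodule F V) (S0 H0 : Submodule F V),
        (∀ i ≤ N, Spl (U (i + 1)) (S i) (H i)) → ((∃ i ≤ N, S i ≠ ⊥) ∨ S0 ≠ ⊥) →
        (∀ i < N, o (i + 1) → (∀ u ∈ S i, a (i + 1) u ∈ S (i + 1)) ∧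
          ∀ u ∈ H i, a (i + 1) u ∈ H (i + 1)) →
        (∀ i < N, ¬ o (i + 1) → (∀ u ∈ S (i + 1), a (i + 1) u ∈ S i) ∧
          ∀ u ∈ H (i + 1), a (i + 1) u ∈ H i) →
        Spl (U 0) S0 H0 → (o 0 → (∀ u ∈ S0, a 0 u ∈ S 0) ∧ ∀ u ∈ H0, a 0 u ∈ H 0) →
        (¬ o 0 → (∀ u ∈ S 0, a 0 u ∈ S0) ∧ ∀ u ∈ H 0, a 0 u ∈ H0) →
        (∀ j, SplCompat S0 H0 (G j)) →
        ∃ S H : ℕ → Submodule F V, (∀ i ≤ N + 1, Spl (U i) (S i) (H i)) ∧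
          (∃ i ≤ N + 1, S i ≠ ⊥) ∧
          (∀ i < N + 1, o i → (∀ u ∈ S i, a i u ∈ S (i + 1)) ∧ ∀ u ∈ H i, a i u ∈ H (i + 1)) ∧
          (∀ i < N + 1, ¬ o i → (∀ u ∈ S (i + 1), a i u ∈ S i) ∧ ∀ u ∈ H (i + 1), a i u ∈ H i) ∧
          ∀ j, SplCompat (S 0) (H 0) (G j) := by
      intro S H S0 H0 g1 g2 g3 g4 g5 g6 g7 g8
      refine ⟨fun i => Nat.casesOn i S0 S, fun i => Nat.casesOn i H0 H, ?_, ?_, ?_, ?_, g8⟩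
      · intro i hi
        cases i with
        | zero => exact g5
        | succ i => exact g1 i (by omega)
      · rcases g2 with ⟨i, hi, h⟩ | h
        · exact ⟨i + 1, by omega, h⟩
        · exact ⟨0, by omega, h⟩
      · intro i hi hoi
        cases i with
        | zero => exact g6 hoi
        | succ i => exact g3 i (by omega) hoi
      · intro i hi hoi
        cases i with
        | zero => exact g7 hoi
        | succ i => exact g4 i (by omega) hoi
    have ih' := ih (fun i => U (i + 1)) (fun i => o (i + 1)) (fun i => a (i + 1))
      (fun i hi => ho (i + 1) (by omega)) (fun i hi => ho' (i + 1) (by omega))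
    by_cases hU0 : U 0 = ⊥
    · obtain ⟨S, H, g1, g2, g3, g4, -⟩ := ih' (fun j => if j = 0 then ⊥ else U 1) 1
        (by
          intro i j hij
          by_cases hi : i = 0
          · simp [hi]
          · simp [hi, show j ≠ 0 by omega])
        (by simp) (by simp) (by intro j; by_cases hj : j = 0 <;> simp [hj]) (by
          obtain ⟨i, hi, h⟩ := hne
          have : i ≠ 0 := fun hi0 => h (by rw [hi0, hU0])
          exact ⟨i - 1, by omega, by simpa [Nat.sub_add_cancel (by omega : 1 ≤ i)] using h⟩)
      refine glue S H ⊥ ⊥ g1 (Or.inl g2) g3 g4 (by rw [hU0]; exact Spl.bot ⊥) ?_ ?_ ?_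
      · intro _
        refine ⟨fun u hu => ?_, fun u hu => ?_⟩ <;>
        · rw [Submodule.mem_bot] at hu; rw [hu, map_zero]; exact zero_mem _
      · intro h
        refine ⟨fun u hu => ?_, fun u hu => ?_⟩
        · rw [← hU0]; exact ho' 0 (by omega) h u ((g1 0 (by omega)).s_le hu)
        · rw [← hU0]; exact ho' 0 (by omega) h u ((g1 0 (by omega)).h_le hu)
      · intro j u hu
        have := hle j hu
        rw [hU0, Submodule.mem_bot] at this
        exact ⟨0, zero_mem _, zero_mem _, 0, zero_mem _, zero_mem _, by rw [this]; simp⟩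
    have hspan : ∀ {v : V} {θ : V →ₗ[F] F}, θ v = 1 → Submodule.span F {v} ≠ ⊥ := by
      intro v θ hθ h
      rw [Submodule.span_singleton_eq_bot] at h
      rw [h, map_zero] at hθ
      exact zero_ne_one hθ
    have hbot : ∀ {W : Submodule F V} (f : Module.End F V), ∀ u ∈ (⊥ : Submodule F V), f u ∈ W :=
      fun f u hu => by rw [(Submodule.mem_bot F).mp hu, map_zero]; exact zero_mem _
    by_cases ho0 : o 0
    · have hmap := ho 0 (by omega) ho0
      by_cases hker : LinearMap.ker (a 0) ⊓ U 0 = ⊥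
      · -- the first arrow is injective
        have hinj : ∀ u ∈ U 0, a 0 u = 0 → u = 0 := fun u hu h => by
          have : u ∈ LinearMap.ker (a 0) ⊓ U 0 := ⟨h, hu⟩
          rw [hker] at this; simpa using this
        obtain ⟨S, H, g1, g2, g3, g4, g5⟩ := ih'
          (fun j => if j ≤ m then (G j).map (a 0) else U 1) (m + 1)
          (by
            intro i j hij
            by_cases hj : j ≤ m
            · simp only [hj, hij.trans hj, if_true]
              exact Submodule.map_mono (hmono hij)
            · by_cases hi : i ≤ m
              · simp only [hj, hi, if_true, if_false]
                rintro _ ⟨u, hu, rfl⟩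
                exact hmap u (hle i hu)
              · simp only [hj, hi, if_false]; exact le_rfl)
          (by simp [h0]) (by simp) (by
            intro j
            by_cases hj : j ≤ m
            · simp only [hj, if_true]
              rintro _ ⟨u, hu, rfl⟩
              exact hmap u (hle j hu)
            · simp [hj])
          (by
            obtain ⟨u, hu, hu0⟩ := Submodule.exists_mem_ne_zero_of_ne_bot hU0
            refine ⟨0, by omega, fun h => hu0 (hinj u hu ?_)⟩
            have := hmap u hu
            rw [show U 1 = ⊥ from h] at this
            simpa using this)
        have hcomp : ∀ j, SplCompat (U 0 ⊓ (S 0).comap (a 0)) (U 0 ⊓ (H 0).comap (a 0)) (G j) := by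
          intro j u hu
          have hmin : G j ≤ G (min j m) := by
            rcases le_total j m with h | h
            · rw [min_eq_left h]
            · rw [min_eq_right h, hm]; exact hle j
          have hmin' : G (min j m) ≤ G j := hmono (min_le_left _ _)
          have := g5 (min j m)
          simp only [min_le_right, if_true] at this
          obtain ⟨_, hs1, ⟨s, hs2, rfl⟩, _, hh1, ⟨h, hh2, rfl⟩, he⟩ :=
            this (a 0 u) ⟨u, hmin hu, rfl⟩
          refine ⟨s, ⟨hle _ hs2, hs1⟩, hmin' hs2, h, ⟨hle _ hh2, hh1⟩, hmin' hh2, ?_⟩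
          have h3 := hinj (u - (s + h)) (sub_mem (hle _ hu) (add_mem (hle _ hs2) (hle _ hh2)))
            (by rw [map_sub, map_add, he, sub_self])
          exact sub_eq_zero.mp h3
        refine glue S H (U 0 ⊓ (S 0).comap (a 0)) (U 0 ⊓ (H 0).comap (a 0)) g1 (Or.inl g2) g3 g4
          ?_ ?_ ?_ hcomp
        · refine ⟨inf_le_left, inf_le_left, ?_, ?_, ?_⟩
          · intro u hu
            obtain ⟨s, h1, -, h, h2, -, h3⟩ := hcomp m u (hm ▸ hu)
            exact ⟨s, h1, h, h2, h3⟩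
          · intro x hx hx'
            exact hinj x hx.1 ((g1 0 (by omega)).disj _ hx.2 hx'.2)
          · intro x hx y hy hne
            obtain ⟨l, hl⟩ := (g1 0 (by omega)).thin _ hx.2 _ hy.2 (fun h => hne (hinj x hx.1 h))
            refine ⟨l, sub_eq_zero.mp (hinj _ (sub_mem hy.1 ((U 0).smul_mem _ hx.1)) ?_)⟩
            rw [map_sub, map_smul, hl, sub_self]
        · exact fun _ => ⟨fun u hu => hu.2, fun u hu => hu.2⟩
        · exact fun h => absurd ho0 h
      · obtain ⟨v, hv, θ, hθ, hc⟩ := split_in hmono h0 (inf_le_right.trans hm.ge) hker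
        refine glue (fun _ => ⊥) (fun i => U (i + 1)) (Submodule.span F {v})
          (U 0 ⊓ LinearMap.ker θ) (fun i _ => Spl.bot _) (Or.inr (hspan hθ)) ?_ ?_
          (spl_of_functional hv.2 hθ) ?_ (fun h => absurd ho0 h)
          (fun j => compat_of_functional (hle j) hθ (hc j))
        · exact fun i hi h => ⟨hbot _, ho (i + 1) (by omega) h⟩
        · exact fun i hi h => ⟨hbot _, ho' (i + 1) (by omega) h⟩
        · refine fun _ => ⟨fun u hu => ?_, fun u hu => hmap u hu.1⟩
          obtain ⟨l, rfl⟩ := Submodule.mem_span_singleton.mp hu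
          rw [map_smul, hv.1, smul_zero]; exact zero_mem _
    · have hmap := ho' 0 (by omega) ho0
      by_cases hsurj : U 0 ≤ (U 1).map (a 0)
      · -- the first arrow is surjective
        obtain ⟨S, H, g1, g2, g3, g4, g5⟩ := ih'
          (fun j => Nat.casesOn j ⊥ (fun j => U 1 ⊓ (G j).comap (a 0))) (m + 1)
          (by
            refine monotone_nat_of_le_succ fun j => ?_
            cases j with
            | zero => exact bot_le
            | succ j => exact inf_le_inf_left _ (Submodule.comap_mono (hmono (Nat.le_succ j))))
          rfl (by
            change U 1 ⊓ (G m).comap (a 0) = U 1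
            rw [hm]; exact inf_eq_left.mpr hmap)
          (by
            intro j
            cases j with
            | zero => exact bot_le
            | succ j => exact inf_le_left)
          (by
            obtain ⟨u, hu, hu0⟩ := Submodule.exists_mem_ne_zero_of_ne_bot hU0
            obtain ⟨w, hw, rfl⟩ := hsurj hu
            refine ⟨0, by omega, fun h => hu0 ?_⟩
            rw [show (U 1) = ⊥ from h] at hw
            have hw0 : w = 0 := by simpa using hw
            rw [hw0, map_zero])
        have hG : ∀ j, SplCompat (S 0) (H 0) (U 1 ⊓ (G j).comap (a 0)) := fun j => g5 (j + 1)
        have hcomp : ∀ j, SplCompat ((S 0).map (a 0)) ((H 0).map (a 0)) (G j) := by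
          intro j u hu
          obtain ⟨w, hw, rfl⟩ := hsurj (hle j hu)
          obtain ⟨s, h1, h2, h, h3, h4, rfl⟩ := hG j w ⟨hw, hu⟩
          exact ⟨a 0 s, ⟨s, h1, rfl⟩, h2.2, a 0 h, ⟨h, h3, rfl⟩, h4.2, map_add _ _ _⟩
        refine glue S H ((S 0).map (a 0)) ((H 0).map (a 0)) g1 (Or.inl g2) g3 g4
          ⟨?_, ?_, ?_, ?_, ?_⟩ (fun h => absurd h ho0)
          (fun _ => ⟨fun u hu => ⟨u, hu, rfl⟩, fun u hu => ⟨u, hu, rfl⟩⟩) hcomp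
        · rintro _ ⟨u, hu, rfl⟩; exact hmap u ((g1 0 (by omega)).s_le hu)
        · rintro _ ⟨u, hu, rfl⟩; exact hmap u ((g1 0 (by omega)).h_le hu)
        · intro u hu
          obtain ⟨s, h1, -, h, h2, -, h3⟩ := hcomp m u (hm ▸ hu)
          exact ⟨s, h1, h, h2, h3⟩
        · rintro _ ⟨s, hs, rfl⟩ ⟨h, hh, hsh⟩
          have hs' := (g1 0 (by omega)).s_le hs
          have hh' := (g1 0 (by omega)).h_le hh
          obtain ⟨s', k1, k2, h', k3, k4, k5⟩ := hG 0 (s - h)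
            ⟨sub_mem hs' hh', by
              change a 0 (s - h) ∈ G 0
              rw [map_sub, hsh, sub_self]; exact zero_mem _⟩
          have : s - s' = 0 := (g1 0 (by omega)).disj _ (sub_mem hs k1) (by
            rw [show s - s' = h + h' by
              have : s = s' + h' + h := by rw [← k5]; abel
              rw [this]; abel]
            exact add_mem hh k3)
          rw [sub_eq_zero.mp this]
          have := k2.2
          rw [h0] at this
          simpa using this
        · rintro _ ⟨x, hx, rfl⟩ _ ⟨y, hy, rfl⟩ hne
          obtain ⟨l, hl⟩ := (g1 0 (by omega)).thin x hx y hy (fun h => hne (by rw [h, map_zero]))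
          exact ⟨l, by rw [hl, map_smul]⟩
      · obtain ⟨v, θ, hθ, hv, hR, hc⟩ := split_off (m := m) hmono h0 (by rw [hm]; exact hsurj)
        refine glue (fun _ => ⊥) (fun i => U (i + 1)) (Submodule.span F {v})
          (U 0 ⊓ LinearMap.ker θ) (fun i _ => Spl.bot _) (Or.inr (hspan hθ)) ?_ ?_
          (spl_of_functional (hm ▸ hv) hθ) (fun h => absurd h ho0) ?_
          (fun j => compat_of_functional (hle j) hθ (hc j))
        · exact fun i hi h => ⟨hbot _, ho (i + 1) (by omega) h⟩
        · exact fun i hi h => ⟨hbot _, ho' (i + 1) (by omega) h⟩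
        · exact fun _ => ⟨hbot _, fun u hu => ⟨hmap u hu, hR ⟨u, hu, rfl⟩⟩⟩

end typeA
end HeckeA

namespace HeckeA

/-! ### Zigzag data -/

section zig
variable {F V V' : Type} [Field F] [AddCommGroup V'] [Module F V'] [AddCommGroup V] [Module F V]

/-- A representation, inside the space `V`, of the (slightly deformed) zigzag algebra of the line
`1 - 2 - ⋯ - N`: the space at the node `c` is `U c`, the arrow from `c` to an adjacent node `d` is
the restriction of `p d`, and the loop at `c` is the restriction of `y c`. The scalars `γ c d`
compare the paths `c → d → c` with the loop. The spaces outside of `1, …, N` vanish. -/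
structure Zig (N : ℕ) (γ : ℕ → ℕ → F) (U : ℕ → Submodule F V) (p y : ℕ → Module.End F V) :
    Prop where
  low : U 0 = ⊥
  high : ∀ c, N < c → U c = ⊥
  γ_ne : ∀ c d, (c + 1 = d ∨ d + 1 = c) → 1 ≤ c → c ≤ N → 1 ≤ d → d ≤ N → γ c d ≠ 0
  p_mem : ∀ c v, p c v ∈ U c
  y_mem : ∀ c, ∀ u ∈ U c, y c u ∈ U c
  pp : ∀ c d, (c + 1 = d ∨ d + 1 = c) → 1 ≤ d → d ≤ N → ∀ u ∈ U c, p c (p d u) = γ c d • y c u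
  up : ∀ c, ∀ u ∈ U c, p (c + 2) (p (c + 1) u) = 0
  down : ∀ c, ∀ u ∈ U (c + 2), p c (p (c + 1) u) = 0
  yp : ∀ c d, (c + 1 = d ∨ d + 1 = c) → ∀ u ∈ U c, y d (p d u) = 0
  py : ∀ c d, (c + 1 = d ∨ d + 1 = c) → ∀ u ∈ U c, p d (y c u) = 0
  yy : ∀ c, ∀ u ∈ U c, y c (y c u) = 0

/-- A subrepresentation of a zigzag datum. -/
structure Stab (U : ℕ → Submodule F V) (p y : ℕ → Module.End F V) (S : ℕ → Submodule F V) :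
    Prop where
  le : ∀ c, S c ≤ U c
  p_mem : ∀ c d, (c + 1 = d ∨ d + 1 = c) → ∀ u ∈ S c, p d u ∈ S d
  y_mem : ∀ c, ∀ u ∈ S c, y c u ∈ S c

/-- Indecomposability of a zigzag datum. -/
def ZIndec (U : ℕ → Submodule F V) (p y : ℕ → Module.End F V) : Prop :=
  (∃ c, U c ≠ ⊥) ∧ ∀ S K : ℕ → Submodule F V, Stab U p y S → Stab U p y K →
    (∀ c, ∀ u ∈ U c, ∃ s ∈ S c, ∃ k ∈ K c, u = s + k) → (∀ c, ∀ x ∈ S c, x ∈ K c → x = 0) →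
    (∀ c, S c = ⊥) ∨ ∀ c, K c = ⊥

/-- Isomorphism of zigzag data, encoded by the graph of an isomorphism. -/
def ZIso (U : ℕ → Submodule F V) (p y : ℕ → Module.End F V) (U' : ℕ → Submodule F V')
    (p' y' : ℕ → Module.End F V') : Prop :=
  ∃ G : ℕ → Submodule F (V × V'), (∀ c, ∀ x ∈ G c, x.1 ∈ U c ∧ x.2 ∈ U' c) ∧
    (∀ c d, (c + 1 = d ∨ d + 1 = c) → ∀ x ∈ G c, (p d x.1, p' d x.2) ∈ G d) ∧
    (∀ c, ∀ x ∈ G c, (y c x.1, y' c x.2) ∈ G c) ∧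
    (∀ c, ∀ x ∈ G c, x.1 = 0 ↔ x.2 = 0) ∧
    (∀ c, ∀ u ∈ U c, ∃ x ∈ G c, x.1 = u) ∧ ∀ c, ∀ u ∈ U' c, ∃ x ∈ G c, x.2 = u

theorem Zig.zero_of_not_range {N : ℕ} {γ : ℕ → ℕ → F} {U : ℕ → Submodule F V}
    {p y : ℕ → Module.End F V} (hZ : Zig N γ U p y) {d : ℕ} (hd : ¬ (1 ≤ d ∧ d ≤ N)) :
    U d = ⊥ := by
  by_cases h : d = 0
  · rw [h]; exact hZ.low
  · exact hZ.high d (by omega)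

theorem Zig.p_zero {N : ℕ} {γ : ℕ → ℕ → F} {U : ℕ → Submodule F V}
    {p y : ℕ → Module.End F V} (hZ : Zig N γ U p y) {d : ℕ} (hd : ¬ (1 ≤ d ∧ d ≤ N)) (v : V) :
    p d v = 0 := by
  have := hZ.p_mem d v
  rw [hZ.zero_of_not_range hd] at this
  simpa using this

/-- If a loop acts by a nonzero map, then the datum is the projective one at that node. -/
theorem Zig.loop {N : ℕ} {γ : ℕ → ℕ → F} {U : ℕ → Submodule F V}
    {p y : ℕ → Module.End F V} (hZ : Zig N γ U p y) (hI : ZIndec U p y) {c : ℕ} {v : V}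
    (hv : v ∈ U c) (hv0 : y c v ≠ 0) :
    (∀ u ∈ U c, ∃ l m : F, u = l • v + m • y c v) ∧
    (∀ d, (c + 1 = d ∨ d + 1 = c) → ∀ u ∈ U d, ∃ l : F, u = l • p d v) ∧
    (∀ d, ¬ (c + 1 = d ∨ d + 1 = c) → d ≠ c → U d = ⊥) ∧
    (∀ l m : F, l • v + m • y c v = 0 → l = 0 ∧ m = 0) ∧
    (∀ d, (c + 1 = d ∨ d + 1 = c) → 1 ≤ d → d ≤ N → p d v ≠ 0) := by
  classical
  have hc : 1 ≤ c ∧ c ≤ N := by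
    by_contra h
    rw [hZ.zero_of_not_range h, Submodule.mem_bot] at hv
    exact hv0 (by rw [hv, map_zero])
  have hγ : ∀ d, (c + 1 = d ∨ d + 1 = c) → 1 ≤ d → d ≤ N → γ c d ≠ 0 :=
    fun d hd h1 h2 => hZ.γ_ne c d hd hc.1 hc.2 h1 h2
  have hind : ∀ l m : F, l • v + m • y c v = 0 → l = 0 ∧ m = 0 := by
    intro l m h
    have h1 := congrArg (fun u => y c u) h
    simp only [map_add, map_smul, hZ.yy c v hv, smul_zero, add_zero, map_zero] at h1
    have hl : l = 0 := (smul_eq_zero.mp h1).resolve_right hv0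
    rw [hl, zero_smul, zero_add] at h
    exact ⟨hl, (smul_eq_zero.mp h).resolve_right hv0⟩
  have hp : ∀ d, (c + 1 = d ∨ d + 1 = c) → 1 ≤ d → d ≤ N → p d v ≠ 0 := by
    intro d hd h1 h2 h
    have := hZ.pp c d hd h1 h2 v hv
    rw [h, map_zero] at this
    exact (smul_ne_zero (hγ d hd h1 h2) hv0) this.symm
  obtain ⟨θ, hθ, -⟩ := exists_functional (G := (⊥ : Submodule F V)) (by simpa using hv0)
  -- correct the generator so that the functional vanishes on it
  obtain ⟨x, hx, hxy, hθx, hxv⟩ : ∃ x ∈ U c, y c x = y c v ∧ θ x = 0 ∧ x = v - θ v • y c v := by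
    refine ⟨v - θ v • y c v, sub_mem hv ((U c).smul_mem _ (hZ.y_mem c v hv)), ?_, ?_, rfl⟩
    · rw [map_sub, map_smul, hZ.yy c v hv, smul_zero, sub_zero]
    · rw [map_sub, map_smul, hθ]; simp
  have hpx : ∀ d, (c + 1 = d ∨ d + 1 = c) → p d x = p d v := by
    intro d hd
    rw [hxv, map_sub, map_smul, hZ.py c d hd v hv, smul_zero, sub_zero]
  set w := y c v with hw
  have hwU : w ∈ U c := hZ.y_mem c v hv
  have hyw : y c w = 0 := hZ.yy c v hv
  let S : ℕ → Submodule F V := fun d => if d = c then Submodule.span F {x, w} else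
    if c + 1 = d ∨ d + 1 = c then Submodule.span F {p d x} else ⊥
  let K : ℕ → Submodule F V := fun d =>
    if d = c then U c ⊓ (LinearMap.ker θ ⊓ (LinearMap.ker θ).comap (y c)) else
    if c + 1 = d ∨ d + 1 = c then U d ⊓ (LinearMap.ker θ).comap (p c) else U d
  have Sc : S c = Submodule.span F {x, w} := by simp only [S, if_true]
  have Kc : ∀ u, u ∈ K c ↔ u ∈ U c ∧ θ u = 0 ∧ θ (y c u) = 0 := by
    intro u; simp only [K, if_true]; rfl
  have adj_ne : ∀ d, (c + 1 = d ∨ d + 1 = c) → d ≠ c := by intro d hd; omega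
  have Sd : ∀ d, (c + 1 = d ∨ d + 1 = c) → S d = Submodule.span F {p d x} := by
    intro d hd; simp only [S, if_neg (adj_ne d hd), if_pos hd]
  have Kd : ∀ d, (c + 1 = d ∨ d + 1 = c) → ∀ u, u ∈ K d ↔ u ∈ U d ∧ θ (p c u) = 0 := by
    intro d hd u; simp only [K, if_neg (adj_ne d hd), if_pos hd]; rfl
  have So : ∀ d, ¬ (c + 1 = d ∨ d + 1 = c) → d ≠ c → S d = ⊥ := by
    intro d hd h; simp only [S, if_neg h, if_neg hd]
  have Ko : ∀ d, ¬ (c + 1 = d ∨ d + 1 = c) → d ≠ c → K d = U d := by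
    intro d hd h; simp only [K, if_neg h, if_neg hd]
  have hKU : ∀ d, K d ≤ U d := by
    intro d u hu
    by_cases h : d = c
    · subst h; exact ((Kc u).mp hu).1
    by_cases h' : c + 1 = d ∨ d + 1 = c
    · exact ((Kd d h' u).mp hu).1
    · rwa [Ko d h' h] at hu
  -- composites of two arrows in the same direction vanish
  have hstraight : ∀ d d', (c + 1 = d ∨ d + 1 = c) → (d + 1 = d' ∨ d' + 1 = d) → d' ≠ c →
      (∀ u ∈ U c, p d' (p d u) = 0) ∧ ∀ u ∈ U d', p c (p d u) = 0 := by
    intro d d' h h' hne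
    rcases h with rfl | h
    · obtain rfl : d' = c + 2 := by omega
      exact ⟨hZ.up c, hZ.down c⟩
    · obtain rfl : d' + 2 = c := by omega
      obtain rfl : d = d' + 1 := by omega
      exact ⟨hZ.down d', hZ.up d'⟩
  have hS : Stab U p y S := by
    refine ⟨?_, ?_, ?_⟩
    · intro d
      by_cases h : d = c
      · subst h; rw [Sc, Submodule.span_le]
        rintro z (rfl | hz)
        · exact hx
        · rw [show z = w from hz]; exact hwU
      by_cases h' : c + 1 = d ∨ d + 1 = c
      · rw [Sd d h', Submodule.span_singleton_le_iff_mem]; exact hZ.p_mem d x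
      · rw [So d h' h]; exact bot_le
    · intro a b hab u hu
      by_cases h : a = c
      · subst h
        rw [Sc, Submodule.mem_span_pair] at hu
        obtain ⟨l, m, rfl⟩ := hu
        rw [Sd b hab, map_add, map_smul, map_smul, hw, hZ.py a b hab v hv, smul_zero, add_zero]
        exact Submodule.smul_mem _ _ (Submodule.mem_span_singleton_self _)
      by_cases h' : c + 1 = a ∨ a + 1 = c
      · rw [Sd a h', Submodule.mem_span_singleton] at hu
        obtain ⟨l, rfl⟩ := hu
        rw [map_smul]
        refine Submodule.smul_mem _ _ ?_
        by_cases hb : b = c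
        · subst hb
          rw [Sc]
          by_cases hr : 1 ≤ a ∧ a ≤ N
          · rw [hZ.pp b a h' hr.1 hr.2 x hx, hxy]
            exact Submodule.smul_mem _ _ (Submodule.subset_span (by simp))
          · rw [hZ.p_zero hr, map_zero]; exact zero_mem _
        · rw [(hstraight a b h' hab hb).1 x hx]; exact zero_mem _
      · rw [So a h' h, Submodule.mem_bot] at hu
        rw [hu, map_zero]; exact zero_mem _
    · intro a u hu
      by_cases h : a = c
      · subst h
        rw [Sc, Submodule.mem_span_pair] at hu
        obtain ⟨l, m, rfl⟩ := hu
        rw [Sc, map_add, map_smul, map_smul, hyw, smul_zero, add_zero, hxy]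
        exact Submodule.smul_mem _ _ (Submodule.subset_span (by simp))
      by_cases h' : c + 1 = a ∨ a + 1 = c
      · rw [Sd a h', Submodule.mem_span_singleton] at hu
        obtain ⟨l, rfl⟩ := hu
        rw [map_smul, hZ.yp c a h' x hx, smul_zero]; exact zero_mem _
      · rw [So a h' h, Submodule.mem_bot] at hu
        rw [hu, map_zero]; exact zero_mem _
  have hK : Stab U p y K := by
    refine ⟨hKU, ?_, ?_⟩
    · intro a b hab u hu
      by_cases h : a = c
      · subst h
        rw [Kc] at hu
        rw [Kd b hab]
        refine ⟨hZ.p_mem b u, ?_⟩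
        by_cases hr : 1 ≤ b ∧ b ≤ N
        · rw [hZ.pp a b hab hr.1 hr.2 u hu.1, map_smul, hu.2.2, smul_zero]
        · rw [hZ.p_zero hr, map_zero, map_zero]
      by_cases hb : b = c
      · subst hb
        have hab' : b + 1 = a ∨ a + 1 = b := hab.symm
        rw [Kd a hab'] at hu
        rw [Kc]
        exact ⟨hZ.p_mem b u, hu.2, by rw [hZ.yp a b hab u hu.1, map_zero]⟩
      by_cases hb' : c + 1 = b ∨ b + 1 = c
      · rw [Kd b hb']
        refine ⟨hZ.p_mem b u, ?_⟩
        rw [(hstraight b a hb' hab.symm h).2 u (hKU a hu), map_zero]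
      · rw [Ko b hb' hb]; exact hZ.p_mem b u
    · intro a u hu
      by_cases h : a = c
      · subst h
        rw [Kc] at hu ⊢
        exact ⟨hZ.y_mem a u hu.1, hu.2.2, by rw [hZ.yy a u hu.1, map_zero]⟩
      by_cases h' : c + 1 = a ∨ a + 1 = c
      · rw [Kd a h'] at hu ⊢
        exact ⟨hZ.y_mem a u hu.1, by rw [hZ.py a c h'.symm u hu.1, map_zero]⟩
      · rw [Ko a h' h] at hu ⊢
        exact hZ.y_mem a u hu
  have hθpp : ∀ d, (c + 1 = d ∨ d + 1 = c) → 1 ≤ d → d ≤ N → θ (p c (p d x)) = γ c d := by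
    intro d hd h1 h2
    rw [hZ.pp c d hd h1 h2 x hx, hxy, map_smul, hθ, smul_eq_mul, mul_one]
  have hbot := (hI.2 S K hS hK ?_ ?_).resolve_left (fun h => by
    have h1 := h c
    rw [Sc] at h1
    have h2 : w ∈ Submodule.span F {x, w} := Submodule.subset_span (by simp)
    rw [h1] at h2
    exact hv0 (by simpa using h2))
  · have hall : ∀ u ∈ U c, ∃ l m : F, u = l • v + m • w := by
      intro u hu
      have h1 : u - θ (y c u) • x - θ u • w ∈ K c := by
        rw [Kc]
        refine ⟨sub_mem (sub_mem hu ((U c).smul_mem _ hx)) ((U c).smul_mem _ hwU), ?_, ?_⟩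
        · rw [map_sub, map_sub, map_smul, map_smul, hθx, hθ]; simp
        · simp only [map_sub, map_smul, hyw, hxy]; rw [hθ]; simp
      rw [hbot c, Submodule.mem_bot, hxv] at h1
      refine ⟨θ (y c u), θ u - θ (y c u) * θ v, ?_⟩
      rw [← sub_eq_zero, ← h1]
      module
    refine ⟨hall, ?_, ?_, hind, hp⟩
    · intro d hd u hu
      by_cases hr : 1 ≤ d ∧ d ≤ N
      · have h1 : u - ((γ c d)⁻¹ * θ (p c u)) • p d x ∈ K d := by
          rw [Kd d hd]
          refine ⟨sub_mem hu ((U d).smul_mem _ (hZ.p_mem d x)), ?_⟩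
          rw [map_sub, map_sub, map_smul, map_smul, hθpp d hd hr.1 hr.2]
          have := hγ d hd hr.1 hr.2
          rw [smul_eq_mul]; field_simp; ring
        rw [hbot d, Submodule.mem_bot, hpx d hd] at h1
        exact ⟨_, sub_eq_zero.mp h1⟩
      · rw [hZ.zero_of_not_range hr, Submodule.mem_bot] at hu
        exact ⟨0, by rw [hu, zero_smul]⟩
    · intro d hd hne
      rw [← Ko d hd hne]; exact hbot d
  · intro d u hu
    by_cases h : d = c
    · subst h
      refine ⟨θ (y d u) • x + θ u • w, ?_, u - (θ (y d u) • x + θ u • w), ?_, by abel⟩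
      · rw [Sc, Submodule.mem_span_pair]; exact ⟨_, _, rfl⟩
      · rw [Kc]
        refine ⟨sub_mem hu (add_mem ((U d).smul_mem _ hx) ((U d).smul_mem _ hwU)), ?_, ?_⟩
        · rw [map_sub, map_add, map_smul, map_smul, hθx, hθ]; simp
        · simp only [map_sub, map_add, map_smul, hyw, hxy]; rw [hθ]; simp
    by_cases h' : c + 1 = d ∨ d + 1 = c
    · by_cases hr : 1 ≤ d ∧ d ≤ N
      · refine ⟨((γ c d)⁻¹ * θ (p c u)) • p d x, ?_, u - ((γ c d)⁻¹ * θ (p c u)) • p d x, ?_,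
          by abel⟩
        · rw [Sd d h']; exact Submodule.smul_mem _ _ (Submodule.mem_span_singleton_self _)
        · rw [Kd d h']
          refine ⟨sub_mem hu ((U d).smul_mem _ (hZ.p_mem d x)), ?_⟩
          rw [map_sub, map_sub, map_smul, map_smul, hθpp d h' hr.1 hr.2]
          have := hγ d h' hr.1 hr.2
          rw [smul_eq_mul]; field_simp; ring
      · rw [hZ.zero_of_not_range hr, Submodule.mem_bot] at hu
        exact ⟨0, zero_mem _, 0, zero_mem _, by rw [hu, add_zero]⟩
    · exact ⟨0, zero_mem _, u, by rwa [Ko d h' h], (zero_add u).symm⟩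
  · intro d u hu hu'
    by_cases h : d = c
    · subst h
      rw [Sc, Submodule.mem_span_pair] at hu
      obtain ⟨l, m, rfl⟩ := hu
      rw [Kc] at hu'
      have h1 := hu'.2.1
      have h2 := hu'.2.2
      simp only [map_add, map_smul, hyw, hxy, hθx, smul_zero, add_zero, zero_add] at h1 h2
      rw [hθ, smul_eq_mul, mul_one] at h1 h2
      rw [h1, h2, zero_smul, zero_smul, add_zero]
    by_cases h' : c + 1 = d ∨ d + 1 = c
    · by_cases hr : 1 ≤ d ∧ d ≤ N
      · rw [Sd d h', Submodule.mem_span_singleton] at hu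
        obtain ⟨l, rfl⟩ := hu
        rw [Kd d h'] at hu'
        have h1 := hu'.2
        rw [map_smul, map_smul, hθpp d h' hr.1 hr.2, smul_eq_mul] at h1
        rw [(mul_eq_zero.mp h1).resolve_right (hγ d h' hr.1 hr.2), zero_smul]
      · have := hS.le d hu
        rw [hZ.zero_of_not_range hr, Submodule.mem_bot] at this
        exact this
    · rw [So d h' h] at hu
      simpa using hu

end zig
end HeckeA

namespace HeckeA

section zig2
variable {F V V' : Type} [Field F] [AddCommGroup V'] [Module F V'] [AddCommGroup V] [Module F V]
variable {U' : ℕ → Submodule F V'} {p' y' : ℕ → Module.End F V'}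
  {N : ℕ} {γ : ℕ → ℕ → F} {U : ℕ → Submodule F V} {p y : ℕ → Module.End F V}

/-- Two indecomposable zigzag data with a nonzero loop at the same node are isomorphic. -/
theorem Zig.iso_of_loop (hZ : Zig N γ U p y) (hI : ZIndec U p y) (hZ' : Zig N γ U' p' y')
    (hI' : ZIndec U' p' y') {c : ℕ} {v : V} (hv : v ∈ U c) (hv0 : y c v ≠ 0)
    {v' : V'} (hv' : v' ∈ U' c) (hv0' : y' c v' ≠ 0) : ZIso U p y U' p' y' := by
  classical
  obtain ⟨a1, a2, a3, a4, a5⟩ := hZ.loop hI hv hv0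
  obtain ⟨b1, b2, b3, b4, b5⟩ := hZ'.loop hI' hv' hv0'
  let G : ℕ → Submodule F (V × V') := fun d =>
    if d = c then Submodule.span F {(v, v'), (y c v, y' c v')} else
    if c + 1 = d ∨ d + 1 = c then Submodule.span F {(p d v, p' d v')} else ⊥
  have adj_ne : ∀ d, (c + 1 = d ∨ d + 1 = c) → d ≠ c := by intro d hd; omega
  have Gc : ∀ x, x ∈ G c ↔ ∃ l m : F, x = (l • v + m • y c v, l • v' + m • y' c v') := by
    intro x
    simp only [G, if_true, Submodule.mem_span_pair]
    exact ⟨fun ⟨l, m, h⟩ => ⟨l, m, h.symm⟩, fun ⟨l, m, h⟩ => ⟨l, m, h.symm⟩⟩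
  have Gd : ∀ d, (c + 1 = d ∨ d + 1 = c) → ∀ x, x ∈ G d ↔ ∃ l : F, x = (l • p d v, l • p' d v') := by
    intro d hd x
    simp only [G, if_neg (adj_ne d hd), if_pos hd, Submodule.mem_span_singleton]
    exact ⟨fun ⟨l, h⟩ => ⟨l, h.symm⟩, fun ⟨l, h⟩ => ⟨l, h.symm⟩⟩
  have Go : ∀ d, ¬ (c + 1 = d ∨ d + 1 = c) → d ≠ c → ∀ x, x ∈ G d ↔ x = 0 := by
    intro d hd h x; simp only [G, if_neg h, if_neg hd, Submodule.mem_bot]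
  have hstraight : ∀ d d', (c + 1 = d ∨ d + 1 = c) → (d + 1 = d' ∨ d' + 1 = d) → d' ≠ c →
      p d' (p d v) = 0 ∧ p' d' (p' d v') = 0 := by
    intro d d' h h' hne
    rcases h with rfl | h
    · obtain rfl : d' = c + 2 := by omega
      exact ⟨hZ.up c v hv, hZ'.up c v' hv'⟩
    · obtain rfl : d' + 2 = c := by omega
      obtain rfl : d = d' + 1 := by omega
      exact ⟨hZ.down d' v hv, hZ'.down d' v' hv'⟩
  refine ⟨G, ?_, ?_, ?_, ?_, ?_, ?_⟩
  · intro d x hx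
    by_cases h : d = c
    · subst h
      obtain ⟨l, m, rfl⟩ := (Gc x).mp hx
      exact ⟨add_mem ((U d).smul_mem _ hv) ((U d).smul_mem _ (hZ.y_mem d v hv)),
        add_mem ((U' d).smul_mem _ hv') ((U' d).smul_mem _ (hZ'.y_mem d v' hv'))⟩
    by_cases h' : c + 1 = d ∨ d + 1 = c
    · obtain ⟨l, rfl⟩ := (Gd d h' x).mp hx
      exact ⟨(U d).smul_mem _ (hZ.p_mem d v), (U' d).smul_mem _ (hZ'.p_mem d v')⟩
    · rw [(Go d h' h x).mp hx]
      exact ⟨zero_mem _, zero_mem _⟩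
  · intro a b hab x hx
    by_cases h : a = c
    · subst h
      obtain ⟨l, m, rfl⟩ := (Gc x).mp hx
      refine (Gd b hab _).mpr ⟨l, ?_⟩
      simp only [map_add, map_smul, hZ.py a b hab v hv, hZ'.py a b hab v' hv', smul_zero, add_zero]
    by_cases h' : c + 1 = a ∨ a + 1 = c
    · obtain ⟨l, rfl⟩ := (Gd a h' x).mp hx
      by_cases hb : b = c
      · subst hb
        by_cases hr : 1 ≤ a ∧ a ≤ N
        · refine (Gc _).mpr ⟨0, l * γ b a, ?_⟩
          simp only [map_smul, hZ.pp b a h' hr.1 hr.2 v hv, hZ'.pp b a h' hr.1 hr.2 v' hv',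
            smul_smul, zero_smul, zero_add]
        · simp only [hZ.p_zero hr, hZ'.p_zero hr, map_zero, smul_zero]
          exact zero_mem (G b)
      · simp only [map_smul, (hstraight a b h' hab hb).1, (hstraight a b h' hab hb).2, smul_zero]
        exact zero_mem (G b)
    · rw [(Go a h' h x).mp hx]
      simp only [Prod.fst_zero, Prod.snd_zero, map_zero]
      exact zero_mem (G b)
  · intro a x hx
    by_cases h : a = c
    · subst h
      obtain ⟨l, m, rfl⟩ := (Gc x).mp hx
      refine (Gc _).mpr ⟨0, l, ?_⟩
      simp only [map_add, map_smul, hZ.yy a v hv, hZ'.yy a v' hv', smul_zero, add_zero, zero_smul,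
        zero_add]
    by_cases h' : c + 1 = a ∨ a + 1 = c
    · obtain ⟨l, rfl⟩ := (Gd a h' x).mp hx
      simp only [map_smul, hZ.yp c a h' v hv, hZ'.yp c a h' v' hv', smul_zero]
      exact zero_mem (G a)
    · rw [(Go a h' h x).mp hx]
      simp only [Prod.fst_zero, Prod.snd_zero, map_zero]
      exact zero_mem (G a)
  · intro d x hx
    by_cases h : d = c
    · subst h
      obtain ⟨l, m, rfl⟩ := (Gc x).mp hx
      constructor
      · intro h; obtain ⟨rfl, rfl⟩ := a4 l m h; simp
      · intro h; obtain ⟨rfl, rfl⟩ := b4 l m h; simp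
    by_cases h' : c + 1 = d ∨ d + 1 = c
    · obtain ⟨l, rfl⟩ := (Gd d h' x).mp hx
      by_cases hr : 1 ≤ d ∧ d ≤ N
      · change l • p d v = 0 ↔ l • p' d v' = 0
        rw [smul_eq_zero, smul_eq_zero, or_iff_left (a5 d h' hr.1 hr.2),
          or_iff_left (b5 d h' hr.1 hr.2)]
      · simp only [hZ.p_zero hr, hZ'.p_zero hr, smul_zero]
    · rw [(Go d h' h x).mp hx]; simp
  · intro d u hu
    by_cases h : d = c
    · subst h
      obtain ⟨l, m, rfl⟩ := a1 u hu
      exact ⟨_, (Gc _).mpr ⟨l, m, rfl⟩, rfl⟩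
    by_cases h' : c + 1 = d ∨ d + 1 = c
    · obtain ⟨l, rfl⟩ := a2 d h' u hu
      exact ⟨_, (Gd d h' _).mpr ⟨l, rfl⟩, rfl⟩
    · rw [a3 d h' h, Submodule.mem_bot] at hu
      exact ⟨0, zero_mem _, hu.symm⟩
  · intro d u hu
    by_cases h : d = c
    · subst h
      obtain ⟨l, m, rfl⟩ := b1 u hu
      exact ⟨_, (Gc _).mpr ⟨l, m, rfl⟩, rfl⟩
    by_cases h' : c + 1 = d ∨ d + 1 = c
    · obtain ⟨l, rfl⟩ := b2 d h' u hu
      exact ⟨_, (Gd d h' _).mpr ⟨l, rfl⟩, rfl⟩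
    · rw [b3 d h' h, Submodule.mem_bot] at hu
      exact ⟨0, zero_mem _, hu.symm⟩

/-- If all loops vanish, then all components of an indecomposable zigzag datum have
dimension at most one: the datum is glued from two representations of quivers of type `A`, one for
each parity of the sources. -/
theorem Zig.thin (hZ : Zig N γ U p y) (hI : ZIndec U p y) (hy : ∀ c, ∀ u ∈ U c, y c u = 0) :
    ∀ c, Thin (U c) := by
  classical
  have hpp : ∀ b c d, (b + 1 = c ∨ c + 1 = b) → (c + 1 = d ∨ d + 1 = c) → ∀ u ∈ U b,
      p d (p c u) = 0 := by
    intro b c d h h' u hu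
    by_cases hbd : b = d
    · subst hbd
      by_cases hr : 1 ≤ c ∧ c ≤ N
      · rw [hZ.pp b c h hr.1 hr.2 u hu, hy b u hu, smul_zero]
      · rw [hZ.p_zero hr, map_zero]
    rcases h with rfl | rfl
    · obtain rfl : d = b + 2 := by omega
      exact hZ.up b u hu
    · obtain rfl : c = d + 1 := by omega
      exact hZ.down d u hu
  let R : ℕ → Submodule F V := fun c => (U (c - 1)).map (p c) ⊔ (U (c + 1)).map (p c)
  have hRU : ∀ c, R c ≤ U c := by
    intro c
    refine sup_le ?_ ?_ <;>
    · rintro _ ⟨u, -, rfl⟩; exact hZ.p_mem c u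
  have hR0 : ∀ c d, (c + 1 = d ∨ d + 1 = c) → ∀ u ∈ R c, p d u = 0 := by
    intro c d h u hu
    by_cases hc : c = 0
    · have := hRU c hu
      rw [hc, hZ.low, Submodule.mem_bot] at this
      rw [this, map_zero]
    obtain ⟨_, ⟨u1, h1, rfl⟩, _, ⟨u2, h2, rfl⟩, rfl⟩ := Submodule.mem_sup.mp hu
    rw [map_add, hpp (c - 1) c d (by omega) h u1 h1, hpp (c + 1) c d (by omega) h u2 h2, add_zero]
  have hpR : ∀ c d, (c + 1 = d ∨ d + 1 = c) → ∀ u ∈ U c, p d u ∈ R d := by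
    intro c d h u hu
    rcases h with rfl | h
    · exact Submodule.mem_sup_left ⟨u, by simpa using hu, rfl⟩
    · exact Submodule.mem_sup_right ⟨u, by rwa [h], rfl⟩
  have hT : ∀ c, ∃ T : Submodule F V, T ≤ U c ∧ (∀ u ∈ U c, ∃ t ∈ T, ∃ r ∈ R c, u = t + r) ∧
      ∀ x ∈ T, x ∈ R c → x = 0 := by
    intro c
    obtain ⟨C, hC⟩ := Submodule.exists_isCompl (R c)
    refine ⟨C ⊓ U c, inf_le_right, fun u hu => ?_, fun x hx hx' => ?_⟩
    · have : u ∈ R c ⊔ C := by rw [hC.sup_eq_top]; trivial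
      obtain ⟨r, hr, t, ht, rfl⟩ := Submodule.mem_sup.mp this
      refine ⟨t, ⟨ht, ?_⟩, r, hr, add_comm _ _⟩
      have := sub_mem hu (hRU c hr)
      rwa [add_sub_cancel_left] at this
    · have : x ∈ R c ⊓ C := ⟨hx', hx.1⟩
      rw [hC.inf_eq_bot] at this
      simpa using this
  choose T hTU hTs hTd using hT
  -- `o i` selects the nodes of the chosen parity
  obtain ⟨o, ho, X, hXt, hXr, hXne⟩ : ∃ o : ℕ → Prop, (∀ i, o (i + 1) ↔ ¬ o i) ∧
      ∃ X : ℕ → Submodule F V, (∀ i, o i → X i = T i) ∧ (∀ i, ¬ o i → X i = R i) ∧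
      ∃ i ≤ N + 1, X i ≠ ⊥ := by
    obtain ⟨c, hc⟩ := hI.1
    have hcN : c ≤ N := by
      by_contra h; exact hc (hZ.high c (by omega))
    obtain ⟨u, hu, hu0⟩ := Submodule.exists_mem_ne_zero_of_ne_bot hc
    obtain ⟨t, ht, r, hr, rfl⟩ := hTs c u hu
    have key : ∀ ε : ℕ, ∀ i, Even (i + 1 + ε) ↔ ¬ Even (i + ε) := by
      intro ε i; rw [show i + 1 + ε = i + ε + 1 by ring, Nat.even_add_one]
    by_cases ht0 : t = 0
    · refine ⟨fun i => Even (i + (c + 1)), key _, fun i => if Even (i + (c + 1)) then T i else R i,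
        fun i h => if_pos h, fun i h => if_neg h, c, by omega, fun h => ?_⟩
      have hodd : ¬ Even (c + (c + 1)) := by rw [Nat.not_even_iff_odd]; exact ⟨c, by ring⟩
      have h' : R c = ⊥ := (if_neg hodd).symm.trans h
      rw [h', Submodule.mem_bot] at hr
      exact hu0 (by rw [hr, ht0, add_zero])
    · refine ⟨fun i => Even (i + c), key _, fun i => if Even (i + c) then T i else R i,
        fun i h => if_pos h, fun i h => if_neg h, c, by omega, fun h => ?_⟩
      have heven : Even (c + c) := ⟨c, rfl⟩
      have h' : T c = ⊥ := (if_pos heven).symm.trans h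
      rw [h', Submodule.mem_bot] at ht
      exact ht0 ht
  let O : ℕ → Submodule F V := fun i => if o i then R i else T i
  have hOt : ∀ i, ¬ o i → O i = T i := fun i h => if_neg h
  have hOr : ∀ i, o i → O i = R i := fun i h => if_pos h
  have hXU : ∀ i, X i ≤ U i := by
    intro i; by_cases h : o i
    · rw [hXt i h]; exact hTU i
    · rw [hXr i h]; exact hRU i
  have hOU : ∀ i, O i ≤ U i := by
    intro i; by_cases h : o i
    · rw [hOr i h]; exact hRU i
    · rw [hOt i h]; exact hTU i
  have hXO : ∀ i, ∀ u ∈ U i, ∃ x ∈ X i, ∃ z ∈ O i, u = x + z := by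
    intro i u hu
    obtain ⟨t, ht, r, hr, rfl⟩ := hTs i u hu
    by_cases h : o i
    · rw [hXt i h, hOr i h]; exact ⟨t, ht, r, hr, rfl⟩
    · rw [hXr i h, hOt i h]; exact ⟨r, hr, t, ht, add_comm _ _⟩
  have hXOd : ∀ i, ∀ x ∈ X i, x ∈ O i → x = 0 := by
    intro i x hx hx'
    by_cases h : o i
    · rw [hXt i h] at hx; rw [hOr i h] at hx'; exact hTd i x hx hx'
    · rw [hXr i h] at hx; rw [hOt i h] at hx'; exact hTd i x hx' hx
  have hpO : ∀ c d, (c + 1 = d ∨ d + 1 = c) → ∀ u ∈ O c, p d u ∈ O d := by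
    intro c d h u hu
    by_cases hc : o c
    · rw [hOr c hc] at hu
      rw [hR0 c d h u hu]; exact zero_mem _
    · have hd : o d := by
        rcases h with rfl | rfl
        · exact (ho c).mpr hc
        · by_contra h'; exact hc ((ho d).mpr h')
      rw [hOr d hd]
      exact hpR c d h u (hOU c hu)
  obtain ⟨S, H, g1, g2, g3, g4, -⟩ := typeA (N + 1) X o (fun i => if o i then p (i + 1) else p i)
    (by
      intro i _ h u hu
      rw [if_pos h, hXr (i + 1) (fun h' => ((ho i).mp h') h)]
      exact hpR i (i + 1) (Or.inl rfl) u (hXU i hu))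
    (by
      intro i _ h u hu
      rw [if_neg h, hXr i h]
      exact hpR (i + 1) i (Or.inr rfl) u (hXU _ hu))
    (fun j => if j = 0 then ⊥ else X 0) 1
    (by
      intro i j hij
      by_cases hi : i = 0
      · simp [hi]
      · simp [hi, show j ≠ 0 by omega])
    (by simp) (by simp) (by intro j; by_cases hj : j = 0 <;> simp [hj]) hXne
  have g3' : ∀ i < N + 1, o i → (∀ u ∈ S i, p (i + 1) u ∈ S (i + 1)) ∧
      ∀ u ∈ H i, p (i + 1) u ∈ H (i + 1) := by
    intro i hi h
    have := g3 i hi h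
    rwa [if_pos h] at this
  have g4' : ∀ i < N + 1, ¬ o i → (∀ u ∈ S (i + 1), p i u ∈ S i) ∧
      ∀ u ∈ H (i + 1), p i u ∈ H i := by
    intro i hi h
    have := g4 i hi h
    rwa [if_neg h] at this
  have hmove : ∀ c d, (c + 1 = d ∨ d + 1 = c) → c ≤ N → (∀ u ∈ S c, p d u ∈ S d) ∧
      ∀ u ∈ H c, p d u ∈ H d := by
    intro c d h hcN
    by_cases hc : o c
    · rcases h with rfl | rfl
      · exact g3' c (by omega) hc
      · exact g4' d (by omega) ((ho d).mp hc)
    · have h0 : ∀ u ∈ X c, p d u = 0 := by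
        intro u hu; rw [hXr c hc] at hu; exact hR0 c d h u hu
      constructor
      · intro u hu; rw [h0 u ((g1 c (by omega)).s_le hu)]; exact zero_mem _
      · intro u hu; rw [h0 u ((g1 c (by omega)).h_le hu)]; exact zero_mem _
  have hsmall : ∀ c, ∀ u ∈ U c, u = 0 ∨ c ≤ N := by
    intro c u hu
    by_cases h : c ≤ N
    · exact Or.inr h
    · rw [hZ.high c (by omega), Submodule.mem_bot] at hu; exact Or.inl hu
  have hfin := hI.2 (fun c => S c ⊓ U c) (fun c => (H c ⊔ O c) ⊓ U c)
    ⟨fun c => inf_le_right, ?_, ?_⟩ ⟨fun c => inf_le_right, ?_, ?_⟩ ?_ ?_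
  · rcases hfin with hfin | hfin
    · obtain ⟨i, hi, h⟩ := g2
      refine absurd ?_ h
      have h1 := hfin i
      rwa [inf_eq_left.mpr ((g1 i hi).s_le.trans (hXU i))] at h1
    · intro c u hu w hw hu0
      have hcN := (hsmall c u hu).resolve_left hu0
      have hall : ∀ z ∈ U c, z ∈ S c := by
        intro z hz
        obtain ⟨x, hx, k, hk, rfl⟩ := hXO c z hz
        obtain ⟨s, hs, h, hh, rfl⟩ := (g1 c (by omega)).sum x hx
        have h1 : h + k ∈ (H c ⊔ O c) ⊓ U c :=
          ⟨Submodule.add_mem_sup hh hk, add_mem (hXU c ((g1 c (by omega)).h_le hh)) (hOU c hk)⟩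
        have h2 := hfin c
        rw [show (H c ⊔ O c) ⊓ U c = ⊥ from h2, Submodule.mem_bot] at h1
        rw [add_assoc, h1, add_zero]; exact hs
      exact (g1 c (by omega)).thin u (hall u hu) w (hall w hw) hu0
  · intro c d h u hu
    refine ⟨?_, hZ.p_mem d u⟩
    rcases hsmall c u hu.2 with h0 | hcN
    · rw [h0, map_zero]; exact zero_mem _
    · exact (hmove c d h hcN).1 u hu.1
  · intro c u hu
    rw [hy c u hu.2]; exact zero_mem _
  · intro c d h u hu
    refine ⟨?_, hZ.p_mem d u⟩
    rcases hsmall c u hu.2 with h0 | hcN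
    · rw [h0, map_zero]; exact zero_mem _
    · obtain ⟨z, hz, w, hw, rfl⟩ := Submodule.mem_sup.mp hu.1
      rw [map_add]
      exact Submodule.add_mem_sup ((hmove c d h hcN).2 z hz) (hpO c d h w hw)
  · intro c u hu
    rw [hy c u hu.2]; exact zero_mem _
  · intro c u hu
    rcases hsmall c u hu with h0 | hcN
    · exact ⟨0, zero_mem _, 0, zero_mem _, by rw [h0, add_zero]⟩
    · obtain ⟨x, hx, k, hk, rfl⟩ := hXO c u hu
      obtain ⟨s, hs, h, hh, rfl⟩ := (g1 c (by omega)).sum x hx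
      exact ⟨s, ⟨hs, hXU c ((g1 c (by omega)).s_le hs)⟩, h + k,
        ⟨Submodule.add_mem_sup hh hk, add_mem (hXU c ((g1 c (by omega)).h_le hh)) (hOU c hk)⟩,
        add_assoc _ _ _⟩
  · intro c x hx hx'
    rcases hsmall c x hx.2 with h0 | hcN
    · exact h0
    · obtain ⟨h, hh, k, hk, hsum⟩ := Submodule.mem_sup.mp hx'.1
      have g := g1 c (by omega)
      have hk0 : k = 0 := by
        refine hXOd c k ?_ hk
        rw [show k = x - h by rw [← hsum]; abel]
        exact sub_mem (g.s_le hx.1) (g.h_le hh)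
      rw [hk0, add_zero] at hsum
      exact g.disj x hx.1 (by rw [← hsum]; exact hh)

/-- A pair of generators of corresponding lines. -/
def GenPair (A : Submodule F V) (B : Submodule F V') (g : V × V') : Prop :=
  g.1 ∈ A ∧ g.2 ∈ B ∧ (g.1 = 0 ↔ g.2 = 0) ∧ (∀ u ∈ A, ∃ l : F, u = l • g.1) ∧
    ∀ u ∈ B, ∃ l : F, u = l • g.2

theorem exists_genPair {A : Submodule F V} {B : Submodule F V'} (hA : Thin A) (hB : Thin B)
    (h : A = ⊥ ↔ B = ⊥) : ∃ g, GenPair A B g := by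
  by_cases hA0 : A = ⊥
  · refine ⟨0, zero_mem _, zero_mem _, Iff.intro (fun _ => rfl) fun _ => rfl, fun u hu => ⟨0, ?_⟩,
      fun u hu => ⟨0, ?_⟩⟩
    · rw [hA0, Submodule.mem_bot] at hu; rw [hu, zero_smul]
    · rw [h.mp hA0, Submodule.mem_bot] at hu; rw [hu, zero_smul]
  · obtain ⟨a, ha, ha0⟩ := Submodule.exists_mem_ne_zero_of_ne_bot hA0
    obtain ⟨b, hb, hb0⟩ := Submodule.exists_mem_ne_zero_of_ne_bot (fun h' => hA0 (h.mpr h'))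
    exact ⟨(a, b), ha, hb, iff_of_false ha0 hb0, fun u hu => hA a ha u hu ha0,
      fun u hu => hB b hb u hu hb0⟩

/-- Two zigzag data without loops, with all components of dimension at most one, are isomorphic as
soon as the same components and the same arrows vanish. The generators are chosen
successively from left to right. -/
theorem Zig.iso_of_thin (hZ : Zig N γ U p y) (hZ' : Zig N γ U' p' y')
    (hy : ∀ c, ∀ u ∈ U c, y c u = 0) (hy' : ∀ c, ∀ u ∈ U' c, y' c u = 0)
    (ht : ∀ c, Thin (U c)) (ht' : ∀ c, Thin (U' c)) (h1 : ∀ c, U c = ⊥ ↔ U' c = ⊥)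
    (h2 : ∀ c, (∃ u ∈ U c, p (c + 1) u ≠ 0) ↔ ∃ u ∈ U' c, p' (c + 1) u ≠ 0)
    (h3 : ∀ c, (∃ u ∈ U (c + 1), p c u ≠ 0) ↔ ∃ u ∈ U' (c + 1), p' c u ≠ 0) :
    ZIso U p y U' p' y' := by
  classical
  have step : ∀ c g, GenPair (U c) (U' c) g → ∃ g', GenPair (U (c + 1)) (U' (c + 1)) g' ∧
      (∃ l : F, (p (c + 1) g.1, p' (c + 1) g.2) = l • g') ∧
      ∃ l : F, (p c g'.1, p' c g'.2) = l • g := by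
    intro c g hg
    obtain ⟨k1, k2, k3, k4, k5⟩ := hg
    by_cases hp : p (c + 1) g.1 = 0
    · have hp' : p' (c + 1) g.2 = 0 := by
        by_contra h
        obtain ⟨u, hu, hu0⟩ := (h2 c).mpr ⟨g.2, k2, h⟩
        obtain ⟨l, rfl⟩ := k4 u hu
        exact hu0 (by rw [map_smul, hp, smul_zero])
      by_cases hq : ∃ u ∈ U (c + 1), p c u ≠ 0
      · obtain ⟨u', hu', hu0'⟩ := (h3 c).mp hq
        obtain ⟨u, hu, hu0⟩ := hq
        obtain ⟨l, hl⟩ := ht c (p c u) (hZ.p_mem c u) g.1 k1 hu0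
        obtain ⟨l', hl'⟩ := ht' c (p' c u') (hZ'.p_mem c u') g.2 k2 hu0'
        have hg1 : g.1 ≠ 0 := by
          intro h
          obtain ⟨m, hm⟩ := k4 (p c u) (hZ.p_mem c u)
          rw [h, smul_zero] at hm; exact hu0 hm
        have hl0 : l • u ≠ 0 := by
          intro h; apply hg1; rw [hl, ← map_smul, h, map_zero]
        have hl0' : l' • u' ≠ 0 := by
          intro h; apply hg1; apply k3.mpr; rw [hl', ← map_smul, h, map_zero]
        refine ⟨(l • u, l' • u'), ⟨(U _).smul_mem _ hu, (U' _).smul_mem _ hu',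
          iff_of_false hl0 hl0', fun w hw => ht _ _ ((U _).smul_mem _ hu) w hw hl0,
          fun w hw => ht' _ _ ((U' _).smul_mem _ hu') w hw hl0'⟩, ⟨0, ?_⟩, ⟨1, ?_⟩⟩
        · rw [hp, hp', zero_smul]; rfl
        · simp only [map_smul]; rw [← hl, ← hl', one_smul]
      · have hq' : ∀ u ∈ U' (c + 1), p' c u = 0 := by
          intro u hu
          by_contra h
          exact hq ((h3 c).mpr ⟨u, hu, h⟩)
        push Not at hq
        obtain ⟨g', hg'⟩ := exists_genPair (ht (c + 1)) (ht' (c + 1)) (h1 (c + 1))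
        refine ⟨g', hg', ⟨0, ?_⟩, ⟨0, ?_⟩⟩
        · rw [hp, hp', zero_smul]; rfl
        · rw [hq _ hg'.1, hq' _ hg'.2.1, zero_smul]; rfl
    · have hp' : p' (c + 1) g.2 ≠ 0 := by
        intro h
        obtain ⟨u, hu, hu0⟩ := (h2 c).mp ⟨g.1, k1, hp⟩
        obtain ⟨l, rfl⟩ := k5 u hu
        exact hu0 (by rw [map_smul, h, smul_zero])
      refine ⟨(p (c + 1) g.1, p' (c + 1) g.2), ⟨hZ.p_mem _ _, hZ'.p_mem _ _,
        iff_of_false hp hp', fun w hw => ht _ _ (hZ.p_mem _ _) w hw hp,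
        fun w hw => ht' _ _ (hZ'.p_mem _ _) w hw hp'⟩, ⟨1, (one_smul _ _).symm⟩, ⟨0, ?_⟩⟩
      by_cases hr : 1 ≤ c + 1 ∧ c + 1 ≤ N
      · simp only [hZ.pp c (c + 1) (Or.inl rfl) hr.1 hr.2 _ k1,
          hZ'.pp c (c + 1) (Or.inl rfl) hr.1 hr.2 _ k2, hy c _ k1, hy' c _ k2, smul_zero, zero_smul]
        rfl
      · exact absurd (hZ.p_zero hr _) hp
  obtain ⟨g0, hg0⟩ := exists_genPair (ht 0) (ht' 0) (h1 0)
  choose! nx hnx using step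
  let g : ℕ → V × V' := fun c => Nat.rec g0 (fun c x => nx c x) c
  have hg : ∀ c, GenPair (U c) (U' c) (g c) := by
    intro c
    induction c with
    | zero => exact hg0
    | succ c ih => exact (hnx c (g c) ih).1
  have hup : ∀ c, ∃ l : F, (p (c + 1) (g c).1, p' (c + 1) (g c).2) = l • g (c + 1) :=
    fun c => (hnx c (g c) (hg c)).2.1
  have hdown : ∀ c, ∃ l : F, (p c (g (c + 1)).1, p' c (g (c + 1)).2) = l • g c :=
    fun c => (hnx c (g c) (hg c)).2.2
  have hmem : ∀ c x, x ∈ Submodule.span F {g c} → ∃ l : F, x = (l • (g c).1, l • (g c).2) := by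
    intro c x hx
    obtain ⟨l, rfl⟩ := Submodule.mem_span_singleton.mp hx
    exact ⟨l, rfl⟩
  refine ⟨fun c => Submodule.span F {g c}, ?_, ?_, ?_, ?_, ?_, ?_⟩
  · intro c x hx
    obtain ⟨l, rfl⟩ := hmem c x hx
    exact ⟨(U c).smul_mem _ (hg c).1, (U' c).smul_mem _ (hg c).2.1⟩
  · intro c d hcd x hx
    obtain ⟨l, rfl⟩ := hmem c x hx
    obtain ⟨m, hm⟩ : ∃ m : F, (p d (g c).1, p' d (g c).2) = m • g d := by
      rcases hcd with rfl | rfl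
      · exact hup c
      · exact hdown d
    refine Submodule.mem_span_singleton.mpr ⟨l * m, ?_⟩
    rw [mul_smul, ← hm]
    simp only [map_smul, Prod.smul_mk]
  · intro c x hx
    obtain ⟨l, rfl⟩ := hmem c x hx
    simp only [map_smul, hy c _ (hg c).1, hy' c _ (hg c).2.1, smul_zero]
    exact zero_mem _
  · intro c x hx
    obtain ⟨l, rfl⟩ := hmem c x hx
    simp only [smul_eq_zero, (hg c).2.2.1]
  · intro c u hu
    obtain ⟨l, rfl⟩ := (hg c).2.2.2.1 u hu
    exact ⟨l • g c, Submodule.smul_mem _ _ (Submodule.mem_span_singleton_self _), rfl⟩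
  · intro c u hu
    obtain ⟨l, rfl⟩ := (hg c).2.2.2.2 u hu
    exact ⟨l • g c, Submodule.smul_mem _ _ (Submodule.mem_span_singleton_self _), rfl⟩

/-- The isomorphism class of an indecomposable zigzag datum is determined by the vanishing or
nonvanishing of its components, arrows and loops. -/
theorem Zig.iso (hZ : Zig N γ U p y) (hI : ZIndec U p y) (hZ' : Zig N γ U' p' y')
    (hI' : ZIndec U' p' y') (h0 : ∀ c, (∃ u ∈ U c, y c u ≠ 0) ↔ ∃ u ∈ U' c, y' c u ≠ 0)
    (h1 : ∀ c, U c = ⊥ ↔ U' c = ⊥)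
    (h2 : ∀ c, (∃ u ∈ U c, p (c + 1) u ≠ 0) ↔ ∃ u ∈ U' c, p' (c + 1) u ≠ 0)
    (h3 : ∀ c, (∃ u ∈ U (c + 1), p c u ≠ 0) ↔ ∃ u ∈ U' (c + 1), p' c u ≠ 0) :
    ZIso U p y U' p' y' := by
  by_cases h : ∃ c, ∃ u ∈ U c, y c u ≠ 0
  · obtain ⟨c, hc⟩ := h
    obtain ⟨v', hv', hv0'⟩ := (h0 c).mp hc
    obtain ⟨v, hv, hv0⟩ := hc
    exact hZ.iso_of_loop hI hZ' hI' hv hv0 hv' hv0'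
  · have hy' : ∀ c, ∀ u ∈ U' c, y' c u = 0 := by
      intro c u hu
      by_contra h'
      exact h ⟨c, (h0 c).mpr ⟨u, hu, h'⟩⟩
    push Not at h
    exact hZ.iso_of_thin hZ' h hy' (hZ.thin hI h) (hZ'.thin hI' hy') h1 h2 h3

end zig2
end HeckeA

namespace HeckeA

/-! ### The idempotents of the critical block -/

section idem
variable {F : Type} [Field F] {q : F} {e : ℕ}

/-- The generators in reverse order, rescaled so as to satisfy the Hecke relations for `q⁻¹`. -/
def rev {E : Type} [Ring E] [Algebra F E] (q : F) (e : ℕ) (T : ℕ → E) (i : ℕ) : E :=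
  (-q⁻¹) • T (e - i)

/-- The idempotent on which `T 1, …, T (c-1)` act by `q` and `T (c+1), …, T (e-1)` by `-1`. -/
noncomputable def ep {E : Type} [Ring E] [Algebra F E] (q : F) (e : ℕ) (T : ℕ → E) (c : ℕ) : E :=
  sym q T c * sym q⁻¹ (rev q e T) (e - c)

/-- The element acting on the image of the idempotent `ep c` as the loop of the zigzag
algebra. -/
noncomputable def lp {E : Type} [Ring E] [Algebra F E] (q : F) (e : ℕ) (T : ℕ → E) (c : ℕ) : E :=
  1 + qn q c • (ep q e T c * T c)

theorem rev_rel {E : Type} [Ring E] [Algebra F E] {T : ℕ → E} (hq : q ≠ 0)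
    (hT : HeckeRel q e T) : HeckeRel q⁻¹ e (rev q e T) := by
  have hrel : ∀ i j, 1 ≤ i → i + 2 ≤ j → j < e → T (e - i) * T (e - j) = T (e - j) * T (e - i) :=
    fun i j h1 h2 h3 => (hT.comm (e - j) (e - i) (by omega) (by omega) (by omega)).symm
  refine ⟨fun i h1 h2 => ?_, fun i h1 h2 => ?_, fun i j h1 h2 h3 => ?_⟩
  · simp only [rev, smul_mul_smul_comm]
    rw [hT.quad (e - i) (by omega) (by omega)]
    have h1 : (-q⁻¹ * -q⁻¹) * q = q⁻¹ := by field_simp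
    have h2 : (-q⁻¹ * -q⁻¹) * (q - 1) = (q⁻¹ - 1) * (-q⁻¹) := by field_simp; ring
    rw [smul_add, smul_smul, smul_smul, smul_smul, h1, h2]
  · simp only [rev, smul_mul_smul_comm]
    have := hT.braid (e - (i + 1)) (by omega) (by omega)
    rw [show e - (i + 1) + 1 = e - i by omega] at this
    rw [this]
  · simp only [rev, smul_mul_smul_comm]
    rw [hrel i j h1 h2 h3]

theorem sym_congr {E : Type} [Ring E] [Algebra F E] {T T' : ℕ → E} {k : ℕ}
    (h : ∀ i, 1 ≤ i → i < k → T i = T' i) : sym q T k = sym q T' k := by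
  induction k with
  | zero => rfl
  | succ k ih =>
    rcases Nat.eq_zero_or_pos k with rfl | hk
    · rfl
    · rw [sym_succ q T hk, sym_succ q T' hk, num, num, ih fun i h1 h2 => h i h1 (by omega),
        h k hk (by omega)]

theorem rev_rev {E : Type} [Ring E] [Algebra F E] (T : ℕ → E) (hq : q ≠ 0) {i : ℕ} (hi : i ≤ e) :
    rev q⁻¹ e (rev q e T) i = T i := by
  rw [rev, rev, smul_smul, inv_inv, neg_mul_neg, mul_inv_cancel₀ hq, one_smul,
    show e - (e - i) = i by omega]

section ring
variable {E : Type} [Ring E] [Algebra F E] {T : ℕ → E}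

theorem rev_commute_sym (he : 2 ≤ e) (hq : IsPrimitiveRoot q e) (hT : HeckeRel q e T)
    {c i : ℕ} (h1 : 1 ≤ i) (hi : i + c < e) :
    Commute (rev q e T i) (sym q T c) := by
  refine sym_commute q T _ c fun j hj hjc => ?_
  exact (hT.commute (by omega) hj (by omega) (by omega) (by omega)).smul_left _

theorem sym_commute_rev (he : 2 ≤ e) (hq : IsPrimitiveRoot q e) (hT : HeckeRel q e T) (c : ℕ) :
    Commute (sym q T c) (sym q⁻¹ (rev q e T) (e - c)) :=
  sym_commute q⁻¹ (rev q e T) _ (e - c) fun _ hi hic =>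
    (rev_commute_sym he hq hT hi (by omega)).symm

theorem ep_rev (he : 2 ≤ e) (hq : IsPrimitiveRoot q e) (hT : HeckeRel q e T)
    {c : ℕ} (hc : c ≤ e) : ep q⁻¹ e (rev q e T) (e - c) = ep q e T c := by
  have hq0 : q ≠ 0 := hq.ne_zero (by omega)
  rw [ep, ep, (sym_commute_rev he hq hT c).eq, inv_inv, show e - (e - c) = c by omega,
    sym_congr fun i h1 h2 => rev_rev T hq0 (by omega)]

theorem qn_rev (he : 2 ≤ e) (hq : IsPrimitiveRoot q e) (hT : HeckeRel q e T)
    {c : ℕ} (hc : c ≤ e) : qn q⁻¹ (e - c) = -q * qn q c := by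
  have hq0 : q ≠ 0 := hq.ne_zero (by omega)
  have hq1 : q - 1 ≠ 0 := sub_ne_zero.mpr (hq.ne_one (by omega))
  have h1 := qn_mul q⁻¹ (e - c)
  have h2 := qn_mul q c
  have h3 : q⁻¹ ^ (e - c) = q ^ c := by
    have h : q ^ c * q ^ (e - c) = 1 := by
      rw [← pow_add, Nat.add_sub_cancel' hc, hq.pow_eq_one]
    rw [inv_pow]; exact (eq_inv_of_mul_eq_one_left h).symm
  rw [h3, ← h2] at h1
  apply mul_left_cancel₀ hq1
  have h4 : (q⁻¹ - 1) * qn q⁻¹ (e - c) * q = (q - 1) * qn q c * q := by rw [h1]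
  have h5 : (q⁻¹ - 1) * q = 1 - q := by field_simp
  linear_combination (-1 : F) * h4 + qn q⁻¹ (e - c) * h5

theorem lp_rev (he : 2 ≤ e) (hq : IsPrimitiveRoot q e) (hT : HeckeRel q e T)
    {c : ℕ} (hc : c ≤ e) : lp q⁻¹ e (rev q e T) (e - c) = lp q e T c := by
  have hq0 : q ≠ 0 := hq.ne_zero (by omega)
  rw [lp, lp, ep_rev he hq hT hc, qn_rev he hq hT hc, rev, show e - (e - c) = c by omega,
    mul_smul_comm, smul_smul]
  congr 2
  field_simp

theorem ep_left (he : 2 ≤ e) (hq : IsPrimitiveRoot q e) (hT : HeckeRel q e T)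
    {c i : ℕ} (hc : 1 ≤ c) (hce : c < e) (hi : 1 ≤ i) (hic : i < c) :
    ep q e T c * T i = q • ep q e T c ∧ T i * ep q e T c = q • ep q e T c := by
  have h0 : ∀ j, 1 ≤ j → j ≤ c → qn q j ≠ 0 := fun j h1 h2 => qn_ne hq h1 (by omega)
  have h1 := (sym_props hT hc hce.le h0).1 i hi hic
  have h2 := (sym_props_op hT hc hce.le h0).1 i hi hic
  have h3 : Commute (T i) (sym q⁻¹ (rev q e T) (e - c)) :=
    sym_commute q⁻¹ (rev q e T) _ (e - c) fun j hj hjc =>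
      (hT.commute hi (by omega) (by omega) (by omega) (by omega)).smul_right _
  rw [ep]
  refine ⟨?_, ?_⟩
  · rw [mul_assoc, ← h3.eq, ← mul_assoc, h2, smul_mul_assoc]
  · rw [← mul_assoc, h1, smul_mul_assoc]

theorem ep_right (he : 2 ≤ e) (hq : IsPrimitiveRoot q e) (hT : HeckeRel q e T)
    {c i : ℕ} (hc : 1 ≤ c) (hce : c < e) (hi : c < i) (hie : i < e) :
    ep q e T c * T i = - ep q e T c ∧ T i * ep q e T c = - ep q e T c := by
  have hq0 : q ≠ 0 := hq.ne_zero (by omega)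
  have h := ep_left he hq.inv (rev_rel hq0 hT) (c := e - c) (i := e - i) (by omega) (by omega)
    (by omega) (by omega)
  rw [ep_rev he hq hT hce.le, rev, show e - (e - i) = i by omega, mul_smul_comm, smul_mul_assoc]
    at h
  have key : ∀ x y : E, (-q⁻¹) • x = q⁻¹ • y → x = -y := by
    intro x y hxy
    have := congrArg (fun z => (-q) • z) hxy
    simp only [smul_smul] at this
    rw [show (-q) * (-q⁻¹) = 1 by field_simp, show (-q) * q⁻¹ = -1 by field_simp, one_smul,
      neg_one_smul] at this
    exact this
  exact ⟨key _ _ h.1, key _ _ h.2⟩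

theorem ep_mul_sym (he : 2 ≤ e) (hq : IsPrimitiveRoot q e) (hT : HeckeRel q e T)
    {c k : ℕ} (hc : 1 ≤ c) (hce : c < e) (hk : 1 ≤ k) (hkc : k ≤ c) :
    ep q e T c * sym q T k = ep q e T c := by
  induction k, hk using Nat.le_induction with
  | base => simp [sym]
  | succ k hk ih =>
    have ih := ih (by omega)
    rw [sym_succ q T hk, num, mul_smul_comm, mul_add, mul_smul_comm, ← mul_assoc, ← mul_assoc, ih,
      (ep_left he hq hT hc hce hk (by omega)).1, smul_mul_assoc, ih, smul_smul]
    have : ep q e T c + (qn q k * q) • ep q e T c = qn q (k + 1) • ep q e T c := by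
      rw [qn_succ']; module
    rw [this, smul_smul, inv_mul_cancel₀ (qn_ne hq (by omega) (by omega)), one_smul]

end ring

section mod
variable {V : Type} [AddCommGroup V] [Module F V] {T : ℕ → Module.End F V}

theorem rev_ty (he : 2 ≤ e) (hq : IsPrimitiveRoot q e)
    {c : ℕ} (hc : c ≤ e) {v : V} (h : Ty q e T c v) :
    Ty q⁻¹ e (rev q e T) (e - c) v := by
  have hq0 : q ≠ 0 := hq.ne_zero (by omega)
  refine ⟨fun i h1 h2 => ?_, fun i h1 h2 => ?_⟩
  · rw [rev, LinearMap.smul_apply, h.2 (e - i) (by omega) (by omega)]; module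
  · rw [rev, LinearMap.smul_apply, h.1 (e - i) (by omega) (by omega), smul_smul,
      neg_mul, inv_mul_cancel₀ hq0, neg_one_smul]

theorem ep_ty (he : 2 ≤ e) (hq : IsPrimitiveRoot q e) (hT : HeckeRel q e T)
    {c : ℕ} (hc : 1 ≤ c) (hce : c < e) (v : V) : Ty q e T c (ep q e T c v) := by
  refine ⟨fun i h1 h2 => ?_, fun i h1 h2 => ?_⟩
  · exact congrArg (fun f : Module.End F V => f v) (ep_left he hq hT hc hce h1 h2).2
  · exact congrArg (fun f : Module.End F V => f v) (ep_right he hq hT hc hce h1 h2).2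

theorem symrev_fix (he : 2 ≤ e) (hq : IsPrimitiveRoot q e) (hT : HeckeRel q e T)
    {c k : ℕ} (hk : 1 ≤ k) (hkc : k + c ≤ e) (hc : 1 ≤ c) {u : V}
    (h : Ty q e T c u) : sym q⁻¹ (rev q e T) k u = u := by
  refine sym_fix hk (fun j h1 h2 => qn_ne hq.inv h1 (by omega)) fun i h1 h2 => ?_
  exact (rev_ty he hq (by omega) h).1 i h1 (by omega)

theorem ep_fix (he : 2 ≤ e) (hq : IsPrimitiveRoot q e) (hT : HeckeRel q e T)
    {c : ℕ} (hc : 1 ≤ c) (hce : c < e) {u : V} (h : Ty q e T c u) :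
    ep q e T c u = u := by
  rw [ep, Module.End.mul_apply, symrev_fix he hq hT (by omega) (by omega) hc h]
  exact sym_fix hc (fun j h1 h2 => qn_ne hq h1 (by omega)) h.1

theorem ep_T_low (he : 2 ≤ e) (hq : IsPrimitiveRoot q e) (hT : HeckeRel q e T)
    {c i : ℕ} (hc : 1 ≤ c) (hce : c < e) (hi : 1 ≤ i) (hic : i < c) (v : V) :
    ep q e T c (T i v) = q • ep q e T c v :=
  congrArg (fun f : Module.End F V => f v) (ep_left he hq hT hc hce hi hic).1

theorem ep_T_high (he : 2 ≤ e) (hq : IsPrimitiveRoot q e) (hT : HeckeRel q e T)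
    {c i : ℕ} (hc : 1 ≤ c) (hce : c < e) (hi : c < i) (hie : i < e) (v : V) :
    ep q e T c (T i v) = - ep q e T c v :=
  congrArg (fun f : Module.End F V => f v) (ep_right he hq hT hc hce hi hie).1

theorem one_add_q_ne (he : 2 ≤ e) (hq : IsPrimitiveRoot q e) (hT : HeckeRel q e T)
    (h3 : 3 ≤ e) : 1 + q ≠ 0 := by
  have := qn_ne hq (show 1 ≤ 2 by omega) (by omega)
  rw [qn_succ, qn_one, pow_one] at this
  exact this

/-- The idempotents attached to nodes at distance at least two are orthogonal, in the sense that
one kills the image of the other. -/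
theorem ep_far (he : 2 ≤ e) (hq : IsPrimitiveRoot q e) (hT : HeckeRel q e T)
    {c d : ℕ} (hc : 1 ≤ c) (hce : c < e) (hd : 1 ≤ d) (hde : d < e)
    (hcd : c + 2 ≤ d ∨ d + 2 ≤ c) {u : V} (h : Ty q e T c u) : ep q e T d u = 0 := by
  have hq1 := one_add_q_ne he hq hT (by omega)
  have key : ep q e T d u = -(q • ep q e T d u) := by
    rcases hcd with hcd | hcd
    · have h1 := ep_T_low he hq hT hd hde (i := c + 1) (by omega) (by omega) u
      rw [h.2 (c + 1) (by omega) (by omega), map_neg] at h1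
      rw [← h1, neg_neg]
    · have h1 := ep_T_high he hq hT hd hde (i := c - 1) (by omega) (by omega) u
      rw [h.1 (c - 1) (by omega) (by omega), map_smul] at h1
      rw [h1, neg_neg]
  have : (1 + q) • ep q e T d u = 0 := by
    rw [add_smul, one_smul]; nth_rewrite 1 [key]; abel
  exact (smul_eq_zero.mp this).resolve_left hq1

theorem ep_succ (he : 2 ≤ e) (hq : IsPrimitiveRoot q e) (hT : HeckeRel q e T)
    {c : ℕ} (hc : 1 ≤ c) (hce : c + 1 < e) {u : V} (h : Ty q e T c u) :
    ep q e T (c + 1) u = (qn q (c + 1))⁻¹ • (u + qn q c • sym q T c (T c u)) := by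
  rw [ep, Module.End.mul_apply, symrev_fix he hq hT (by omega) (by omega) hc h, sym_succ q T hc,
    num]
  have h1 : sym q T c u = u := sym_fix hc (fun j h1 h2 => qn_ne hq h1 (by omega)) h.1
  simp only [LinearMap.smul_apply, LinearMap.add_apply, Module.End.mul_apply, h1]

/-- The relations of the zigzag algebra for the arrows to the right. -/
theorem up_rel (he : 2 ≤ e) (hq : IsPrimitiveRoot q e) (hT : HeckeRel q e T)
    {c : ℕ} (hc : 1 ≤ c) (hce : c + 1 < e) {u : V} (h : Ty q e T c u) :
    ep q e T c (ep q e T (c + 1) u) = (qn q (c + 1))⁻¹ • lp q e T c u ∧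
    lp q e T (c + 1) (ep q e T (c + 1) u) = 0 ∧
    (c + 2 < e → ep q e T (c + 2) (ep q e T (c + 1) u) = 0) := by
  have hsym : ∀ d, c ≤ d → d < e → ∀ x, ep q e T d (sym q T c x) = ep q e T d x := fun d h1 h2 x =>
    congrArg (fun f : Module.End F V => f x) (ep_mul_sym he hq hT (by omega) h2 hc h1)
  refine ⟨?_, ?_, ?_⟩
  · rw [ep_succ he hq hT hc hce h, map_smul, map_add, map_smul, hsym c le_rfl (by omega),
      ep_fix he hq hT hc (by omega) h, lp]
    rfl
  · have hq1 := one_add_q_ne he hq hT (by omega)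
    set ε := ep q e T (c + 1) with hε
    have hz : ε (T (c + 1) (T c u)) = 0 := by
      have h1 : T (c + 1) u = -u := h.2 (c + 1) (by omega) hce
      have h2 := congrArg (fun f : Module.End F V => f u) (hT.braid c hc hce)
      simp only [Module.End.mul_apply, h1, map_neg] at h2
      have h3 := congrArg (fun x => ε x) h2
      simp only [map_neg] at h3
      rw [hε, ep_T_low he hq hT (by omega) hce hc (by omega), ← hε] at h3
      have : (1 + q) • ε (T (c + 1) (T c u)) = 0 := by rw [add_smul, one_smul, h3]; abel
      exact (smul_eq_zero.mp this).resolve_left hq1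
    have hcomm : ∀ x, T (c + 1) (sym q T c x) = sym q T c (T (c + 1) x) := fun x =>
      congrArg (fun f : Module.End F V => f x) (sym_commute q T (T (c + 1)) c fun j h1 h2 =>
        (hT.comm j (c + 1) h1 (by omega) hce : Commute _ _).symm).eq
    have h4 : ε (T (c + 1) (ε u)) = -((qn q (c + 1))⁻¹ • ε u) := by
      rw [hε, ep_succ he hq hT hc hce h, ← hε, map_smul, map_add, map_smul, map_smul, map_add,
        map_smul, hcomm, hsym (c + 1) (by omega) hce, hz, smul_zero, add_zero,
        h.2 (c + 1) (by omega) hce, map_neg, smul_neg, hε, ep_succ he hq hT hc hce h]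
    rw [lp, LinearMap.add_apply, LinearMap.smul_apply, Module.End.mul_apply, ← hε, h4, smul_neg,
      smul_smul, mul_inv_cancel₀ (qn_ne hq (by omega) hce), one_smul, Module.End.one_apply]
    abel
  · intro hce2
    rw [ep_succ he hq hT hc hce h, map_smul, map_add, map_smul, hsym (c + 2) (by omega) hce2,
      ep_T_low he hq hT (by omega) hce2 hc (by omega),
      ep_far he hq hT hc (by omega) (by omega) hce2 (Or.inl le_rfl) h]
    simp

/-- The relations of the zigzag algebra for the arrows to the left. -/
theorem down_rel (he : 2 ≤ e) (hq : IsPrimitiveRoot q e) (hT : HeckeRel q e T)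
    {c : ℕ} (hc : 1 ≤ c) (hce : c + 1 < e) {u : V} (h : Ty q e T (c + 1) u) :
    ep q e T (c + 1) (ep q e T c u) = (qn q⁻¹ (e - c))⁻¹ • lp q e T (c + 1) u ∧
    lp q e T c (ep q e T c u) = 0 ∧
    (2 ≤ c → ep q e T (c - 1) (ep q e T c u) = 0) := by
  have hq0 : q ≠ 0 := hq.ne_zero (by omega)
  have := up_rel he hq.inv (rev_rel hq0 hT) (c := e - (c + 1)) (by omega) (by omega)
    (rev_ty he hq (by omega) h)
  rw [show e - (c + 1) + 1 = e - c by omega, ep_rev he hq hT (by omega), ep_rev he hq hT (by omega),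
    lp_rev he hq hT (by omega), lp_rev he hq hT (by omega)] at this
  refine ⟨this.1, this.2.1, fun h2 => ?_⟩
  have h3 := this.2.2 (by omega)
  rwa [show e - (c + 1) + 2 = e - (c - 1) by omega, ep_rev he hq hT (by omega)] at h3

end mod
end idem
end HeckeA

namespace HeckeA

/-! ### Corner computations -/

section corner
variable {F V : Type} [Field F] [AddCommGroup V] [Module F V] {q : F} {N : ℕ}
  {T : ℕ → Module.End F V}

theorem desc_apply_scalar {n k : ℕ} (s : F) {v : V} (h : ∀ i, k ≤ i → i ≤ n → T i v = s • v) :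
    ∃ l : F, desc T n k v = l • v := by
  induction n with
  | zero => exact ⟨1, (one_smul F v).symm⟩
  | succ n ih =>
    by_cases hk : k ≤ n + 1
    · obtain ⟨l, hl⟩ := ih fun i h1 h2 => h i h1 (by omega)
      exact ⟨l * s, by
        rw [desc_succ T hk, Module.End.mul_apply, hl, map_smul, h (n + 1) hk le_rfl, smul_smul]⟩
    · exact ⟨1, by rw [desc_gt T (by omega), one_smul, Module.End.one_apply]⟩

theorem apply_desc_scalar {n k : ℕ} (s : F) {x : Module.End F V}
    (h : ∀ i, k ≤ i → i ≤ n → ∀ v, x (T i v) = s • x v) :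
    ∃ l : F, ∀ v, x (desc T n k v) = l • x v := by
  induction n with
  | zero => exact ⟨1, fun v => (one_smul F (x v)).symm⟩
  | succ n ih =>
    by_cases hk : k ≤ n + 1
    · obtain ⟨l, hl⟩ := ih fun i h1 h2 => h i h1 (by omega)
      exact ⟨s * l, fun v => by
        rw [desc_succ T hk, Module.End.mul_apply, h (n + 1) hk le_rfl, hl, smul_smul]⟩
    · exact ⟨1, fun v => by rw [desc_gt T (by omega), one_smul, Module.End.one_apply]⟩

theorem desc_apply_low {n k c : ℕ} (hk : 1 ≤ k) (hkc : k ≤ c) (hcn : c ≤ n) {v : V}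
    (h : ∀ i, 1 ≤ i → i < c → T i v = q • v) : ∃ l : F, desc T n k v = l • desc T n c v := by
  obtain ⟨m, rfl⟩ : ∃ m, c = k + m := ⟨c - k, by omega⟩
  induction m generalizing k with
  | zero => exact ⟨1, (one_smul _ _).symm⟩
  | succ m ih =>
    obtain ⟨l, hl⟩ := ih (k := k + 1) (by omega) (by omega) (by omega)
      (fun i h1 h2 => h i h1 (by omega))
    refine ⟨q * l, ?_⟩
    rw [desc_right T hk (by omega), Module.End.mul_apply, h k hk (by omega), map_smul, hl,
      smul_smul, show k + 1 + m = k + (m + 1) by ring]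

/-- If `x` is of type `d` for right multiplication and the vector `v` is of type `c`, then the
vectors `x b v`, where `b` runs through the Hecke algebra, are linear combinations of `x v` and
`x T_c v`. This is the statement that there are at most two relevant double cosets. -/
theorem corner (hT : HeckeRel q N T) {d : ℕ} (W : Submodule F V) (x : Module.End F V) {n : ℕ}
    (hnN : n ≤ N) (hx1 : ∀ i, 1 ≤ i → i < d → i < n → ∀ v, x (T i v) = q • x v)
    (hx2 : ∀ i, d < i → i < n → ∀ v, x (T i v) = - x v) (hq1 : 1 + q ≠ 0 ∨ n ≤ 2) :
    ∀ (c : ℕ) (v : V), Ty q n T c v → x v ∈ W → (1 ≤ c → c < n → x (T c v) ∈ W) →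
      ∀ b ∈ Hsub F T n, x (b v) ∈ W := by
  induction n with
  | zero =>
    intro c v _ h0 _ b hb
    have : Hsub F T 0 = ⊥ := by
      rw [Hsub, show {x | ∃ i, 1 ≤ i ∧ i < 0 ∧ x = T i} = ∅ by ext; simp, Algebra.adjoin_empty]
    rw [this] at hb
    obtain ⟨l, rfl⟩ := Algebra.mem_bot.mp hb
    rw [Module.algebraMap_end_apply, map_smul]
    exact W.smul_mem _ h0
  | succ n ih =>
    intro c v hv h0 h1 b hb
    have ih := ih (by omega) (fun i a1 a2 a3 => hx1 i a1 a2 (by omega))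
      (fun i a1 a2 => hx2 i a1 (by omega)) (hq1.imp id fun h => by omega)
    have hx2' : ∀ i, d < i → i < n + 1 → ∀ v, x (T i v) = (-1 : F) • x v := by
      intro i a1 a2 v; rw [hx2 i a1 a2, neg_one_smul]
    -- it suffices to treat the coset representatives
    suffices hk : ∀ k, 1 ≤ k → k ≤ n + 1 → ∀ h ∈ Hsub F T n, x (h (desc T n k v)) ∈ W by
      have hspan := coset hT (by omega) hb
      clear hb
      induction hspan using Submodule.span_induction with
      | zero => rw [LinearMap.zero_apply, map_zero]; exact zero_mem _
      | add a b _ _ ha hb => rw [LinearMap.add_apply, map_add]; exact add_mem ha hb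
      | smul l a _ ha => rw [LinearMap.smul_apply, map_smul]; exact W.smul_mem _ ha
      | mem z hz =>
        obtain ⟨h, hh, k, k1, k2, rfl⟩ := hz
        exact hk k k1 k2 h hh
    intro k k1 k2 h hh
    have hvn : Ty q n T c v := ⟨hv.1, fun i a1 a2 => hv.2 i a1 (by omega)⟩
    by_cases hcase : n < c ∨ c < k
    · obtain ⟨l, hl⟩ : ∃ l : F, desc T n k v = l • v := by
        rcases hcase with hc | hc
        · exact desc_apply_scalar q fun i a1 a2 => hv.1 i (by omega) (by omega)
        · exact desc_apply_scalar (-1) fun i a1 a2 => by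
            rw [hv.2 i (by omega) (by omega), neg_one_smul]
      rw [hl, map_smul, map_smul]
      exact W.smul_mem _ (ih c v hvn h0 (fun a1 a2 => h1 a1 (by omega)) h hh)
    push Not at hcase
    obtain ⟨hcn, hkc⟩ := hcase
    obtain ⟨l, hl⟩ := desc_apply_low (n := n) k1 hkc hcn hv.1
    rw [hl, map_smul, map_smul]
    refine W.smul_mem _ ?_
    have hc1 : 1 ≤ c := by omega
    have hty : Ty q n T (c - 1) (desc T n c v) := by
      refine ⟨fun i a1 a2 => ?_, fun i a1 a2 => ?_⟩
      · have hcm := desc_commute_of T (T i) (n := n) hc1 fun j b1 b2 =>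
          hT.commute a1 (by omega) (by omega) (by omega) (by omega)
        have := congrArg (fun f : Module.End F V => f v) hcm.eq
        simp only [Module.End.mul_apply] at this
        rw [this, hv.1 i a1 (by omega), map_smul]
      · have := congrArg (fun f : Module.End F V => f v)
          (desc_shift hT (n := n) (k := c) (j := i + 1) hc1 (by omega) (by omega) (by omega))
        simp only [Module.End.mul_apply, Nat.add_sub_cancel] at this
        rw [← this, hv.2 (i + 1) (by omega) (by omega), map_neg]
    have hxv : x (desc T n c v) ∈ W := by
      rcases Nat.lt_trichotomy d c with hd | hd | hd
      · obtain ⟨m, hm⟩ := apply_desc_scalar (n := n) (k := c) (-1) fun i a1 a2 =>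
          hx2' i (by omega) (by omega)
        rw [hm]; exact W.smul_mem _ h0
      · obtain ⟨m, hm⟩ := apply_desc_scalar (n := n) (k := c + 1) (-1) fun i a1 a2 =>
          hx2' i (by omega) (by omega)
        rw [desc_right T hc1 hcn, Module.End.mul_apply, hm]
        exact W.smul_mem _ (h1 hc1 (by omega))
      · by_cases hdn : n < d
        · obtain ⟨m, hm⟩ := apply_desc_scalar (n := n) (k := c) q fun i a1 a2 =>
            hx1 i (by omega) (by omega) (by omega)
          rw [hm]; exact W.smul_mem _ h0
        · have h3 := congrArg (fun f : Module.End F V => x (f v))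
            (desc_shift hT (n := n) (k := c) (j := d) hc1 hd (by omega) (by omega))
          simp only [Module.End.mul_apply] at h3
          rw [hv.2 d hd (by omega), map_neg, map_neg, hx1 (d - 1) (by omega) (by omega) (by omega)]
            at h3
          have h4 : (1 + q) • x (desc T n c v) = 0 := by rw [add_smul, one_smul, ← h3]; abel
          rw [(smul_eq_zero.mp h4).resolve_left (hq1.resolve_right (by omega))]
          exact zero_mem _
    refine ih (c - 1) (desc T n c v) hty hxv (fun a1 a2 => ?_) h hh
    rcases Nat.lt_trichotomy d (c - 1) with hd | hd | hd
    · rw [hx2 (c - 1) hd (by omega)]; exact neg_mem hxv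
    · have hcm := desc_commute_of T (T (c - 1)) (n := n) (k := c + 1) (by omega) fun j b1 b2 =>
          hT.commute a1 (by omega) (by omega) (by omega) (by omega)
      have h5 := congrArg (fun f : Module.End F V => f (T c v)) hcm.eq
      simp only [Module.End.mul_apply] at h5
      obtain ⟨m, hm⟩ := apply_desc_scalar (n := n) (k := c + 1) (-1) fun i a1 a2 =>
          hx2' i (by omega) (by omega)
      rw [desc_right T hc1 hcn, Module.End.mul_apply, h5, hm]
      have h6 := congrArg (fun f : Module.End F V => x (f v)) (hT.braid (c - 1) a1 (by omega))
      rw [show c - 1 + 1 = c by omega] at h6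
      simp only [Module.End.mul_apply] at h6
      rw [hv.1 (c - 1) a1 (by omega), map_smul, map_smul, map_smul, hx2 c (by omega) (by omega)]
        at h6
      have h4 : (1 + q) • x (T (c - 1) (T c v)) = 0 := by rw [add_smul, one_smul, h6]; abel
      rw [(smul_eq_zero.mp h4).resolve_left (hq1.resolve_right (by omega)), smul_zero]
      exact zero_mem _
    · rw [hx1 (c - 1) a1 hd (by omega)]; exact W.smul_mem _ hxv

end corner

section zigrep
variable {F V : Type} [Field F] [AddCommGroup V] [Module F V] {q : F} {e : ℕ}
  {T : ℕ → Module.End F V}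

/-- The idempotent `ep c` for `1 ≤ c < e`, and zero otherwise. -/
noncomputable def pr (q : F) (e : ℕ) (T : ℕ → Module.End F V) (c : ℕ) : Module.End F V :=
  if 1 ≤ c ∧ c < e then ep q e T c else 0

/-- The space of vectors of type `c`, for `1 ≤ c < e`, and zero otherwise. -/
noncomputable def VV (q : F) (e : ℕ) (T : ℕ → Module.End F V) (c : ℕ) : Submodule F V :=
  LinearMap.range (pr q e T c)

/-- The structure constants of the zigzag algebra attached to the critical block. -/
noncomputable def gam (q : F) (e : ℕ) (c d : ℕ) : F :=
  if d = c + 1 then (qn q (c + 1))⁻¹ else (qn q⁻¹ (e - d))⁻¹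

theorem pr_eq {c : ℕ} (hc : 1 ≤ c) (hce : c < e) : pr q e T c = ep q e T c := if_pos ⟨hc, hce⟩

theorem VV_out {c : ℕ} (h : ¬ (1 ≤ c ∧ c < e)) : VV q e T c = ⊥ := by
  rw [VV, pr, if_neg h, LinearMap.range_zero]

theorem mem_VV (he : 2 ≤ e) (hq : IsPrimitiveRoot q e) (hT : HeckeRel q e T)
    {c : ℕ} {v : V} : v ∈ VV q e T c ↔ v = 0 ∨ (1 ≤ c ∧ c < e ∧ Ty q e T c v) := by
  by_cases h : 1 ≤ c ∧ c < e
  · rw [VV, pr, if_pos h]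
    constructor
    · rintro ⟨w, rfl⟩
      exact Or.inr ⟨h.1, h.2, ep_ty he hq hT h.1 h.2 w⟩
    · rintro (rfl | ⟨-, -, hv⟩)
      · exact zero_mem _
      · exact ⟨v, ep_fix he hq hT h.1 h.2 hv⟩
  · rw [VV_out h, Submodule.mem_bot]
    exact ⟨Or.inl, fun h' => h'.resolve_right fun h'' => h ⟨h''.1, h''.2.1⟩⟩

/-- Statements about vectors of `VV c` that hold for zero need only be checked in range. -/
theorem VV_cases (he : 2 ≤ e) (hq : IsPrimitiveRoot q e) (hT : HeckeRel q e T)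
    {c : ℕ} {P : V → Prop} (h0 : P 0)
    (h : 1 ≤ c → c < e → ∀ u, Ty q e T c u → P u) : ∀ u ∈ VV q e T c, P u := by
  intro u hu
  rcases (mem_VV he hq hT).mp hu with rfl | ⟨h1, h2, h3⟩
  · exact h0
  · exact h h1 h2 u h3

theorem lp_mem (he : 2 ≤ e) (hq : IsPrimitiveRoot q e) (hT : HeckeRel q e T)
    {c : ℕ} : ∀ u ∈ VV q e T c, lp q e T c u ∈ VV q e T c := by
  refine VV_cases he hq hT (by rw [map_zero]; exact zero_mem _) fun h1 h2 u hu => ?_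
  rw [lp, LinearMap.add_apply, LinearMap.smul_apply, Module.End.mul_apply]
  refine add_mem ((mem_VV he hq hT).mpr (Or.inr ⟨h1, h2, hu⟩)) (Submodule.smul_mem _ _ ?_)
  exact (mem_VV he hq hT).mpr (Or.inr ⟨h1, h2, ep_ty he hq hT h1 h2 _⟩)

/-- A representation of the Hecke algebra gives a zigzag datum. -/
theorem zig_rep (he : 2 ≤ e) (hq : IsPrimitiveRoot q e) (hT : HeckeRel q e T)
    : Zig (e - 1) (gam q e) (VV q e T) (pr q e T) (lp q e T) := by
  have hpp : ∀ c d, (c + 1 = d ∨ d + 1 = c) → 1 ≤ d → d ≤ e - 1 → ∀ u ∈ VV q e T c,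
      pr q e T c (pr q e T d u) = gam q e c d • lp q e T c u := by
    intro c d hcd hd1 hd2
    refine VV_cases he hq hT (by simp) fun h1 h2 u hu => ?_
    rw [pr_eq h1 h2, pr_eq hd1 (by omega)]
    rcases hcd with rfl | rfl
    · rw [gam, if_pos rfl]
      exact (up_rel he hq hT h1 (by omega) hu).1
    · rw [gam, if_neg (by omega)]
      exact (down_rel he hq hT hd1 h2 hu).1
  have hyp : ∀ c d, (c + 1 = d ∨ d + 1 = c) → ∀ u ∈ VV q e T c,
      lp q e T d (pr q e T d u) = 0 := by
    intro c d hcd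
    refine VV_cases he hq hT (by simp) fun h1 h2 u hu => ?_
    by_cases hd : 1 ≤ d ∧ d < e
    · rw [pr_eq hd.1 hd.2]
      rcases hcd with rfl | rfl
      · exact (up_rel he hq hT h1 (by omega) hu).2.1
      · exact (down_rel he hq hT hd.1 h2 hu).2.1
    · rw [pr, if_neg hd, LinearMap.zero_apply, map_zero]
  have hgam : ∀ c d, (c + 1 = d ∨ d + 1 = c) → 1 ≤ c → c ≤ e - 1 → 1 ≤ d → d ≤ e - 1 →
      gam q e c d ≠ 0 := by
    intro c d hcd h1 h2 h3 h4
    rw [gam]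
    split_ifs with h
    · exact inv_ne_zero (qn_ne hq (by omega) (by omega))
    · exact inv_ne_zero (qn_ne hq.inv (by omega) (by omega))
  have hpm : ∀ c v, pr q e T c v ∈ VV q e T c := fun c v => ⟨v, rfl⟩
  -- the loop is a multiple of any path of length two
  have hback : ∀ c d, (c + 1 = d ∨ d + 1 = c) → 1 ≤ c → c ≤ e - 1 → 1 ≤ d → d ≤ e - 1 →
      ∀ u ∈ VV q e T c, lp q e T c u = (gam q e c d)⁻¹ • pr q e T c (pr q e T d u) := by
    intro c d hcd h1 h2 h3 h4 u hu
    rw [hpp c d hcd h3 h4 u hu, smul_smul, inv_mul_cancel₀ (hgam c d hcd h1 h2 h3 h4), one_smul]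
  refine ⟨VV_out (by omega), fun c hc => VV_out (by omega), hgam, hpm, fun c => lp_mem he hq hT,
    hpp, ?_, ?_, hyp, ?_, ?_⟩
  · intro c
    refine VV_cases he hq hT (by simp) fun h1 h2 u hu => ?_
    by_cases hd : c + 2 < e
    · rw [pr_eq (by omega) hd, pr_eq (by omega) (by omega)]
      exact (up_rel he hq hT h1 (by omega) hu).2.2 hd
    · rw [pr, if_neg (by omega), LinearMap.zero_apply]
  · intro c
    refine VV_cases he hq hT (by simp) fun h1 h2 u hu => ?_
    by_cases hd : 1 ≤ c
    · rw [pr_eq (by omega) (by omega), pr_eq (by omega) (by omega)]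
      exact (down_rel he hq hT (c := c + 1) (by omega) (by omega) hu).2.2 (by omega)
    · rw [pr, if_neg (by omega), LinearMap.zero_apply]
  · intro c d hcd u hu
    rcases (mem_VV he hq hT).mp hu with rfl | ⟨h1, h2, h3⟩
    · simp
    by_cases hd : 1 ≤ d ∧ d < e
    · rw [hback c d hcd h1 (by omega) hd.1 (by omega) u hu, map_smul,
        hpp d c hcd.symm h1 (by omega) _ (hpm d u), hyp c d hcd u hu, smul_zero, smul_zero]
    · rw [pr, if_neg hd, LinearMap.zero_apply]
  · intro c u hu
    rcases (mem_VV he hq hT).mp hu with rfl | ⟨h1, h2, h3⟩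
    · simp
    by_cases he2 : e = 2
    · subst he2
      obtain rfl : c = 1 := by omega
      have hq2 : 1 + q = 0 := by
        have := qn_e he hq
        rwa [qn_succ, qn_one, pow_one] at this
      have h4 := congrArg (fun f : Module.End F V => f u) (hT.quad 1 le_rfl (by omega))
      simp only [Module.End.mul_apply, LinearMap.add_apply, LinearMap.smul_apply,
        Module.End.one_apply] at h4
      have h5 : lp q 2 T 1 = 1 + T 1 := by simp [lp, ep, sym, qn_one]
      rw [h5]
      simp only [LinearMap.add_apply, Module.End.one_apply, map_add, h4]
      have : u + T 1 u + (T 1 u + ((q - 1) • T 1 u + q • u)) = (1 + q) • (u + T 1 u) := by module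
      rw [this, hq2, zero_smul]
    · obtain ⟨d, hcd, hd1, hd2⟩ : ∃ d, (c + 1 = d ∨ d + 1 = c) ∧ 1 ≤ d ∧ d ≤ e - 1 := by
        by_cases hc : c + 1 ≤ e - 1
        · exact ⟨c + 1, Or.inl rfl, by omega, hc⟩
        · exact ⟨c - 1, Or.inr (by omega), by omega, by omega⟩
      rw [hback c d hcd h1 (by omega) hd1 hd2 u hu, map_smul,
        hyp d c hcd.symm _ (hpm d u), smul_zero]

end zigrep
end HeckeA

namespace HeckeA

/-! ### From zigzag data back to representations -/

section ops
variable {F V W : Type} [Field F] [AddCommGroup V] [Module F V] [AddCommGroup W] [Module F W]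
  {q : F} {n e : ℕ} {T : ℕ → Module.End F V} {T' : ℕ → Module.End F W}

theorem exists_restrict {N : Submodule F V} (hN : Inv n T N) :
    ∃ T' : ℕ → Module.End F N, Tw n T' T N.subtype := by
  classical
  refine ⟨fun j => if h : 1 ≤ j ∧ j < n then (T j).restrict (hN j h.1 h.2) else 0, ?_⟩
  intro j h1 h2 v
  simp only [dif_pos (And.intro h1 h2)]
  rfl

theorem exists_quotient {N : Submodule F V} (hN : Inv n T N) :
    ∃ T' : ℕ → Module.End F (V ⧸ N), Tw n T T' N.mkQ := by
  classical
  refine ⟨fun j => if h : 1 ≤ j ∧ j < n then N.mapQ N (T j) (hN j h.1 h.2) else 0, ?_⟩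
  intro j h1 h2 v
  simp only [dif_pos (And.intro h1 h2)]
  rfl

theorem Tw.hecke_surj {f : V →ₗ[F] W} (hf : Tw n T T' f) (hs : Function.Surjective f)
    (h : HeckeRel q n T) : HeckeRel q n T' := by
  refine ⟨fun i h1 h2 => ?_, fun i h1 h2 => ?_, fun i j h1 h2 h3 => ?_⟩
  · ext w
    obtain ⟨v, rfl⟩ := hs w
    have := congrArg (fun g : Module.End F V => f (g v)) (h.quad i h1 h2)
    simpa [hf i h1 h2] using this
  · ext w
    obtain ⟨v, rfl⟩ := hs w
    have := congrArg (fun g : Module.End F V => f (g v)) (h.braid i h1 h2)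
    simpa [hf i h1 (by omega), hf (i + 1) (by omega) h2] using this
  · ext w
    obtain ⟨v, rfl⟩ := hs w
    have := congrArg (fun g : Module.End F V => f (g v)) (h.comm i j h1 h2 h3)
    simpa [hf i h1 (by omega), hf j (by omega) h3] using this

theorem ep_tw {f : V →ₗ[F] W} (hf : Tw e T T' f) {c : ℕ} (hc : c ≤ e) (v : V) :
    f (ep q e T c v) = ep q e T' c (f v) := by
  have h1 : Tw (e - c) (rev q e T) (rev q e T') f := by
    intro j j1 j2 v
    simp only [rev, LinearMap.smul_apply, map_smul, hf (e - j) (by omega) (by omega)]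
  rw [ep, ep, Module.End.mul_apply, Module.End.mul_apply, sym_tw (hf.mono hc), sym_tw h1]

theorem pr_tw {f : V →ₗ[F] W} (hf : Tw e T T' f) (c : ℕ) (v : V) :
    f (pr q e T c v) = pr q e T' c (f v) := by
  by_cases h : 1 ≤ c ∧ c < e
  · rw [pr_eq h.1 h.2, pr_eq h.1 h.2, ep_tw hf h.2.le]
  · rw [pr, pr, if_neg h, if_neg h, LinearMap.zero_apply, LinearMap.zero_apply, map_zero]

theorem lp_tw {f : V →ₗ[F] W} (hf : Tw e T T' f) {c : ℕ} (h1 : 1 ≤ c) (h2 : c < e) (v : V) :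
    f (lp q e T c v) = lp q e T' c (f v) := by
  simp only [lp, LinearMap.add_apply, LinearMap.smul_apply, Module.End.mul_apply,
    Module.End.one_apply, map_add, map_smul, ep_tw hf h2.le, hf c h1 h2]

/-- The subrepresentation generated by a family of subspaces. -/
def gen (e : ℕ) (T : ℕ → Module.End F V) (S : ℕ → Submodule F V) : Submodule F V :=
  Submodule.span F {x | ∃ c, ∃ u ∈ S c, ∃ b ∈ Hsub F T e, x = b u}

theorem gen_inv (S : ℕ → Submodule F V) : Inv e T (gen e T S) := by
  intro j h1 h2 v hv
  induction hv using Submodule.span_induction with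
  | zero => rw [map_zero]; exact zero_mem _
  | add a b _ _ ha hb => rw [map_add]; exact add_mem ha hb
  | smul l a _ ha => rw [map_smul]; exact Submodule.smul_mem _ _ ha
  | mem z hz =>
    obtain ⟨c, u, hu, b, hb, rfl⟩ := hz
    exact Submodule.subset_span ⟨c, u, hu, T j * b, mul_mem (mem_Hsub T h1 h2) hb, rfl⟩

theorem le_gen (S : ℕ → Submodule F V) (c : ℕ) : S c ≤ gen e T S := fun u hu =>
  Submodule.subset_span ⟨c, u, hu, 1, one_mem _, rfl⟩

theorem pr_fix (he : 2 ≤ e) (hq : IsPrimitiveRoot q e) (hT : HeckeRel q e T) {c : ℕ} :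
    ∀ u ∈ VV q e T c, pr q e T c u = u := by
  refine VV_cases he hq hT (map_zero _) fun h1 h2 u hu => ?_
  rw [pr_eq h1 h2, ep_fix he hq hT h1 h2 hu]

/-- The subrepresentation generated by a stable family of subspaces meets the spaces of typed
vectors in the members of the family. -/
theorem gen_inter (he : 2 ≤ e) (hq : IsPrimitiveRoot q e) (hT : HeckeRel q e T)
    {S : ℕ → Submodule F V} (hS : Stab (VV q e T) (pr q e T) (lp q e T) S) {d : ℕ} {z : V}
    (hz : z ∈ gen e T S) (hzd : z ∈ VV q e T d) : z ∈ S d := by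
  rw [← pr_fix he hq hT z hzd]
  clear hzd
  by_cases hd : 1 ≤ d ∧ d < e
  swap
  · rw [pr, if_neg hd, LinearMap.zero_apply]; exact zero_mem _
  induction hz using Submodule.span_induction with
  | zero => rw [map_zero]; exact zero_mem _
  | add a b _ _ ha hb => rw [map_add]; exact add_mem ha hb
  | smul l a _ ha => rw [map_smul]; exact Submodule.smul_mem _ _ ha
  | mem z hz =>
    obtain ⟨c, u, hu, b, hb, rfl⟩ := hz
    rcases (mem_VV he hq hT).mp (hS.le c hu) with rfl | ⟨hc1, hc2, hty⟩
    · rw [map_zero, map_zero]; exact zero_mem _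
    have hq1 : 1 + q ≠ 0 ∨ e ≤ 2 := by
      by_cases h : 3 ≤ e
      · exact Or.inl (one_add_q_ne he hq hT h)
      · exact Or.inr (by omega)
    have hu0 : pr q e T d u ∈ S d := by
      by_cases hcd : c = d
      · subst hcd
        rwa [pr_fix he hq hT u (hS.le c hu)]
      · by_cases hadj : c + 1 = d ∨ d + 1 = c
        · exact hS.p_mem c d hadj u hu
        · rw [pr_eq hd.1 hd.2, ep_far he hq hT hc1 hc2 hd.1 hd.2 (by omega) hty]
          exact zero_mem _
    rw [pr_eq hd.1 hd.2] at hu0 ⊢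
    refine corner hT (d := d) (S d) (ep q e T d) le_rfl
      (fun i h1 h2 _ v => ep_T_low he hq hT hd.1 hd.2 h1 h2 v)
      (fun i h1 h2 v => ep_T_high he hq hT hd.1 hd.2 h1 h2 v) hq1 c u hty hu0 (fun _ _ => ?_) b hb
    rcases Nat.lt_trichotomy c d with h | h | h
    · rw [ep_T_low he hq hT hd.1 hd.2 hc1 h]; exact Submodule.smul_mem _ _ hu0
    · subst h
      have h1 : lp q e T c u = u + qn q c • ep q e T c (T c u) := rfl
      have h2 : ep q e T c (T c u) = (qn q c)⁻¹ • (lp q e T c u - u) := by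
        rw [h1, add_sub_cancel_left, smul_smul, inv_mul_cancel₀ (qn_ne hq hc1 hc2), one_smul]
      rw [h2]
      exact Submodule.smul_mem _ _ (sub_mem (hS.y_mem c u hu) hu)
    · rw [ep_T_high he hq hT hd.1 hd.2 h hc2]; exact neg_mem hu0

variable [IsAlgClosed F] [FiniteDimensional F V]

/-- An invariant subspace that maps injectively to a bad representation and contains no typed
vectors is zero. -/
theorem eq_bot_of_inter (he : 2 ≤ e) (hq : IsPrimitiveRoot q e) (hT : HeckeRel q e T)
    {f : V →ₗ[F] W} (hf : Tw e T T' f) (hB : Bad q e T') {N : Submodule F V} (hN : Inv e T N)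
    (hinj : ∀ x ∈ N, f x = 0 → x = 0) (h : ∀ c, ∀ x ∈ N, x ∈ VV q e T c → x = 0) : N = ⊥ := by
  by_contra hne
  obtain ⟨S, hS⟩ := exists_restrict hN
  have : Nontrivial N := Submodule.nontrivial_iff_ne_bot.mpr hne
  have hB' : Bad q e S := hB.sub (hf.comp hS) (by
    rw [injective_iff_map_eq_zero]
    intro x hx
    exact Subtype.ext (hinj x.1 x.2 hx))
  obtain ⟨c, v, h1, h2, h3, h4⟩ := exists_type he hq (hS.hecke N.injective_subtype hT) hB'
  refine h3 (Subtype.ext (h c v.1 v.2 ((mem_VV he hq hT).mpr (Or.inr ⟨h1, h2, ?_, ?_⟩))))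
  · intro i i1 i2
    have := hS i i1 (by omega) v
    rw [h4.1 i i1 i2, map_smul] at this
    exact this.symm
  · intro i i1 i2
    have := hS i (by omega) i2 v
    rw [h4.2 i i1 i2, map_neg] at this
    exact this.symm

theorem eq_top_of_le (he : 2 ≤ e) (hq : IsPrimitiveRoot q e) (hT : HeckeRel q e T)
    (hB : Bad q e T) {N : Submodule F V} (hN : Inv e T N) (h : ∀ c, VV q e T c ≤ N) : N = ⊤ := by
  by_contra hne
  obtain ⟨S, hS⟩ := exists_quotient hN
  have : Nontrivial (V ⧸ N) := Submodule.Quotient.nontrivial_iff.mpr hne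
  have hs : Function.Surjective N.mkQ := N.mkQ_surjective
  obtain ⟨c, v, h1, h2, h3, h4⟩ := exists_type he hq (hS.hecke_surj hs hT) (hB.quot hS hs)
  obtain ⟨v, rfl⟩ := hs v
  refine h3 ?_
  rw [← ep_fix he hq (hS.hecke_surj hs hT) h1 h2 h4, ← ep_tw hS h2.le]
  rw [Submodule.mkQ_apply, Submodule.Quotient.mk_eq_zero]
  refine h c ⟨v, ?_⟩
  rw [pr_eq h1 h2]

theorem zindec_of_indec (he : 2 ≤ e) (hq : IsPrimitiveRoot q e) (hT : HeckeRel q e T)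
    (hB : Bad q e T) (hI : Indec e T) : ZIndec (VV q e T) (pr q e T) (lp q e T) := by
  refine ⟨?_, fun S K hS hK hsum hmeet => ?_⟩
  · by_contra hcon
    push Not at hcon
    have := hI.1
    have h1 : (⊥ : Submodule F V) = ⊤ := eq_top_of_le he hq hT hB
      (fun j _ _ v hv => by rw [(Submodule.mem_bot F).mp hv, map_zero]; exact zero_mem _)
      fun c => (hcon c).le
    exact bot_ne_top h1
  · have hcompl : IsCompl (gen e T S) (gen e T K) := by
      rw [isCompl_iff, disjoint_iff, codisjoint_iff]
      constructor
      · refine eq_bot_of_inter he hq hT Tw.id hB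
          (fun j h1 h2 v hv => ⟨gen_inv S j h1 h2 v hv.1, gen_inv K j h1 h2 v hv.2⟩)
          (fun x _ h => h) fun c x hx hxc => hmeet c x (gen_inter he hq hT hS hx.1 hxc)
            (gen_inter he hq hT hK hx.2 hxc)
      · refine eq_top_of_le he hq hT hB (fun j h1 h2 v hv => ?_) fun c u hu => ?_
        · obtain ⟨a, ha, b, hb, rfl⟩ := Submodule.mem_sup.mp hv
          rw [map_add]
          exact Submodule.add_mem_sup (gen_inv S j h1 h2 a ha) (gen_inv K j h1 h2 b hb)
        · obtain ⟨s, hs, k, hk, rfl⟩ := hsum c u hu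
          exact Submodule.add_mem_sup (le_gen S c hs) (le_gen K c hk)
    refine (hI.2 _ _ (gen_inv S) (gen_inv K) hcompl).imp (fun h c => ?_) fun h c => ?_
    · exact eq_bot_iff.mpr (h ▸ le_gen S c)
    · exact eq_bot_iff.mpr (h ▸ le_gen K c)

/-- Isomorphic zigzag data come from isomorphic representations: the subrepresentation of the
direct sum generated by the graph of the isomorphism is the graph of an isomorphism. -/
theorem iso_of_ziso [FiniteDimensional F W] (he : 2 ≤ e) (hq : IsPrimitiveRoot q e)
    (hT : HeckeRel q e T) (hB : Bad q e T) (hT' : HeckeRel q e T') (hB' : Bad q e T')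
    (h : ZIso (VV q e T) (pr q e T) (lp q e T) (VV q e T') (pr q e T') (lp q e T')) :
    ∃ f : V ≃ₗ[F] W, Tw e T T' f.toLinearMap := by
  obtain ⟨G, hG, hGp, hGy, hG0, hG1, hG2⟩ := h
  obtain ⟨P, hP⟩ : ∃ P : ℕ → Module.End F (V × W), ∀ j x, P j x = (T j x.1, T' j x.2) :=
    ⟨fun j => (T j).prodMap (T' j), fun j x => rfl⟩
  have hf : Tw e P T (LinearMap.fst F V W) := fun j _ _ x => by rw [hP]; rfl
  have hs : Tw e P T' (LinearMap.snd F V W) := fun j _ _ x => by rw [hP]; rfl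
  have hrel : HeckeRel q e P := by
    have key : ∀ a b : Module.End F (V × W), (∀ x, (a x).1 = (b x).1) → (∀ x, (a x).2 = (b x).2) →
        a = b := fun a b h1 h2 => LinearMap.ext fun x => Prod.ext (h1 x) (h2 x)
    refine ⟨fun i h1 h2 => key _ _ (fun x => ?_) fun x => ?_,
      fun i h1 h2 => key _ _ (fun x => ?_) fun x => ?_,
      fun i j h1 h2 h3 => key _ _ (fun x => ?_) fun x => ?_⟩
    · simpa [hP] using congrArg (fun g : Module.End F V => g x.1) (hT.quad i h1 h2)
    · simpa [hP] using congrArg (fun g : Module.End F W => g x.2) (hT'.quad i h1 h2)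
    · simpa [hP] using congrArg (fun g : Module.End F V => g x.1) (hT.braid i h1 h2)
    · simpa [hP] using congrArg (fun g : Module.End F W => g x.2) (hT'.braid i h1 h2)
    · simpa [hP] using congrArg (fun g : Module.End F V => g x.1) (hT.comm i j h1 h2 h3)
    · simpa [hP] using congrArg (fun g : Module.End F W => g x.2) (hT'.comm i j h1 h2 h3)
  have hpr : ∀ c x, pr q e P c x = (pr q e T c x.1, pr q e T' c x.2) := fun c x =>
    Prod.ext (pr_tw hf c x) (pr_tw hs c x)
  have hle : ∀ c, G c ≤ VV q e P c := by
    intro c x hx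
    refine ⟨x, ?_⟩
    rw [hpr, pr_fix he hq hT _ (hG c x hx).1, pr_fix he hq hT' _ (hG c x hx).2]
  have hstab : Stab (VV q e P) (pr q e P) (lp q e P) G := by
    refine ⟨hle, fun c d hcd x hx => ?_, fun c x hx => ?_⟩
    · rw [hpr]; exact hGp c d hcd x hx
    · rcases (mem_VV he hq hrel).mp (hle c hx) with rfl | ⟨h1, h2, -⟩
      · rw [map_zero]; exact zero_mem _
      · have : lp q e P c x = (lp q e T c x.1, lp q e T' c x.2) :=
          Prod.ext (lp_tw hf h1 h2 x) (lp_tw hs h1 h2 x)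
        rw [this]; exact hGy c x hx
  have hN : Inv e P (gen e P G) := gen_inv G
  obtain ⟨R, hR⟩ := exists_restrict hN
  have hinter : ∀ {g : Submodule F (V × W)}, Inv e P g → Inv e P (gen e P G ⊓ g) :=
    fun hg j h1 h2 v hv => ⟨hN j h1 h2 v hv.1, hg j h1 h2 v hv.2⟩
  have hk1 : gen e P G ⊓ LinearMap.ker (LinearMap.fst F V W) = ⊥ := by
    refine eq_bot_of_inter he hq hrel hs hB' (hinter hf.ker) (fun x hx h => ?_)
      fun c x hx hxc => ?_
    · exact Prod.ext hx.2 h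
    · have h1 : x.1 = 0 := hx.2
      have h2 := gen_inter he hq hrel hstab hx.1 hxc
      exact Prod.ext h1 ((hG0 c x h2).mp h1)
  have hk2 : gen e P G ⊓ LinearMap.ker (LinearMap.snd F V W) = ⊥ := by
    refine eq_bot_of_inter he hq hrel hf hB (hinter hs.ker) (fun x hx h => ?_)
      fun c x hx hxc => ?_
    · exact Prod.ext h hx.2
    · have h1 : x.2 = 0 := hx.2
      have h2 := gen_inter he hq hrel hstab hx.1 hxc
      exact Prod.ext ((hG0 c x h2).mpr h1) h1
  have hr1 : LinearMap.range (LinearMap.fst F V W ∘ₗ (gen e P G).subtype) = ⊤ := by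
    refine eq_top_of_le he hq hT hB (hf.comp hR).range fun c u hu => ?_
    obtain ⟨x, hx, rfl⟩ := hG1 c u hu
    exact ⟨⟨x, le_gen G c hx⟩, rfl⟩
  have hr2 : LinearMap.range (LinearMap.snd F V W ∘ₗ (gen e P G).subtype) = ⊤ := by
    refine eq_top_of_le he hq hT' hB' (hs.comp hR).range fun c u hu => ?_
    obtain ⟨x, hx, rfl⟩ := hG2 c u hu
    exact ⟨⟨x, le_gen G c hx⟩, rfl⟩
  have hb1 : Function.Bijective (LinearMap.fst F V W ∘ₗ (gen e P G).subtype) := by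
    refine ⟨(injective_iff_map_eq_zero _).mpr fun x hx => Subtype.ext ?_,
      LinearMap.range_eq_top.mp hr1⟩
    exact (Submodule.mem_bot F).mp (hk1 ▸ (⟨x.2, hx⟩ : x.1 ∈ gen e P G ⊓ _))
  have hb2 : Function.Bijective (LinearMap.snd F V W ∘ₗ (gen e P G).subtype) := by
    refine ⟨(injective_iff_map_eq_zero _).mpr fun x hx => Subtype.ext ?_,
      LinearMap.range_eq_top.mp hr2⟩
    exact (Submodule.mem_bot F).mp (hk2 ▸ (⟨x.2, hx⟩ : x.1 ∈ gen e P G ⊓ _))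
  have t1 : Tw e R T (LinearEquiv.ofBijective _ hb1).toLinearMap := hf.comp hR
  have t2 : Tw e R T' (LinearEquiv.ofBijective _ hb2).toLinearMap := hs.comp hR
  exact ⟨(LinearEquiv.ofBijective _ hb1).symm.trans (LinearEquiv.ofBijective _ hb2),
    t2.comp t1.symm⟩

end ops
end HeckeA

namespace HeckeA

/-! ### Finite representation type for `n < 2e` -/

section fin
variable {F : Type} [Field F] [IsAlgClosed F] {q : F} {e : ℕ}

/-- The discrete invariants of the zigzag datum of a representation: which loops are nonzero,
which components vanish, and which upward and downward arrows are nonzero. -/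
def zinv (q : F) (e : ℕ) (M : FRep F) (c : Fin e) (i : Fin 4) : Prop :=
  ![∃ u ∈ VV q e M.T c, lp q e M.T c u ≠ 0, VV q e M.T c = ⊥,
    ∃ u ∈ VV q e M.T c, pr q e M.T (c + 1) u ≠ 0,
    ∃ u ∈ VV q e M.T (c + 1), pr q e M.T c u ≠ 0] i

theorem FTP_bad (he : 2 ≤ e) (hq : IsPrimitiveRoot q e) :
    FTP q e fun M => Bad q e M.T := by
  refine FTP.of_invariant (κ := Fin e → Fin 4 → Prop) (fun M k => zinv q e M = k)
    (fun M _ _ => ⟨_, rfl⟩) ?_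
  rintro M N ⟨hfd, hrel, hind⟩ hB ⟨hfd', hrel', hind'⟩ hB' k hk hk'
  have hinv : ∀ (c : ℕ) (hc : c < e) (i : Fin 4), zinv q e M ⟨c, hc⟩ i ↔ zinv q e N ⟨c, hc⟩ i :=
    fun c hc i => by rw [hk, hk']
  have hout : ∀ (X : FRep F) c, e ≤ c → VV q e X.T c = ⊥ := fun X c hc => VV_out (by omega)
  refine iso_of_ziso he hq hrel hB hrel' hB' (Zig.iso (zig_rep he hq hrel)
    (zindec_of_indec he hq hrel hB hind) (zig_rep he hq hrel')
    (zindec_of_indec he hq hrel' hB' hind') ?_ ?_ ?_ ?_)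
  all_goals
    intro c
    by_cases hc : c < e
  · exact hinv c hc 0
  · simp [hout _ c (by omega)]
  · exact hinv c hc 1
  · simp [hout _ c (by omega)]
  · exact hinv c hc 2
  · simp [hout _ c (by omega)]
  · exact hinv c hc 3
  · simp [hout _ (c + 1) (by omega)]

theorem FT_of_lt (he : 2 ≤ e) (hq : IsPrimitiveRoot q e) {n : ℕ} (hn : 1 ≤ n) (h : n < 2 * e) :
    FT q n := by
  induction n, hn using Nat.le_induction with
  | base => exact FT_one
  | succ n hn ih =>
    have hq0 : q ≠ 0 := hq.ne_zero (by omega)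
    by_cases hne : n + 1 = e
    · subst hne
      refine FTP.of_or (FT_step hq0 (ih (by omega))) (FTP_bad he hq) fun M hM _ => ?_
      by_cases hB : Bad q (n + 1) M.T
      · exact Or.inr hB
      · exact Or.inl (relProj_of_not_bad hq0 M hM hB)
    · refine FTP.of_or (FT_step hq0 (ih (by omega))) (FT_step hq0 (ih (by omega))) fun M hM _ => ?_
      refine Or.inl (relProj_of_not_bad hq0 M hM fun hB => hne ?_)
      obtain ⟨hfd, hrel, hind⟩ := hM
      have := hind.1
      obtain ⟨a, m, hm⟩ := exists_wt hrel
      exact (wt_shape he hq hrel (by omega) h hB hm).1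

end fin
end HeckeA

/-- If `q` is a primitive `e`-th root of unity (`e ≥ 2`), the
Iwahori-Hecke algebra `H_{n,1}(q, Q₁)` of type `A_{n-1}` is of finite representation
type iff `n < 2e`. -/
theorem heckeTypeA_finiteRepType_iff
    (F : Type) [Field F] [IsAlgClosed F] (n : ℕ) (hn : 1 ≤ n)
    (e : ℕ) (he : 2 ≤ e) (q : F) (hq : IsPrimitiveRoot q e) (Q₁ : F) :
    FiniteRepType (ArikiKoike F n 1 q (fun _ => Q₁)) ↔ n < 2 * e := by
  have : Infinite F := IsAlgClosed.instInfinite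
  refine (HeckeA.finiteRepType_iff hn).trans ⟨fun h => ?_, HeckeA.FT_of_lt he hq hn⟩
  by_contra hlt
  exact HeckeA.not_FT he (by omega) hq h
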